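/- arXiv:1701.06217 — 13 statements merged into one kernel-verified Lean document; each statement's English description precedes it below -/
import Mathlib

section
/- Let a and b be positive integers. If bn+1 divides the binomial coefficient C(an+bn, an) for all sufficiently large positive integers n, then every prime factor of a divides b. -/
/-- `p` never divides `C(p^L - 1, j)` for `j ≤ p^L - 1`. -/
theorem aux_choose (p L M : ℕ) (hp : p.Prime) (hM : M + 1 = p ^ L) :
    ∀ j : ℕ, j ≤ M → ¬ p ∣ Nat.choose M j := by
  intro j
  induction j with
  | zero =>
    intro _ hd
    rw [Nat.choose_zero_right] at hd
    exact hp.one_lt.ne' (Nat.dvd_one.mp hd)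
  | succ k ih =>
    intro hk hd
    have h1 : p ∣ (p ^ L).choose (k + 1) := hp.dvd_choose_pow (by omega) (by omega)
    rw [← hM, Nat.choose_succ_succ] at h1
    exact ih (by omega) ((Nat.dvd_add_left hd).mp h1)

/-- Let `a` and `b` be positive integers. If `b*n + 1` divides `C(a*n + b*n, a*n)`
for all sufficiently large positive integers `n`, then every prime factor of `a`
divides `b`. -/
theorem stmt_0 (a b : ℕ) (ha : 0 < a) (hb : 0 < b)
    (h : ∃ N : ℕ, ∀ n : ℕ, N ≤ n → (b * n + 1) ∣ Nat.choose (a * n + b * n) (a * n)) :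
    ∀ p : ℕ, p.Prime → p ∣ a → p ∣ b := by
  intro p hp hpa
  by_contra hpb
  obtain ⟨N, hN⟩ := h
  have hcop : Nat.Coprime p (a + b) := by
    rw [hp.coprime_iff_not_dvd]
    intro hd
    exact hpb ((Nat.dvd_add_right hpa).mp hd)
  set t := (a + b) * (N + 1) with ht
  set L := Nat.totient (a + b) * t with hL
  have htot : 0 < Nat.totient (a + b) := Nat.totient_pos.mpr (by omega)
  have htpos : 0 < t := by positivity
  have hLt : t ≤ L := Nat.le_mul_of_pos_left _ htot
  have hmod : 1 ≡ p ^ L [MOD (a + b)] := by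
    have := (Nat.ModEq.pow_totient hcop).pow t
    rw [one_pow, ← pow_mul] at this
    exact this.symm
  have hlt : L < p ^ L := Nat.lt_pow_self hp.one_lt
  have hdvd : (a + b) ∣ p ^ L - 1 := (Nat.modEq_iff_dvd' (by omega)).mp hmod
  obtain ⟨n, hn⟩ := hdvd
  have hM : (a * n + b * n) + 1 = p ^ L := by
    rw [← add_mul, ← hn]; omega
  have hNn : N ≤ n := by
    have h1 : (a + b) * (N + 1) ≤ (a + b) * n := by omega
    have := Nat.le_of_mul_le_mul_left h1 (by omega)
    omega
  have hpd : p ∣ b * n + 1 := by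
    have h1 : p ∣ a * n + (b * n + 1) := by
      rw [← add_assoc, hM]
      exact dvd_pow_self p (by omega)
    exact (Nat.dvd_add_right (hpa.mul_right n)).mp h1
  exact aux_choose p L _ hp hM (a * n) (by omega) (hpd.trans (hN n hNn))
end

section
/- For any odd prime p and any positive integers a > b with a not divisible by p, there exists a positive integer n such that pn−1 does not divide the binomial coefficient C(an, bn). Equivalently, there are no positive integers a > b with p ∤ a such that C(an, bn) ≡ 0 (mod pn−1) for all n ≥ 1. -/
lemma aux_lucas (q U V x y : ℕ) (hq : q.Prime) (hU : U < q) (hV : V ≤ U) (hx : x < q)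
    (hy : y ≤ x) : ¬ q ∣ Nat.choose (U * q + x) (V * q + y) := by
  have : Fact q.Prime := ⟨hq⟩
  have small : ∀ m l : ℕ, m < q → l ≤ m → ¬ q ∣ Nat.choose m l := by
    intro m l hm hl hd
    have h1 : q ∣ m.factorial := by
      rw [← Nat.choose_mul_factorial_mul_factorial hl, mul_assoc]
      exact hd.mul_right _
    have := (hq.dvd_factorial).1 h1
    omega
  have h := Choose.choose_modEq_choose_mod_mul_choose_div_nat (p := q)
    (n := U * q + x) (k := V * q + y)
  have e1 : (U * q + x) % q = x := by
    rw [add_comm, Nat.add_mul_mod_self_right, Nat.mod_eq_of_lt hx]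
  have e2 : (V * q + y) % q = y := by
    rw [add_comm, Nat.add_mul_mod_self_right, Nat.mod_eq_of_lt (by omega)]
  have e3 : (U * q + x) / q = U := by
    rw [add_comm, Nat.add_mul_div_right _ _ hq.pos, Nat.div_eq_of_lt hx, zero_add]
  have e4 : (V * q + y) / q = V := by
    rw [add_comm, Nat.add_mul_div_right _ _ hq.pos, Nat.div_eq_of_lt (by omega), zero_add]
  rw [e1, e2, e3, e4] at h
  intro hd
  have h2 := (h.dvd_iff (dvd_refl q)).1 hd
  rcases (hq.dvd_mul).1 h2 with h3 | h3
  · exact small _ _ hx hy h3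
  · exact small _ _ hU hV h3

/-- For any odd prime `p` and positive integers `a > b` with `p ∤ a`, there exists a
positive integer `n` such that `p*n - 1` does not divide `C(a*n, b*n)`. -/
theorem stmt_1 (p : ℕ) (hp : p.Prime) (hodd : Odd p)
    (a b : ℕ) (hb : 0 < b) (hab : b < a) (hpa : ¬ p ∣ a) :
    ∃ n : ℕ, 0 < n ∧ ¬ (p * n - 1 ∣ Nat.choose (a * n) (b * n)) := by
  obtain ⟨A, r, hr, ha⟩ : ∃ A r, r < p ∧ a = p * A + r :=
    ⟨a / p, a % p, Nat.mod_lt _ hp.pos, (Nat.div_add_mod a p).symm⟩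
  obtain ⟨B, s, hs, hb'⟩ : ∃ B s, s < p ∧ b = p * B + s :=
    ⟨b / p, b % p, Nat.mod_lt _ hp.pos, (Nat.div_add_mod b p).symm⟩
  have hr0 : 0 < r := by
    rcases Nat.eq_zero_or_pos r with h | h
    · exact absurd ⟨A, by rw [ha, h, add_zero]⟩ hpa
    · exact h
  have hp2 := hp.two_le
  by_cases hrs : s ≤ r
  · have hBA : B ≤ A := by
      by_contra! h
      nlinarith
    have hcop : IsUnit ((-1 : ZMod p)) := isUnit_one.neg
    have : NeZero p := ⟨hp.ne_zero⟩
    obtain ⟨q, hqg, hq, hqm⟩ := Nat.forall_exists_prime_gt_and_eq_mod hcop (p * (A + 2))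
    have hdiv : p ∣ q + 1 := by
      rw [← ZMod.natCast_eq_zero_iff]
      push_cast
      rw [hqm]; ring
    obtain ⟨n, hn⟩ := hdiv
    have hnA : A + 2 ≤ n := by
      by_contra! h
      nlinarith
    refine ⟨n, by omega, ?_⟩
    have hq1 : p * n - 1 = q := by omega
    rw [hq1]
    have ea : a * n = A * q + (A + r * n) := by
      rw [ha]; nlinarith
    have eb : b * n = B * q + (B + s * n) := by
      rw [hb']; nlinarith
    rw [ea, eb]
    refine aux_lucas q _ _ _ _ hq (by nlinarith) hBA ?_ ?_
    · nlinarith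
    · nlinarith
  · push Not at hrs
    have hBA : B < A := by
      by_contra! h
      nlinarith
    obtain ⟨q, hq, hqg, hqm⟩ := Nat.exists_prime_gt_modEq_one (k := p) (p * (A + 2)) hp.ne_zero
    have hdiv : p ∣ q - 1 := (Nat.modEq_iff_dvd' hq.one_le).1 hqm.symm
    obtain ⟨k, hk⟩ := hdiv
    have hqk : q = p * k + 1 := by have := hq.one_le; omega
    have hkA : A + 2 ≤ k := by
      by_contra! h
      nlinarith
    obtain ⟨c, rfl⟩ : ∃ c, p = r + c := ⟨p - r, by omega⟩
    obtain ⟨d, hd⟩ : ∃ d, r + c = s + d := ⟨r + c - s, by omega⟩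
    obtain ⟨r', rfl⟩ : ∃ r', r = r' + 1 := ⟨r - 1, by omega⟩
    obtain ⟨s', rfl⟩ : ∃ s', s = s' + 1 := ⟨s - 1, by omega⟩
    refine ⟨(r' + c) * k + 1, by omega, ?_⟩
    have hdq : q ∣ (r' + 1 + c) * ((r' + c) * k + 1) - 1 := by
      refine ⟨r' + c, ?_⟩
      have : (r' + 1 + c) * ((r' + c) * k + 1) = q * (r' + c) + 1 := by rw [hqk]; ring
      omega
    intro hdd
    have h1 := hdq.trans hdd
    have ea : a * ((r' + c) * k + 1) = (A * (r' + c) + r') * q + (c * k + 1 + A) := by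
      rw [ha, hqk]; ring
    have hrc : r' + c = s' + d := by omega
    have eb : b * ((r' + c) * k + 1) = (B * (r' + c) + s') * q + (d * k + 1 + B) := by
      rw [hb', hqk, hd, hrc]; ring
    rw [ea, eb] at h1
    refine aux_lucas q _ _ _ _ hq ?_ ?_ ?_ ?_ h1
    · nlinarith
    · have : (B + 1) * (r' + c) ≤ A * (r' + c) := Nat.mul_le_mul_right _ hBA
      rw [add_mul, one_mul] at this
      omega
    · have h2 : 1 * k ≤ (r' + 1) * k := Nat.mul_le_mul_right _ (by omega)
      have h3 : (r' + 1 + c) * k = (r' + 1) * k + c * k := by ring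
      omega
    · have : d * k ≤ c * k := Nat.mul_le_mul_right _ (by omega)
      omega
end

section
/- Let p be an odd prime, let r be an integer with 1 ≤ r ≤ p−1, and set γ = (p²r + p² + r² − pr)/(p²(p+1)). Suppose M is a real number such that for every real x ≥ M there exists a prime q with x < q < (1 + (p−r)²/(p r (p+1)))·x and q ≡ −1 (mod p). Then for all positive integers c and k with c ≥ M and pk + r ≤ cp(1−γ), there exists a positive integer n such that pn−1 does not divide the binomial coefficient C(pcn, (pk+r)n). -/
/-- Theorem 2.2(i): let `p` be an odd prime, `1 ≤ r ≤ p-1`, and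
`γ = (p²r + p² + r² - pr)/(p²(p+1))`.  Suppose `M` is a real number such that for
every `x ≥ M` there is a prime `q ≡ -1 (mod p)` with `x < q < (1 + (p-r)²/(pr(p+1)))x`.
Then for all positive integers `c ≥ M` and `k` with `pk + r ≤ cp(1-γ)`, there is a
positive integer `n` such that `pn - 1` does not divide `C(pcn, (pk+r)n)`. -/
theorem stmt_2 (p : ℕ) (hp : p.Prime) (hodd : Odd p)
    (r : ℕ) (hr1 : 1 ≤ r) (hr2 : r ≤ p - 1)
    (M : ℝ)
    (hM : ∀ x : ℝ, M ≤ x → ∃ q : ℕ, q.Prime ∧ x < (q : ℝ) ∧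
      (q : ℝ) < (1 + ((p : ℝ) - r) ^ 2 / ((p : ℝ) * r * ((p : ℝ) + 1))) * x ∧
      (q : ℤ) ≡ -1 [ZMOD (p : ℤ)])
    (c k : ℕ) (hc : 0 < c) (hk : 0 < k) (hcM : M ≤ (c : ℝ))
    (hbound : (p : ℝ) * k + r ≤
      (c : ℝ) * p * (1 - ((p : ℝ) ^ 2 * r + (p : ℝ) ^ 2 + (r : ℝ) ^ 2 - (p : ℝ) * r) /
        ((p : ℝ) ^ 2 * ((p : ℝ) + 1)))) :
    ∃ n : ℕ, 0 < n ∧ ¬ (p * n - 1 ∣ Nat.choose (p * c * n) ((p * k + r) * n)) := by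
  obtain ⟨q, hq, h1, h2, h3⟩ := hM c hcM
  have hp0 : (0 : ℝ) < p := by exact_mod_cast hp.pos
  have hr0 : (0 : ℝ) < r := by exact_mod_cast hr1
  have hcq : c < q := by exact_mod_cast h1
  have hdvd : p ∣ q + 1 := by
    have h := h3.symm.dvd
    have h' : (p : ℤ) ∣ ((q + 1 : ℕ) : ℤ) := by
      push_cast
      simpa using h
    exact_mod_cast h'
  obtain ⟨n, hn⟩ := hdvd
  have hγ : (p : ℝ) * (((p : ℝ) ^ 2 * r + (p : ℝ) ^ 2 + (r : ℝ) ^ 2 - (p : ℝ) * r) /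
        ((p : ℝ) ^ 2 * ((p : ℝ) + 1))) =
      r * (1 + ((p : ℝ) - r) ^ 2 / ((p : ℝ) * r * ((p : ℝ) + 1))) := by
    field_simp
    ring
  have h4 := mul_lt_mul_of_pos_left h2 hr0
  rw [← mul_assoc, ← hγ] at h4
  have hnR : (q : ℝ) + 1 = p * n := by exact_mod_cast hn
  have h5 : (p : ℝ) * (k + r * n) < p * c := by
    have e : (p : ℝ) * (r * n) = r * (q + 1) := by rw [hnR]; ring
    rw [mul_add, e]
    linarith
  have h6 : k + r * n < c := by
    have := lt_of_mul_lt_mul_left h5 hp0.le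
    exact_mod_cast this
  have hn0 : 0 < n := by
    rcases Nat.eq_zero_or_pos n with h | h
    · simp [h] at hn
    · exact h
  refine ⟨n, hn0, ?_⟩
  have hpn : p * n - 1 = q := by omega
  rw [hpn]
  haveI := Fact.mk hq
  have hL := Choose.choose_modEq_choose_mod_mul_choose_div_nat (p := q)
    (n := p * c * n) (k := (p * k + r) * n)
  have e1 : p * c * n = c + q * c := by
    calc p * c * n = c * (p * n) := by ring
      _ = _ := by rw [← hn]; ring
  have e2 : (p * k + r) * n = (k + r * n) + q * k := by
    calc (p * k + r) * n = k * (p * n) + r * n := by ring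
      _ = _ := by rw [← hn]; ring
  have hkq : k + r * n < q := h6.trans hcq
  rw [e1, e2] at hL ⊢
  rw [Nat.add_mul_mod_self_left, Nat.add_mul_mod_self_left, Nat.add_mul_div_left _ _ hq.pos,
    Nat.add_mul_div_left _ _ hq.pos, Nat.mod_eq_of_lt hcq, Nat.mod_eq_of_lt hkq,
    Nat.div_eq_of_lt hcq, Nat.div_eq_of_lt hkq, zero_add, zero_add] at hL
  intro hd
  have hd2 := (hL.dvd_iff dvd_rfl).1 hd
  have key : ∀ j, j ≤ c → ¬ q ∣ Nat.choose c j := by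
    intro j hj h
    have h7 : q ∣ c.factorial := by
      rw [← Nat.choose_mul_factorial_mul_factorial hj, mul_assoc]
      exact h.mul_right _
    exact absurd ((hq.dvd_factorial).1 h7) (by omega)
  rcases hq.dvd_mul.1 hd2 with h | h
  · exact key _ h6.le h
  · exact key _ ((Nat.le_add_right _ _).trans h6.le) h
end

section
/- Let p be an odd prime, let r be an integer with 1 ≤ r ≤ (p−3)/2, and set γ = (p²r + p² + r² − pr)/(p²(p+1)). Suppose M' is a real number such that for every real x ≥ M' there exist two distinct primes q, q' with x < q < q' < (1 + (p−(2r+1))/(p+1))·x and q ≡ q' ≡ −1 (mod p). Then for all positive integers c and k with k ≥ 2M', k ≥ p, and cp(1−γ) < pk + r < c(p−r), there exists a positive integer n such that pn−1 does not divide the binomial coefficient C(pcn, (pk+r)n). -/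
theorem aux_small {q a i : ℕ} (hq : q.Prime) (ha : a < q) (hi : i ≤ a) :
    ¬ q ∣ Nat.choose a i := by
  intro h
  have h1 : q ∣ a.factorial := by
    rw [← Nat.choose_mul_factorial_mul_factorial hi, mul_assoc]
    exact Dvd.dvd.mul_right h _
  have := (Nat.Prime.dvd_factorial hq).1 h1
  omega

theorem aux_step {q a i A I : ℕ} (hq : q.Prime) (ha : a < q) (hi : i ≤ a)
    (h : ¬ q ∣ Nat.choose A I) : ¬ q ∣ Nat.choose (a + q * A) (i + q * I) := by
  haveI := Fact.mk hq
  have hm := Choose.choose_modEq_choose_mod_mul_choose_div_nat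
    (n := a + q * A) (k := i + q * I) (p := q)
  rw [Nat.add_mul_mod_self_left, Nat.add_mul_mod_self_left, Nat.add_mul_div_left _ _ hq.pos,
    Nat.add_mul_div_left _ _ hq.pos, Nat.mod_eq_of_lt ha, Nat.mod_eq_of_lt (by omega : i < q),
    Nat.div_eq_of_lt ha, Nat.div_eq_of_lt (by omega : i < q), zero_add, zero_add] at hm
  rw [hm.dvd_iff dvd_rfl, hq.dvd_mul]
  rintro (h1 | h1)
  · exact aux_small hq ha hi h1
  · exact h h1

/-- Theorem 2.2(ii): let `p` be an odd prime, `1 ≤ r ≤ (p-3)/2`, and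
`γ = (p²r + p² + r² - pr)/(p²(p+1))`.  Suppose `M'` is a real number such that for
every `x ≥ M'` there are two distinct primes `q < q'`, both `≡ -1 (mod p)`, in the
interval `(x, (1 + (p-(2r+1))/(p+1))x)`.  Then for all positive integers `c` and
`k ≥ 2M'` with `k ≥ p` and `cp(1-γ) < pk + r < c(p-r)`, there is a positive integer
`n` such that `pn - 1` does not divide `C(pcn, (pk+r)n)`. -/
theorem stmt_3 (p : ℕ) (hp : p.Prime) (hodd : Odd p)
    (r : ℕ) (hr1 : 1 ≤ r) (hr2 : 2 * r + 3 ≤ p)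
    (M' : ℝ)
    (hM' : ∀ x : ℝ, M' ≤ x → ∃ q q' : ℕ, q.Prime ∧ q'.Prime ∧
      x < (q : ℝ) ∧ (q : ℝ) < (q' : ℝ) ∧
      (q' : ℝ) < (1 + ((p : ℝ) - (2 * (r : ℝ) + 1)) / ((p : ℝ) + 1)) * x ∧
      (q : ℤ) ≡ -1 [ZMOD (p : ℤ)] ∧ (q' : ℤ) ≡ -1 [ZMOD (p : ℤ)])
    (c k : ℕ) (hc : 0 < c) (hk : 0 < k)
    (hkM : 2 * M' ≤ (k : ℝ)) (hkp : p ≤ k)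
    (hlow : (c : ℝ) * p * (1 - ((p : ℝ) ^ 2 * r + (p : ℝ) ^ 2 + (r : ℝ) ^ 2 - (p : ℝ) * r) /
        ((p : ℝ) ^ 2 * ((p : ℝ) + 1))) < (p : ℝ) * k + r)
    (hhigh : (p : ℝ) * k + r < (c : ℝ) * ((p : ℝ) - r)) :
    ∃ n : ℕ, 0 < n ∧ ¬ (p * n - 1 ∣ Nat.choose (p * c * n) ((p * k + r) * n)) := by
  have hp0 : (0 : ℝ) < p := by exact_mod_cast hp.pos
  have hr0 : (1 : ℝ) ≤ r := by exact_mod_cast hr1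
  have hrp : 2 * (r : ℝ) + 3 ≤ p := by exact_mod_cast hr2
  have hkpR : (p : ℝ) ≤ k := by exact_mod_cast hkp
  have hcR : (0 : ℝ) < c := by exact_mod_cast hc
  have hckR : (k : ℝ) < c := by
    have h1 : (p : ℝ) * k < p * c := by nlinarith
    exact lt_of_mul_lt_mul_left h1 hp0.le
  obtain ⟨q₀, q, -, hq, h1, h2, h3, -, hmod⟩ := hM' ((c : ℝ) / 2) (by linarith)
  have hq0 : c < 2 * q₀ := by
    have : (c : ℝ) < 2 * q₀ := by linarith
    exact_mod_cast this
  have hqq : q₀ < q := by exact_mod_cast h2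
  have h3' : (q : ℝ) * (p + 1) < c * (p - r) := by
    have e : (1 + ((p : ℝ) - (2 * (r : ℝ) + 1)) / ((p : ℝ) + 1)) * ((c : ℝ) / 2)
        = c * (p - r) / (p + 1) := by
      field_simp
      ring
    rw [e, lt_div_iff₀ (by linarith)] at h3
    exact h3
  have hlow' : (c : ℝ) * (p - r) * (p ^ 2 + r) < (p * k + r) * (p * (p + 1)) := by
    have e : (c : ℝ) * p * (1 - ((p : ℝ) ^ 2 * r + (p : ℝ) ^ 2 + (r : ℝ) ^ 2 - (p : ℝ) * r) /
        ((p : ℝ) ^ 2 * ((p : ℝ) + 1))) = (c : ℝ) * (p - r) * (p ^ 2 + r) / (p * (p + 1)) := by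
      field_simp
      ring
    rw [e, div_lt_iff₀ (by positivity)] at hlow
    exact hlow
  have hqk : (q : ℝ) < k := by
    have a1 : (q : ℝ) * (p + 1) * (p ^ 2 + r) < c * (p - r) * (p ^ 2 + r) :=
      mul_lt_mul_of_pos_right h3' (by positivity)
    have a2 : (p * k + r) * (p * ((p : ℝ) + 1)) ≤ k * (p + 1) * (p ^ 2 + r) := by
      have : 0 ≤ (r : ℝ) * (p + 1) * (k - p) :=
        mul_nonneg (by positivity) (by linarith)
      nlinarith
    have a3 : (q : ℝ) * ((p + 1) * (p ^ 2 + r)) < k * ((p + 1) * (p ^ 2 + r)) := by linarith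
    exact lt_of_mul_lt_mul_right a3 (by positivity)
  have hqk' : q < k := by exact_mod_cast hqk
  have hck : k < c := by exact_mod_cast hckR
  have hhigh' : p * k + r + c * r < c * p := by
    have : (p : ℝ) * k + r + c * r < c * p := by linarith
    exact_mod_cast this
  have hdvd : p ∣ q + 1 := by
    have h := hmod.symm.dvd
    have : (p : ℤ) ∣ ((q + 1 : ℕ) : ℤ) := by
      push_cast
      simpa using h
    exact_mod_cast this
  obtain ⟨n, hn⟩ := hdvd
  have hn0 : 0 < n := by
    rcases Nat.eq_zero_or_pos n with h | h
    · subst h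
      omega
    · exact h
  refine ⟨n, hn0, ?_⟩
  rw [← hn, Nat.add_sub_cancel]
  obtain ⟨b, rfl⟩ : ∃ b, c = q + b := ⟨c - q, by omega⟩
  obtain ⟨d, rfl⟩ : ∃ d, k = q + d := ⟨k - q, by omega⟩
  have hs : d + r * n ≤ b := by
    have : p * (d + r * n) ≤ p * b := by
      have e : p * (r * n) = r * (q + 1) := by
        rw [hn]
        ring
      have : r * q ≤ (q + b) * r := by nlinarith
      nlinarith
    exact Nat.le_of_mul_le_mul_left this hp.pos
  have eN : p * (q + b) * n = b + q * ((b + 1) + q * 1) := by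
    calc p * (q + b) * n = (q + b) * (p * n) := by ring
      _ = _ := by
        rw [← hn]
        ring
  have eK : (p * (q + d) + r) * n = (d + r * n) + q * ((d + 1) + q * 1) := by
    calc (p * (q + d) + r) * n = (q + d) * (p * n) + r * n := by ring
      _ = _ := by
        rw [← hn]
        ring
  rw [eN, eK]
  refine aux_step hq (by omega) hs (aux_step hq (by omega) (by omega) ?_)
  simpa using hq.one_lt.ne'
end

section
/- For any positive integer m, there exist positive integers a and b with am > b such that an−1 divides the binomial coefficient C(amn, bn) for all positive integers n. -/
theorem choose_desc_aux (M k j : ℕ) :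
    M.choose k * (M - k).descFactorial j = M.descFactorial j * (M - j).choose k := by
  induction j with
  | zero => simp
  | succ j ih =>
    rw [Nat.descFactorial_succ, Nat.descFactorial_succ]
    have h : (M - k - j) * (M - j).choose k = (M - j) * (M - (j + 1)).choose k := by
      rcases Nat.lt_or_ge j M with hj | hj
      · obtain ⟨t, rfl⟩ : ∃ t, M = t + 1 + j := ⟨M - j - 1, by omega⟩
        have h2 := Nat.choose_mul_succ_eq t k
        have e1 : t + 1 + j - k - j = t + 1 - k := by omega
        have e2 : t + 1 + j - j = t + 1 := by omega
        have e3 : t + 1 + j - (j + 1) = t := by omega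
        rw [e1, e2, e3]
        linarith
      · have e1 : M - k - j = 0 := by omega
        have e2 : M - j = 0 := by omega
        simp [e1, e2]
    calc M.choose k * ((M - k - j) * (M - k).descFactorial j)
        = (M - k - j) * (M.choose k * (M - k).descFactorial j) := by ring
      _ = M.descFactorial j * ((M - k - j) * (M - j).choose k) := by rw [ih]; ring
      _ = _ := by rw [h]; ring

/-- For any positive integer `m`, there exist positive integers `a` and `b` with
`a*m > b` such that `a*n - 1` divides `C(a*m*n, b*n)` for all positive integers `n`. -/
theorem stmt_6 (m : ℕ) (hm : 0 < m) :
    ∃ a b : ℕ, 0 < a ∧ 0 < b ∧ b < a * m ∧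
      ∀ n : ℕ, 0 < n → (a * n - 1) ∣ Nat.choose (a * m * n) (b * n) := by
  obtain ⟨b, hb⟩ : ∃ b, b = (2 * m + 1).factorial := ⟨_, rfl⟩
  have hb0 : 0 < b := hb ▸ Nat.factorial_pos _
  have hbm : 2 * m + 1 ≤ b := hb ▸ Nat.self_le_factorial _
  refine ⟨2 * b, b, by omega, hb0, by nlinarith, ?_⟩
  intro n hn
  obtain ⟨K, hK⟩ : ∃ K, K = b * n := ⟨_, rfl⟩
  have hKb : b ≤ K := by rw [hK]; exact Nat.le_mul_of_pos_right b hn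
  have hbK : b ∣ K := ⟨n, hK⟩
  have e1 : 2 * b * n = 2 * K := by rw [hK]; ring
  have e2 : 2 * b * m * n = 2 * m * K := by rw [hK]; ring
  rw [e1, e2, ← hK]
  have key := choose_desc_aux (2 * m * K) K (m + 1)
  have hM : 2 * m * K - m = m * (2 * K - 1) := by
    rw [Nat.mul_sub]; congr 1
    · ring
    · simp
  have hdiv : (2 * K - 1) ∣ (2 * m * K).choose K * (2 * m * K - K).descFactorial (m + 1) := by
    rw [key, Nat.descFactorial_succ, hM]
    exact Dvd.dvd.mul_right (Dvd.dvd.mul_right (Dvd.intro_left _ rfl) _) _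
  refine Nat.Coprime.dvd_of_dvd_mul_right ?_ hdiv
  rw [Nat.descFactorial_eq_prod_range]
  refine Nat.Coprime.prod_right fun i hi => ?_
  have hi' : i ≤ m := by have := Finset.mem_range.1 hi; omega
  refine Nat.Coprime.symm (Nat.coprime_of_dvd ?_)
  intro p hp h1 h2
  have hle : K + i ≤ 2 * m * K := by nlinarith
  have c1 : ((2 * m * K - K - i : ℕ) : ℤ) = 2 * m * K - K - i := by
    rw [Nat.sub_sub, Nat.cast_sub hle]; push_cast; ring
  have c2 : ((2 * K - 1 : ℕ) : ℤ) = 2 * K - 1 := by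
    rw [Nat.cast_sub (by omega)]; push_cast; ring
  have d1 : (p : ℤ) ∣ 2 * m * K - K - i := c1 ▸ Int.natCast_dvd_natCast.2 h1
  have d2 : (p : ℤ) ∣ 2 * K - 1 := c2 ▸ Int.natCast_dvd_natCast.2 h2
  have d3 : (p : ℤ) ∣ 2 * m - 1 - 2 * i := by
    have := (d1.mul_left 2).sub (d2.mul_left (2 * m - 1))
    have e : (2 * (m : ℤ) - 1 - 2 * i) = 2 * (2 * m * K - K - i) - (2 * m - 1) * (2 * K - 1) := by ring
    rw [e]; exact this
  have d4 : p ∣ (2 * (m : ℤ) - 1 - 2 * i).natAbs := Int.natCast_dvd.1 d3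
  have d5 : p ∣ b := d4.trans (hb ▸ Nat.dvd_factorial (by omega) (by omega))
  have d6 : (p : ℤ) ∣ K := Int.natCast_dvd_natCast.2 (d5.trans hbK)
  have d7 : (p : ℤ) ∣ 1 := by
    have := (d6.mul_left 2).sub d2
    simpa using this
  exact hp.one_lt.ne' (by exact_mod_cast Int.eq_one_of_dvd_one (by positivity) d7)
end

section
/- Let m be a positive integer and let t ≥ 3 be an index such that the t-th prime p_t satisfies p_t > 3m. Set a = 6·p_3·p_4⋯p_t and b = 4·p_3·p_4⋯p_t (the products taken over the primes p_3 = 5 up to p_t). Then am > b, and for every positive integer n, an−1 divides the binomial coefficient C(amn, bn). -/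
theorem aux_key (m p a b n : ℕ) (hp : p.Prime) (hm : 0 < m) (hpm : 3 * m < p)
    (hba : 3 * b = 2 * a) (hn : 0 < n) (ha : 0 < a) (i : ℕ) (hi : 1 ≤ i)
    (hd : p ^ i ∣ a * n - 1) :
    p ^ i ≤ (b * n) % p ^ i + (a * m * n - b * n) % p ^ i := by
  have hq : p ≤ p ^ i := Nat.le_self_pow (by omega) p
  generalize p ^ i = q at *
  have han : 0 < a * n := Nat.mul_pos ha hn
  obtain ⟨c, hc⟩ := hd
  have h1 : a * n = q * c + 1 := by omega
  have hle : b * n ≤ a * m * n := by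
    have : b ≤ a * m := by nlinarith
    exact Nat.mul_le_mul_right n this
  have hN : (a * m * n) % q = m := by
    have : a * m * n = m + q * (c * m) := by
      calc a * m * n = (a * n) * m := by ring
        _ = m + q * (c * m) := by rw [h1]; ring
    rw [this, Nat.add_mul_mod_self_left, Nat.mod_eq_of_lt (by omega)]
  by_contra hlt
  push Not at hlt
  have hs : (a * m * n) % q = (b * n) % q + (a * m * n - b * n) % q := by
    conv_lhs => rw [← Nat.add_sub_cancel' hle, Nat.add_mod, Nat.mod_eq_of_lt hlt]
  have hr : (b * n) % q ≤ m := by omega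
  have h3 : (3 * ((b * n) % q)) % q = 2 % q := by
    have e : 3 * (b * n) = 2 + q * (2 * c) := by
      calc 3 * (b * n) = (3 * b) * n := by ring
        _ = 2 * (a * n) := by rw [hba]; ring
        _ = 2 + q * (2 * c) := by rw [h1]; ring
    have : (3 * (b * n)) % q = 2 % q := by rw [e, Nat.add_mul_mod_self_left]
    rw [← this, Nat.mul_mod 3 (b * n), Nat.mul_mod 3 (b * n % q), Nat.mod_mod]
  have h4 : (3 * ((b * n) % q)) % q = 3 * ((b * n) % q) := Nat.mod_eq_of_lt (by omega)
  have h5 : 2 % q = 2 := Nat.mod_eq_of_lt (by omega)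
  rw [h4, h5] at h3
  omega

theorem aux_dvd (p t : ℕ) (hp : p.Prime) (ht : 3 ≤ t) (h : p ≤ Nat.nth Nat.Prime (t - 1)) :
    p ∣ 6 * ∏ i ∈ Finset.Icc 3 t, Nat.nth Nat.Prime (i - 1) := by
  have hj : Nat.nth Nat.Prime (Nat.count Nat.Prime p) = p := Nat.nth_count hp
  set j := Nat.count Nat.Prime p
  have hjt : j ≤ t - 1 := by
    rw [← hj] at h
    exact (Nat.nth_le_nth Nat.infinite_setOfPred_prime).1 h
  rcases Nat.lt_or_ge j 2 with h2 | h2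
  · apply Dvd.dvd.mul_right
    interval_cases j
    · rw [Nat.nth_prime_zero_eq_two] at hj; rw [← hj]; norm_num
    · rw [Nat.nth_prime_one_eq_three] at hj; rw [← hj]; norm_num
  · apply Dvd.dvd.mul_left
    have := Finset.dvd_prod_of_mem (fun i => Nat.nth Nat.Prime (i - 1))
      (Finset.mem_Icc.2 ⟨by omega, by omega⟩ : j + 1 ∈ Finset.Icc 3 t)
    simpa [hj] using this

/-- Let `m` be a positive integer and `t ≥ 3` an index with the `t`-th prime `p_t`
(in the increasing enumeration `p_1 = 2, p_2 = 3, p_3 = 5, …`, so `p_i` is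
`Nat.nth Nat.Prime (i-1)`) satisfying `p_t > 3m`.  Set `a = 6·p_3⋯p_t` and
`b = 4·p_3⋯p_t`.  Then `a*m > b` and `a*n - 1` divides `C(a*m*n, b*n)` for every
positive integer `n`. -/
theorem stmt_7 (m : ℕ) (hm : 0 < m) (t : ℕ) (ht : 3 ≤ t)
    (hpt : 3 * m < Nat.nth Nat.Prime (t - 1))
    (a b : ℕ)
    (ha : a = 6 * ∏ i ∈ Finset.Icc 3 t, Nat.nth Nat.Prime (i - 1))
    (hb : b = 4 * ∏ i ∈ Finset.Icc 3 t, Nat.nth Nat.Prime (i - 1)) :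
    b < a * m ∧ ∀ n : ℕ, 0 < n → (a * n - 1) ∣ Nat.choose (a * m * n) (b * n) := by
  have hP : 0 < ∏ i ∈ Finset.Icc 3 t, Nat.nth Nat.Prime (i - 1) :=
    Finset.prod_pos fun i _ => (Nat.prime_nth_prime _).pos
  have hba : 3 * b = 2 * a := by rw [ha, hb]; ring
  have ha0 : 6 ≤ a := by omega
  have hlt : b < a * m := by nlinarith
  refine ⟨hlt, fun n hn => ?_⟩
  have hle : b * n ≤ a * m * n := Nat.mul_le_mul_right n hlt.le
  have han : 6 ≤ a * n := by nlinarith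
  rw [Nat.dvd_iff_prime_pow_dvd_dvd]
  intro p k hp hk
  rcases Nat.eq_zero_or_pos k with rfl | hk0
  · simp
  have hpm : 3 * m < p := by
    by_contra hcon
    have hpa : p ∣ a := ha ▸ aux_dvd p t hp ht (by omega)
    have h1 : p ∣ a * n - 1 := (dvd_pow_self p (by omega)).trans hk
    have h2 : p ∣ a * n - (a * n - 1) := Nat.dvd_sub (hpa.mul_right n) h1
    rw [Nat.sub_sub_self (by omega)] at h2
    exact hp.one_lt.ne' (Nat.dvd_one.1 h2)
  rw [hp.pow_dvd_iff_le_factorization (Nat.choose_pos hle).ne',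
    Nat.factorization_choose hp hle
      (show Nat.log p (a * m * n) < Nat.log p (a * m * n) + k + 1 by omega)]
  calc k = (Finset.Icc 1 k).card := by simp
    _ ≤ _ := Finset.card_le_card fun i hi => by
      rw [Finset.mem_Icc] at hi
      rw [Finset.mem_filter, Finset.mem_Ico]
      exact ⟨⟨hi.1, by omega⟩, aux_key m p a b n hp hm hpm hba hn (by omega) i hi.1
        ((pow_dvd_pow p hi.2).trans hk)⟩
end

section
/- Let m be a positive integer and let t ≥ 3 be an index such that the t-th prime p_t satisfies p_t > 3m. Set a = 6·p_3·p_4⋯p_t and b = 4·p_3·p_4⋯p_t. If n is a positive integer and q is a prime dividing an−1, then the remainder of bn upon division by q satisfies 3·(bn mod q) > q; in particular, bn mod q > m. -/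
/-- Let `m` be a positive integer and `t ≥ 3` an index with the `t`-th prime `p_t`
(in the increasing enumeration `p_1 = 2, p_2 = 3, p_3 = 5, …`, so `p_i` is
`Nat.nth Nat.Prime (i-1)`) satisfying `p_t > 3m`.  Set `a = 6·p_3⋯p_t` and
`b = 4·p_3⋯p_t`.  If `n` is a positive integer and `q` is a prime dividing
`a*n - 1`, then `3·(b*n mod q) > q`; in particular `b*n mod q > m`. -/
theorem stmt_8 (m : ℕ) (hm : 0 < m) (t : ℕ) (ht : 3 ≤ t)
    (hpt : 3 * m < Nat.nth Nat.Prime (t - 1))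
    (a b : ℕ)
    (ha : a = 6 * ∏ i ∈ Finset.Icc 3 t, Nat.nth Nat.Prime (i - 1))
    (hb : b = 4 * ∏ i ∈ Finset.Icc 3 t, Nat.nth Nat.Prime (i - 1))
    (n : ℕ) (hn : 0 < n) (q : ℕ) (hq : q.Prime) (hdvd : q ∣ a * n - 1) :
    q < 3 * (b * n % q) ∧ m < b * n % q := by
  set P := ∏ i ∈ Finset.Icc 3 t, Nat.nth Nat.Prime (i - 1) with hP
  have hPpos : 0 < P := Finset.prod_pos fun i _ => (Nat.prime_nth_prime (i - 1)).pos
  have hPn : 0 < P * n := Nat.mul_pos hPpos hn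
  have han : a * n = 6 * (P * n) := by rw [ha]; ring
  have hbn : b * n = 4 * (P * n) := by rw [hb]; ring
  have hnot : ¬ q ∣ a := by
    intro h
    have h1 : q ∣ a * n := Dvd.dvd.mul_right h n
    have h2 : q ∣ a * n - (a * n - 1) := Nat.dvd_sub h1 hdvd
    have h3 : a * n - (a * n - 1) = 1 := by omega
    rw [h3] at h2
    exact hq.one_lt.ne' (Nat.dvd_one.mp h2)
  have hq2 : q ≠ 2 := by
    rintro rfl
    exact hnot (ha ▸ Dvd.dvd.mul_right (by norm_num) P)
  have hq3 : q ≠ 3 := by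
    rintro rfl
    exact hnot (ha ▸ Dvd.dvd.mul_right (by norm_num) P)
  have hq4 : q ≠ 4 := by
    rintro rfl
    revert hq
    norm_num
  have hq5 : 5 ≤ q := by
    have := hq.two_le
    omega
  have hlt : Nat.nth Nat.Prime (t - 1) < q := by
    by_contra hle
    push Not at hle
    have hc : Nat.nth Nat.Prime (Nat.count Nat.Prime q) = q := Nat.nth_count hq
    have hc2 : 2 ≤ Nat.count Nat.Prime q := by
      have h5 : Nat.count Nat.Prime 5 = 2 := by decide
      rw [← h5]
      exact Nat.count_monotone _ hq5
    have hct : Nat.count Nat.Prime q ≤ t - 1 := by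
      rw [← hc] at hle
      exact (Nat.nth_le_nth Nat.infinite_setOf_prime).mp hle
    have hmem : Nat.count Nat.Prime q + 1 ∈ Finset.Icc 3 t := by
      rw [Finset.mem_Icc]
      omega
    have hd := Finset.dvd_prod_of_mem (fun i => Nat.nth Nat.Prime (i - 1)) hmem
    simp only [Nat.add_sub_cancel, hc] at hd
    exact hnot (ha ▸ Dvd.dvd.mul_left hd 6)
  have key : q < 3 * (b * n % q) := by
    obtain ⟨k, hk⟩ := hdvd
    have hmod : 3 * (b * n % q) ≡ 2 [MOD q] := by
      have h1 : 3 * (b * n % q) ≡ 3 * (b * n) [MOD q] :=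
        (Nat.mod_modEq _ _).mul_left 3
      have h2 : 3 * (b * n) = 2 + q * (2 * k) := by
        have : q * (2 * k) = 2 * (q * k) := by ring
        omega
      rw [h2] at h1
      exact h1.trans (by simp [Nat.ModEq])
    by_contra hle
    push Not at hle
    rcases hle.eq_or_lt with h | h
    · rw [h] at hmod
      have h2 : q ∣ 2 := (Nat.modEq_zero_iff_dvd.mp (hmod.symm.trans (by simp [Nat.ModEq])))
      have := Nat.le_of_dvd (by norm_num) h2
      omega
    · have := Nat.ModEq.eq_of_lt_of_lt hmod h (by omega)
      omega
  exact ⟨key, by omega⟩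
end

section
/- For every positive integer n and every pair (α, β) ∈ {(0,0), (1,0), (1,1)}, the binomial coefficient C(4n+α, 2n+β) is congruent to 0, 1, or 4 modulo 5. -/
/-- One step of Lucas' theorem modulo `5`. -/
lemma lucas_step (a b q r : ℕ) (ha : a < 5) (hb : b < 5) :
    Nat.choose (5 * q + a) (5 * r + b) % 5 = (Nat.choose a b * (Nat.choose q r % 5)) % 5 := by
  have : Fact (Nat.Prime 5) := ⟨by norm_num⟩
  have h := Choose.choose_modEq_choose_mod_mul_choose_div_nat (p := 5)
    (n := 5 * q + a) (k := 5 * r + b)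
  have h1 : (5 * q + a) % 5 = a := by omega
  have h2 : (5 * r + b) % 5 = b := by omega
  have h3 : (5 * q + a) / 5 = q := by omega
  have h4 : (5 * r + b) / 5 = r := by omega
  rw [h1, h2, h3, h4] at h
  rw [h, Nat.mul_mod_mod]

/-- Residues of `C(2m,m)` and `C(2m+1,m)` modulo `5`, according to the parity of `m`. -/
lemma central_residues (m : ℕ) :
    ((m % 2 = 0 ∧ (Nat.choose (2 * m) m % 5 = 0 ∨ Nat.choose (2 * m) m % 5 = 1 ∨
        Nat.choose (2 * m) m % 5 = 4)) ∨
     (m % 2 = 1 ∧ (Nat.choose (2 * m) m % 5 = 0 ∨ Nat.choose (2 * m) m % 5 = 2 ∨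
        Nat.choose (2 * m) m % 5 = 3))) ∧
    ((m % 2 = 0 ∧ (Nat.choose (2 * m + 1) m % 5 = 0 ∨ Nat.choose (2 * m + 1) m % 5 = 1 ∨
        Nat.choose (2 * m + 1) m % 5 = 4)) ∨
     (m % 2 = 1 ∧ (Nat.choose (2 * m + 1) m % 5 = 0 ∨ Nat.choose (2 * m + 1) m % 5 = 2 ∨
        Nat.choose (2 * m + 1) m % 5 = 3))) := by
  induction m using Nat.strong_induction_on with
  | _ m ih =>
  rcases Nat.eq_zero_or_pos m with rfl | hm
  · simp
  obtain ⟨q, d, hd, rfl⟩ : ∃ q d, d < 5 ∧ m = 5 * q + d :=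
    ⟨m / 5, m % 5, by omega, by omega⟩
  have hq := ih q (by omega)
  clear ih
  interval_cases d
  · have e1 := lucas_step 0 0 (2 * q) q (by norm_num) (by norm_num)
    have e2 := lucas_step 1 0 (2 * q) q (by norm_num) (by norm_num)
    rw [show 2 * (5 * q + 0) = 5 * (2 * q) + 0 by ring, e1,
      show 5 * (2 * q) + 0 + 1 = 5 * (2 * q) + 1 by ring, e2]
    norm_num [Nat.choose]
    omega
  · have e1 := lucas_step 2 1 (2 * q) q (by norm_num) (by norm_num)
    have e2 := lucas_step 3 1 (2 * q) q (by norm_num) (by norm_num)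
    rw [show 2 * (5 * q + 1) = 5 * (2 * q) + 2 by ring, e1,
      show 5 * (2 * q) + 2 + 1 = 5 * (2 * q) + 3 by ring, e2,
      show Nat.choose 2 1 = 2 by rfl, show Nat.choose 3 1 = 3 by rfl]
    omega
  · have e1 := lucas_step 4 2 (2 * q) q (by norm_num) (by norm_num)
    have e2 := lucas_step 0 2 (2 * q + 1) q (by norm_num) (by norm_num)
    rw [show 2 * (5 * q + 2) = 5 * (2 * q) + 4 by ring, e1,
      show 5 * (2 * q) + 4 + 1 = 5 * (2 * q + 1) + 0 by ring, e2,
      show Nat.choose 4 2 = 6 by rfl, show Nat.choose 0 2 = 0 by rfl]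
    omega
  · have e1 := lucas_step 1 3 (2 * q + 1) q (by norm_num) (by norm_num)
    have e2 := lucas_step 2 3 (2 * q + 1) q (by norm_num) (by norm_num)
    rw [show 2 * (5 * q + 3) = 5 * (2 * q + 1) + 1 by ring, e1,
      show 5 * (2 * q + 1) + 1 + 1 = 5 * (2 * q + 1) + 2 by ring, e2,
      show Nat.choose 1 3 = 0 by rfl, show Nat.choose 2 3 = 0 by rfl]
    omega
  · have e1 := lucas_step 3 4 (2 * q + 1) q (by norm_num) (by norm_num)
    have e2 := lucas_step 4 4 (2 * q + 1) q (by norm_num) (by norm_num)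
    rw [show 2 * (5 * q + 4) = 5 * (2 * q + 1) + 3 by ring, e1,
      show 5 * (2 * q + 1) + 3 + 1 = 5 * (2 * q + 1) + 4 by ring, e2,
      show Nat.choose 3 4 = 0 by rfl, show Nat.choose 4 4 = 1 by rfl]
    omega

/-- For every positive integer `n` and every pair `(α, β) ∈ {(0,0), (1,0), (1,1)}`,
the binomial coefficient `C(4n+α, 2n+β)` is congruent to `0`, `1`, or `4` modulo `5`. -/
theorem stmt_10 (n : ℕ) (hn : 0 < n) (α β : ℕ)
    (hαβ : (α, β) = (0, 0) ∨ (α, β) = (1, 0) ∨ (α, β) = (1, 1)) :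
    Nat.choose (4 * n + α) (2 * n + β) % 5 = 0 ∨
    Nat.choose (4 * n + α) (2 * n + β) % 5 = 1 ∨
    Nat.choose (4 * n + α) (2 * n + β) % 5 = 4 := by
  have h := central_residues (2 * n)
  rw [show 2 * (2 * n) = 4 * n by ring] at h
  have hs : Nat.choose (4 * n + 1) (2 * n + 1) = Nat.choose (4 * n + 1) (2 * n) :=
    Nat.choose_symm_of_eq_add (by ring)
  simp only [Prod.mk.injEq] at hαβ
  rcases hαβ with ⟨rfl, rfl⟩ | ⟨rfl, rfl⟩ | ⟨rfl, rfl⟩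
  · rw [Nat.add_zero, Nat.add_zero]
    omega
  · rw [Nat.add_zero (2 * n)]
    omega
  · rw [hs]
    omega
end

section
/- For every positive integer n and every pair (α, β) ∈ {(2,1), (3,1), (3,2)}, the binomial coefficient C(4n+α, 2n+β) is congruent to 0, 2, or 3 modulo 5. -/
theorem lucas5 (a b x y : ℕ) (hx : x < 5) (hy : y < 5) :
    Nat.choose (5 * a + x) (5 * b + y) % 5 = (Nat.choose x y * (Nat.choose a b % 5)) % 5 := by
  haveI : Fact (Nat.Prime 5) := ⟨by norm_num⟩
  have h := Choose.choose_modEq_choose_mod_mul_choose_div_nat (p := 5)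
    (n := 5 * a + x) (k := 5 * b + y)
  have h1 : (5 * a + x) % 5 = x := by omega
  have h2 : (5 * b + y) % 5 = y := by omega
  have h3 : (5 * a + x) / 5 = a := by omega
  have h4 : (5 * b + y) / 5 = b := by omega
  rw [h1, h2, h3, h4] at h
  rw [h]
  simp [Nat.mul_mod]

/-- Central binomial coefficients modulo 5, by parity of the index. -/
theorem central5 (m : ℕ) :
    Nat.choose (2 * m) m % 5 = 0 ∨
    (m % 2 = 1 ∧ (Nat.choose (2 * m) m % 5 = 2 ∨ Nat.choose (2 * m) m % 5 = 3)) ∨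
    (m % 2 = 0 ∧ (Nat.choose (2 * m) m % 5 = 1 ∨ Nat.choose (2 * m) m % 5 = 4)) := by
  induction m using Nat.strong_induction_on with
  | _ m ih =>
    rcases Nat.eq_zero_or_pos m with rfl | hm
    · simp
    have ihq := ih (m / 5) (by omega)
    obtain ⟨q, r, hr, rfl⟩ : ∃ q r, r < 5 ∧ m = 5 * q + r :=
      ⟨m / 5, m % 5, by omega, by omega⟩
    have hq : (5 * q + r) / 5 = q := by omega
    rw [hq] at ihq
    interval_cases r
    · have h := lucas5 (2 * q) q 0 0 (by norm_num) (by norm_num)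
      rw [show 2 * (5 * q + 0) = 5 * (2 * q) + 0 by ring, h]
      norm_num [Nat.choose]
      omega
    · have h := lucas5 (2 * q) q 2 1 (by norm_num) (by norm_num)
      rw [show 2 * (5 * q + 1) = 5 * (2 * q) + 2 by ring, h]
      rw [show Nat.choose 2 1 = 2 by decide]
      omega
    · have h := lucas5 (2 * q) q 4 2 (by norm_num) (by norm_num)
      rw [show 2 * (5 * q + 2) = 5 * (2 * q) + 4 by ring, h]
      rw [show Nat.choose 4 2 = 6 by decide]
      omega
    · have h := lucas5 (2 * q + 1) q 1 3 (by norm_num) (by norm_num)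
      rw [show 2 * (5 * q + 3) = 5 * (2 * q + 1) + 1 by ring, h]
      rw [show Nat.choose 1 3 = 0 by decide]
      omega
    · have h := lucas5 (2 * q + 1) q 3 4 (by norm_num) (by norm_num)
      rw [show 2 * (5 * q + 4) = 5 * (2 * q + 1) + 3 by ring, h]
      rw [show Nat.choose 3 4 = 0 by decide]
      omega

theorem nearCentral5 (m : ℕ) (hodd : m % 2 = 1) :
    Nat.choose (2 * m + 1) m % 5 = 0 ∨ Nat.choose (2 * m + 1) m % 5 = 2 ∨
    Nat.choose (2 * m + 1) m % 5 = 3 := by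
  induction m using Nat.strong_induction_on with
  | _ m ih =>
    have ihq := ih (m / 5) (by omega)
    obtain ⟨q, r, hr, rfl⟩ : ∃ q r, r < 5 ∧ m = 5 * q + r :=
      ⟨m / 5, m % 5, by omega, by omega⟩
    have hq : (5 * q + r) / 5 = q := by omega
    rw [hq] at ihq
    have hc := central5 q
    interval_cases r
    · have h := lucas5 (2 * q) q 1 0 (by norm_num) (by norm_num)
      rw [show 2 * (5 * q + 0) + 1 = 5 * (2 * q) + 1 by ring, h]
      rw [show Nat.choose 1 0 = 1 by decide]
      omega
    · have h := lucas5 (2 * q) q 3 1 (by norm_num) (by norm_num)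
      rw [show 2 * (5 * q + 1) + 1 = 5 * (2 * q) + 3 by ring, h]
      rw [show Nat.choose 3 1 = 3 by decide]
      omega
    · have h := lucas5 (2 * q + 1) q 0 2 (by norm_num) (by norm_num)
      rw [show 2 * (5 * q + 2) + 1 = 5 * (2 * q + 1) + 0 by ring, h]
      rw [show Nat.choose 0 2 = 0 by decide]
      omega
    · have h := lucas5 (2 * q + 1) q 2 3 (by norm_num) (by norm_num)
      rw [show 2 * (5 * q + 3) + 1 = 5 * (2 * q + 1) + 2 by ring, h]
      rw [show Nat.choose 2 3 = 0 by decide]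
      omega
    · have h := lucas5 (2 * q + 1) q 4 4 (by norm_num) (by norm_num)
      have ihq' := ihq (by omega)
      rw [show 2 * (5 * q + 4) + 1 = 5 * (2 * q + 1) + 4 by ring, h]
      rw [show Nat.choose 4 4 = 1 by decide]
      omega

/-- For every positive integer `n` and every pair `(α, β) ∈ {(2,1), (3,1), (3,2)}`,
the binomial coefficient `C(4n+α, 2n+β)` is congruent to `0`, `2`, or `3` modulo `5`. -/
theorem stmt_11 (n : ℕ) (hn : 0 < n) (α β : ℕ)
    (hαβ : (α, β) = (2, 1) ∨ (α, β) = (3, 1) ∨ (α, β) = (3, 2)) :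
    Nat.choose (4 * n + α) (2 * n + β) % 5 = 0 ∨
    Nat.choose (4 * n + α) (2 * n + β) % 5 = 2 ∨
    Nat.choose (4 * n + α) (2 * n + β) % 5 = 3 := by
  have hk := nearCentral5 (2 * n + 1) (by omega)
  rw [show 2 * (2 * n + 1) + 1 = 4 * n + 3 by ring] at hk
  simp only [Prod.mk.injEq] at hαβ
  rcases hαβ with ⟨rfl, rfl⟩ | ⟨rfl, rfl⟩ | ⟨rfl, rfl⟩
  · have h := central5 (2 * n + 1)
    rw [show 2 * (2 * n + 1) = 4 * n + 2 by ring] at h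
    omega
  · exact hk
  · have hs : Nat.choose (4 * n + 3) (2 * n + 2) = Nat.choose (4 * n + 3) (2 * n + 1) :=
      Nat.choose_symm_of_eq_add (by ring)
    rw [hs]
    exact hk
end

section
/- There is no positive integer n such that the binomial coefficient C(4n, 2n) is congruent to 2 modulo 5. (In particular, Conjecture 7.1 of Guo and Krattenthaler fails for p = 5, a = 4, b = 2, α = β = 0, r = 2.) -/
/-- Central binomial coefficients modulo 5: the residue is constrained by the parity of `m`. -/
theorem central_mod_five (m : ℕ) :
    (m % 2 = 0 → Nat.choose (2 * m) m % 5 = 0 ∨ Nat.choose (2 * m) m % 5 = 1 ∨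
      Nat.choose (2 * m) m % 5 = 4) ∧
    (m % 2 = 1 → Nat.choose (2 * m) m % 5 = 0 ∨ Nat.choose (2 * m) m % 5 = 2 ∨
      Nat.choose (2 * m) m % 5 = 3) := by
  induction m using Nat.strong_induction_on with
  | _ m ih =>
    rcases Nat.eq_zero_or_pos m with h0 | hpos
    · subst h0; simp
    have ihq := ih (m / 5) (by omega)
    haveI : Fact (Nat.Prime 5) := ⟨by norm_num⟩
    have L : Nat.choose (2 * m) m % 5 =
        (Nat.choose ((2 * m) % 5) (m % 5) * Nat.choose ((2 * m) / 5) (m / 5)) % 5 :=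
      Choose.choose_modEq_choose_mod_mul_choose_div_nat
    have hd : m % 5 = 0 ∨ m % 5 = 1 ∨ m % 5 = 2 ∨ m % 5 = 3 ∨ m % 5 = 4 := by omega
    rcases hd with h | h | h | h | h
    · have e1 : (2 * m) % 5 = 0 := by omega
      have e2 : (2 * m) / 5 = 2 * (m / 5) := by omega
      rw [h, e1, e2, show Nat.choose 0 0 = 1 from rfl] at L
      omega
    · have e1 : (2 * m) % 5 = 2 := by omega
      have e2 : (2 * m) / 5 = 2 * (m / 5) := by omega
      rw [h, e1, e2, show Nat.choose 2 1 = 2 from rfl] at L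
      omega
    · have e1 : (2 * m) % 5 = 4 := by omega
      have e2 : (2 * m) / 5 = 2 * (m / 5) := by omega
      rw [h, e1, e2, show Nat.choose 4 2 = 6 from rfl] at L
      omega
    · have e1 : (2 * m) % 5 = 1 := by omega
      rw [h, e1, show Nat.choose 1 3 = 0 from rfl] at L
      omega
    · have e1 : (2 * m) % 5 = 3 := by omega
      rw [h, e1, show Nat.choose 3 4 = 0 from rfl] at L
      omega

/-- There is no positive integer `n` such that `C(4n, 2n) ≡ 2 (mod 5)`. -/
theorem stmt_12 : ¬ ∃ n : ℕ, 0 < n ∧ Nat.choose (4 * n) (2 * n) % 5 = 2 := by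
  rintro ⟨n, _, h⟩
  have H := (central_mod_five (2 * n)).1 (by omega)
  rw [show 2 * (2 * n) = 4 * n by ring] at H
  omega
end

section
/- Let a > b be positive integers, let α and β be integers, let d = gcd(a,b), c = a/d, and let p be a prime with p > a + 2b, and set e = gcd(p−1, a). If e < c or ν₂(a) ≤ ν₂(p−1), then for every integer r with 0 ≤ r ≤ p−1 there exist infinitely many positive integers n (with an+α ≥ 0 and bn+β ≥ 0) such that C(an+α, bn+β) ≡ r (mod p). -/
theorem lucas_block (p : ℕ) [Fact p.Prime] (k : ℕ) : ∀ (N M s t : ℕ), N < p ^ k → M < p ^ k →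
    (((N + p ^ k * s).choose (M + p ^ k * t) : ℕ) : ZMod p)
      = ((N.choose M : ℕ) : ZMod p) * ((s.choose t : ℕ) : ZMod p) := by
  have hp : 0 < p := (Fact.out : p.Prime).pos
  induction k with
  | zero =>
    intro N M s t hN hM
    have h1 : N = 0 := by simpa using hN
    have h2 : M = 0 := by simpa using hM
    subst h1 h2; simp
  | succ k ih =>
    intro N M s t hN hM
    have key : ∀ n m : ℕ, ((n.choose m : ℕ) : ZMod p)
        = (((n % p).choose (m % p) : ℕ) : ZMod p) * (((n / p).choose (m / p) : ℕ) : ZMod p) := by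
      intro n m
      have := (ZMod.natCast_eq_natCast_iff _ _ p).2
        (Choose.choose_modEq_choose_mod_mul_choose_div_nat (n := n) (k := m) (p := p))
      rw [this]; push_cast; ring
    have hm : ∀ x y : ℕ, (x + p ^ (k+1) * y) % p = x % p := by
      intro x y
      rw [pow_succ', mul_assoc, Nat.add_mul_mod_self_left]
    have hd : ∀ x y : ℕ, (x + p ^ (k+1) * y) / p = x / p + p ^ k * y := by
      intro x y
      rw [pow_succ', mul_assoc, Nat.add_mul_div_left _ _ hp]
    have hlt : ∀ x, x < p ^ (k+1) → x / p < p ^ k := by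
      intro x hx
      rw [Nat.div_lt_iff_lt_mul hp, ← pow_succ]; exact hx
    rw [key (N + _), key N, hm, hm, hd, hd, ih _ _ _ _ (hlt _ hN) (hlt _ hM), mul_assoc]

theorem choose_ne_zero_of_lt (p : ℕ) [Fact p.Prime] (s t : ℕ) (h : t ≤ s) (hs : s < p) :
    ((s.choose t : ℕ) : ZMod p) ≠ 0 := by
  have hp : p.Prime := Fact.out
  rw [Ne, ZMod.natCast_eq_zero_iff]
  intro hd
  have : p ∣ s.factorial := by
    rw [← Nat.choose_mul_factorial_mul_factorial h]
    exact Dvd.dvd.mul_right (Dvd.dvd.mul_right hd _) _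
  exact absurd (hp.dvd_factorial.1 this) (by omega)

def Reach (p a b : ℕ) (D : ℤ) : Prop :=
  ∃ k N M : ℕ, N < p ^ k ∧ M < p ^ k ∧ (a : ℤ) * M - b * N = p ^ k * D ∧
    ((N.choose M : ℕ) : ZMod p) ≠ 0

theorem reach_zero (p a b : ℕ) [Fact p.Prime] : Reach p a b 0 :=
  ⟨0, 0, 0, by simp, by simp, by simp, by simp⟩

theorem block_lt (p k N s : ℕ) (hN : N < p ^ k) (hs : s < p) : N + p ^ k * s < p ^ (k + 1) := by
  rw [pow_succ]; nlinarith [Nat.mul_le_mul_left (p ^ k) (Nat.succ_le_of_lt hs)]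

theorem reach_step (p a b : ℕ) [Fact p.Prime] (D D' s t : ℤ) (hD : Reach p a b D)
    (ht : 0 ≤ t) (hts : t ≤ s) (hs : s < p) (h : D - (b * s - a * t) = p * D') :
    Reach p a b D' := by
  obtain ⟨k, N, M, hN, hM, hr, hc⟩ := hD
  lift t to ℕ using ht
  lift s to ℕ using (by omega)
  have hs' : s < p := by exact_mod_cast hs
  have hts' : t ≤ s := by exact_mod_cast hts
  refine ⟨k + 1, N + p ^ k * s, M + p ^ k * t, block_lt _ _ _ _ hN hs',
    block_lt _ _ _ _ hM (by omega), ?_, ?_⟩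
  · push_cast
    have : (p : ℤ) ^ (k+1) * D' = p ^ k * (p * D') := by ring
    rw [this, ← h]
    linear_combination hr
  · rw [lucas_block p k _ _ _ _ hN hM]
    exact mul_ne_zero hc (choose_ne_zero_of_lt p s t hts' hs')

theorem reach_zero_digit (p a b : ℕ) [Fact p.Prime] (hb : 0 < b) (hab : 2 * b ≤ a)
    (hp : a + 2 * b < p) (i : ℕ) : ∀ (D D' : ℤ), Reach p a b D → -(b:ℤ) < D → D < (a:ℤ) - b →
    -(b:ℤ) < D' → D' ≤ 0 → (b:ℤ) ∣ D - p ^ (i + 1) * D' → Reach p a b D' := by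
  have step : ∀ (D D' : ℤ), Reach p a b D → -(b:ℤ) < D → D < (a:ℤ) - b →
    -(b:ℤ) < D' → D' ≤ 0 → (b:ℤ) ∣ D - p * D' → Reach p a b D' := by
    intro D D' hr h1 h2 h3 h4 ⟨s, hs⟩
    have hb' : (0:ℤ) < b := by exact_mod_cast hb
    have hp' : (a:ℤ) + 2 * b < p := by exact_mod_cast hp
    have hs0 : 0 ≤ s := by
      by_contra hneg
      have h5 : s ≤ -1 := by omega
      have h6 : b * s ≤ -b := by nlinarith
      rcases eq_or_lt_of_le h4 with h0 | h0
      · subst h0; linarith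
      · nlinarith
    have hsp : s < p := by
      by_contra hneg
      have h5 : (p:ℤ) ≤ s := by omega
      have h6 : (b:ℤ) * p ≤ b * s := by nlinarith
      have h7 : (p:ℤ) * (D' + b) ≥ p := by nlinarith
      nlinarith
    exact reach_step p a b D D' s 0 hr le_rfl hs0 hsp (by linarith)
  induction i with
  | zero => intro D D' hr h1 h2 h3 h4 h5; exact step D D' hr h1 h2 h3 h4 (by simpa using h5)
  | succ i ih =>
    intro D D' hr h1 h2 h3 h4 h5
    have hb' : (0:ℤ) < b := by exact_mod_cast hb
    have hab' : 2 * (b:ℤ) ≤ a := by exact_mod_cast hab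
    set D1 : ℤ := -((-(p ^ (i+1) * D')) % b) with hD1
    have e1 := Int.emod_nonneg (-(p ^ (i+1) * D')) hb'.ne'
    have e2 := Int.emod_lt_of_pos (-((p:ℤ) ^ (i+1) * D')) hb'
    have e3 : (b:ℤ) ∣ D1 - p ^ (i+1) * D' := by
      have := Int.dvd_self_sub_emod (x := -((p:ℤ) ^ (i+1) * D')) (m := (b:ℤ))
      have e : D1 - p ^ (i+1) * D' = (-((p:ℤ) ^ (i+1) * D')) - (-((p:ℤ) ^ (i+1) * D')) % b := by
        rw [hD1]; ring
      rw [e]; exact this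
    have r1 : Reach p a b D1 := by
      refine step D D1 hr h1 h2 (by omega) (by omega) ?_
      have : D - p * D1 = (D - p ^ (i+1+1) * D') - p * (D1 - p ^ (i+1) * D') := by ring
      rw [this]
      exact dvd_sub h5 (Dvd.dvd.mul_left e3 _)
    exact ih D1 D' r1 (by omega) (by omega) h3 h4 e3

theorem reach_neg (p a b : ℕ) [Fact p.Prime] (hb : 0 < b) (hab : 2 * b ≤ a)
    (hco : Nat.Coprime a b)
    (hp : a + 2 * b < p) (D' : ℤ) (h3 : -(b:ℤ) < D') (h4 : D' ≤ 0) : Reach p a b D' := by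
  have hpr : p.Prime := Fact.out
  have hb' : (0:ℤ) < b := by exact_mod_cast hb
  have hab' : 2 * (b:ℤ) ≤ a := by exact_mod_cast hab
  have hp' : (a:ℤ) + 2 * b < p := by exact_mod_cast hp
  have hpb : IsCoprime (p:ℤ) (b:ℤ) := by
    rw [Nat.isCoprime_iff_coprime]
    exact (Nat.Prime.coprime_iff_not_dvd hpr).2 (fun h => by have := Nat.le_of_dvd hb h; omega)
  have hcoz : IsCoprime (a:ℤ) (b:ℤ) := by rw [Nat.isCoprime_iff_coprime]; exact hco
  obtain ⟨t, ht0, htb, htd⟩ : ∃ t : ℤ, 0 ≤ t ∧ t < b ∧ (b:ℤ) ∣ a * t - p * D' := by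
    obtain ⟨x, y, hxy⟩ := hcoz
    refine ⟨(x * (p * D')) % b, Int.emod_nonneg _ hb'.ne', Int.emod_lt_of_pos _ hb', ?_⟩
    obtain ⟨w, hw⟩ := Int.dvd_self_sub_emod (x := x * (p * D')) (m := (b:ℤ))
    refine ⟨-(y * (p * D')) - a * w, ?_⟩
    linear_combination (-(a:ℤ)) * hw + (p * D') * hxy
  obtain ⟨s, hs0, hsb, hsd⟩ : ∃ s : ℤ, 0 ≤ s ∧ s < p ∧ (p:ℤ) ∣ a * t - b * s := by
    obtain ⟨x, y, hxy⟩ := hpb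
    have hpp : (0:ℤ) < p := by linarith
    refine ⟨(y * (a * t)) % p, Int.emod_nonneg _ hpp.ne', Int.emod_lt_of_pos _ hpp, ?_⟩
    obtain ⟨w, hw⟩ := Int.dvd_self_sub_emod (x := y * (a * t)) (m := (p:ℤ))
    refine ⟨x * (a * t) + b * w, ?_⟩
    linear_combination (b:ℤ) * hw - (a * t) * hxy
  obtain ⟨s', t', g1, g2, g3, g4, g5⟩ : ∃ s' t' : ℤ, 0 ≤ t' ∧ t' ≤ s' ∧ s' < p ∧
      (p:ℤ) ∣ a * t' - b * s' ∧ (b:ℤ) ∣ a * t' - p * D' := by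
    by_cases hts : t ≤ s
    · exact ⟨s, t, ht0, hts, hsb, hsd, htd⟩
    · refine ⟨s + a, t + b, by omega, by omega, by omega, ?_, ?_⟩
      · convert hsd using 1; ring
      · have : (a:ℤ) * (t + b) - p * D' = (a * t - p * D') + b * a := by ring
        rw [this]; exact dvd_add htd (dvd_mul_right _ _)
  obtain ⟨E, hE⟩ := g4
  have hrE : Reach p a b E :=
    reach_step p a b 0 E s' t' (reach_zero p a b) g1 g2 g3 (by linarith)
  have hE1 : -(b:ℤ) < E := by
    by_contra hneg
    have : E ≤ -b := by omega
    nlinarith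
  have hE2 : E < (a:ℤ) - b := by
    by_contra hneg
    have : (a:ℤ) - b ≤ E := by omega
    nlinarith
  obtain ⟨i, hi⟩ : ∃ i : ℕ, (b:ℤ) ∣ (p:ℤ) ^ (i+1) - 1 := by
    have hcop : Nat.Coprime p b := Nat.isCoprime_iff_coprime.1 hpb
    have := Nat.ModEq.pow_totient hcop
    have hpos : 0 < Nat.totient b := Nat.totient_pos.2 hb
    refine ⟨Nat.totient b - 1, ?_⟩
    rw [Nat.sub_add_cancel hpos]
    have h6 := (Nat.modEq_iff_dvd.1 this.symm)
    push_cast at h6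
    exact h6
  refine reach_zero_digit p a b hb hab hp i E D' hrE hE1 hE2 h3 h4 ?_
  have h7 : (b:ℤ) ∣ p * (E - D') := by
    have : (p:ℤ) * (E - D') = (a * t' - p * D') - b * s' := by linear_combination (-1) * hE
    rw [this]; exact dvd_sub g5 (dvd_mul_right _ _)
  have h8 := hpb.symm.dvd_of_dvd_mul_left h7
  have : E - (p:ℤ) ^ (i+1) * D' = (E - D') - ((p:ℤ)^(i+1) - 1) * D' := by ring
  rw [this]
  exact dvd_sub h8 (Dvd.dvd.mul_right hi _)

theorem reach_all (p a b : ℕ) [Fact p.Prime] (hb : 0 < b) (hab : 2 * b ≤ a)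
    (hco : Nat.Coprime a b)
    (hp : a + 2 * b < p) (D : ℤ) (h1 : -(b:ℤ) < D) (h2 : D < (a:ℤ) - b) : Reach p a b D := by
  have hb' : (0:ℤ) < b := by exact_mod_cast hb
  have hab' : 2 * (b:ℤ) ≤ a := by exact_mod_cast hab
  have hp' : (a:ℤ) + 2 * b < p := by exact_mod_cast hp
  suffices H : ∀ n : ℕ, ∀ D : ℤ, D ≤ n → -(b:ℤ) < D → D < (a:ℤ) - b → Reach p a b D from
    H D.toNat D (Int.self_le_toNat D) h1 h2
  intro n
  induction n with
  | zero => intro D h0 h1 h2; exact reach_neg p a b hb hab hco hp D h1 (by simpa using h0)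
  | succ n ih =>
    intro D h0 h1 h2
    by_cases hDn : D ≤ n
    · exact ih D hDn h1 h2
    have hD : D = n + 1 := by push_cast at h0; omega
    have hD1 : 1 ≤ D := by omega
    have hc : (0:ℤ) < a - b := by linarith
    obtain ⟨t, ht1, ht2⟩ : ∃ t : ℤ, (p - 1) * D + 1 ≤ (a - b) * t ∧
        (a - b) * t ≤ (p-1) * D + (a - b) := by
      refine ⟨((p - 1) * D + (a - b)) / (a - b), ?_, ?_⟩
      · have := Int.lt_mul_ediv_self_add (x := ((p:ℤ) - 1) * D + (a - b)) hc
        linarith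
      · exact Int.mul_ediv_self_le (x := ((p:ℤ) - 1) * D + (a - b)) hc.ne'
    have ht0 : 0 ≤ t := by
      by_contra hneg
      have : t ≤ -1 := by omega
      nlinarith
    have htp : t < p := by
      by_contra hneg
      have : (p:ℤ) ≤ t := by omega
      nlinarith
    have hat : a * t < p * (D + b) := by
      have k1 : (a - b : ℤ) * (a * t) < (a - b) * (p * (D + b)) := by
        have e1 : (a - b : ℤ) * (a * t) ≤ a * ((p-1) * D + (a - b)) := by nlinarith
        have e2 : (a - b : ℤ) * (p * (D + b)) - a * ((p-1) * D + (a - b))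
          = (p * b - a) * (a - b - D) := by ring
        have e3 : (0:ℤ) < (p * b - a) * (a - b - D) := by
          apply mul_pos <;> nlinarith
        linarith
      exact lt_of_mul_lt_mul_left k1 hc.le
    set s1 : ℤ := (a * t - p * D) / b with hs1
    have q1 : b * s1 ≤ a * t - p * D := Int.mul_ediv_self_le hb'.ne'
    have q2 : a * t - p * D < b * s1 + b := Int.lt_mul_ediv_self_add hb'
    obtain ⟨s, z1, z2, z3, z4⟩ : ∃ s : ℤ, t ≤ s ∧ s < p ∧ a * t - p * D - b < b * s ∧
        b * s ≤ a * t - p * D + D - 1 := by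
      by_cases hst : t ≤ s1
      · refine ⟨s1, hst, ?_, by linarith, by linarith⟩
        by_contra hneg
        have : (p:ℤ) ≤ s1 := by omega
        nlinarith
      · refine ⟨t, le_rfl, htp, ?_, by linarith⟩
        have : s1 + 1 ≤ t := by omega
        nlinarith
    have hr := ih (p * D + (b * s - a * t)) (by linarith) (by linarith) (by linarith)
    exact reach_step p a b _ D s t hr ht0 z1 z2 (by ring)

theorem tail_exists (a b : ℕ) (hb : 0 < b) (hab : b < a) (hco : Nat.Coprime a b)
    (D : ℤ) (h1 : -(b:ℤ) < D) (h2 : D < (a:ℤ) - b) :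
    ∃ q q' : ℕ, q' ≤ q ∧ q < a ∧ (b:ℤ) * q - a * q' = D := by
  have hcoz : IsCoprime (a:ℤ) (b:ℤ) := by rw [Nat.isCoprime_iff_coprime]; exact hco
  have hb' : (0:ℤ) < b := by exact_mod_cast hb
  have hab' : (b:ℤ) < a := by exact_mod_cast hab
  have ha' : (0:ℤ) < a := by linarith
  obtain ⟨x, y, hxy⟩ := hcoz
  obtain ⟨w, hw⟩ := Int.dvd_self_sub_emod (x := y * D) (m := (a:ℤ))
  have e1 := Int.emod_nonneg (y * D) ha'.ne'
  have e2 := Int.emod_lt_of_pos (y * D) ha'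
  generalize (y * D) % (a:ℤ) = q at hw e1 e2
  obtain ⟨z, hz⟩ : ∃ z : ℤ, (b:ℤ) * q - a * z = D :=
    ⟨- x * D - b * w, by linear_combination (-(b:ℤ)) * hw + D * hxy⟩
  have hz0 : 0 ≤ z := by
    by_contra hneg
    have : z ≤ -1 := by omega
    nlinarith
  have hzq : z ≤ q := by
    by_contra hneg
    have : q + 1 ≤ z := by omega
    nlinarith
  lift q to ℕ using e1
  lift z to ℕ using hz0
  exact ⟨q, z, by exact_mod_cast hzq, by exact_mod_cast e2, hz⟩

theorem zpow_red {Q : Type*} [CommGroup Q] (p : ℕ) (hp : 0 < p) (ω : Q) (hω : ω ^ (p - 1) = 1)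
    (k : ℕ) (z : ℤ) : ω ^ ((p:ℤ) ^ k * z) = ω ^ z := by
  have h1 : ω ^ (p:ℤ) = ω := by
    rw [zpow_natCast]
    calc ω ^ p = ω ^ (p - 1 + 1) := by rw [Nat.sub_add_cancel hp]
      _ = ω := by rw [pow_succ, hω, one_mul]
  induction k with
  | zero => simp
  | succ k ih => rw [pow_succ', mul_assoc, zpow_mul, h1, ih]

section rel
variable {Q : Type*} [CommGroup Q] (p a b : ℕ) [Fact p.Prime] (F : ZMod p → Q) (ω : Q)

theorem word_eq (hb : 0 < b) (hab : b < a) (hco : Nat.Coprime a b) (hap : a < p)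
    (hF : ∀ x y : ZMod p, x ≠ 0 → y ≠ 0 → F (x * y) = F x * F y)
    (hω : ω ^ (p - 1) = 1)
    (hyp : ∀ n : ℕ, (((a * n).choose (b * n) : ℕ) : ZMod p) ≠ 0 →
      F (((a * n).choose (b * n) : ℕ) : ZMod p) = ω ^ n)
    (x y : ℤ) (hxy : x * a + y * b = 1)
    (k N M : ℕ) (D D' : ℤ) (hN : N < p ^ k) (hM : M < p ^ k)
    (hr : (a : ℤ) * M - b * N = p ^ k * D) (hc : ((N.choose M : ℕ) : ZMod p) ≠ 0)
    (s t : ℕ) (hts : t ≤ s) (hs : s < p) (hD' : D - (b * s - a * t) = p * D')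
    (q q' : ℕ) (hqq : q' ≤ q) (hq : q < a) (hqD : (b:ℤ) * q - a * q' = D') :
    F ((N.choose M : ℕ) : ZMod p) * F ((s.choose t : ℕ) : ZMod p) * F ((q.choose q' : ℕ) : ZMod p)
      = ω ^ (x * (N + s + q) + y * (M + t + q')) := by
  have hpr : p.Prime := Fact.out
  set N' := N + p ^ k * (s + p ^ 1 * q) with hN'
  set M' := M + p ^ k * (t + p ^ 1 * q') with hM'
  have hch : ((N'.choose M' : ℕ) : ZMod p) = ((N.choose M : ℕ) : ZMod p) *
      (((s.choose t : ℕ) : ZMod p) * ((q.choose q' : ℕ) : ZMod p)) := by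
    rw [hN', hM', lucas_block p k _ _ _ _ hN hM, lucas_block p 1 s t q q' (by simpa using hs)
      (by simpa using (lt_of_le_of_lt hts hs))]
  have h1 := choose_ne_zero_of_lt p s t hts hs
  have h2 := choose_ne_zero_of_lt p q q' hqq (by omega)
  have h0 : (a:ℤ) * M' = b * N' := by
    rw [hN', hM']; push_cast
    linear_combination hr + (p:ℤ)^k * hD' - (p:ℤ)^(k+1) * hqD
  have h0' : a * M' = b * N' := by exact_mod_cast h0
  obtain ⟨n, hn⟩ : a ∣ N' := hco.dvd_of_dvd_mul_left (Dvd.intro _ h0')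
  have hMn : M' = b * n := by
    have : a * M' = a * (b * n) := by rw [h0', hn]; ring
    exact Nat.eq_of_mul_eq_mul_left (by omega) this
  have hne : ((N'.choose M' : ℕ) : ZMod p) ≠ 0 := by
    rw [hch]; exact mul_ne_zero hc (mul_ne_zero h1 h2)
  have := hyp n (by rw [← hn, ← hMn]; exact hne)
  rw [← hn, ← hMn, hch, hF _ _ hc (mul_ne_zero h1 h2), hF _ _ h1 h2] at this
  rw [mul_assoc, this, ← zpow_natCast]
  have hnz : (n:ℤ) = x * N' + y * M' := by
    rw [hn, hMn]; push_cast; linear_combination (-(n:ℤ)) * hxy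
  rw [hnz, hN', hM']
  have e : x * ((N + p ^ k * (s + p ^ 1 * q) : ℕ) : ℤ) + y * ((M + p ^ k * (t + p ^ 1 * q') : ℕ) : ℤ)
     = (x * N + y * M) + ((p:ℤ)^k * (x * s + y * t) + (p:ℤ)^(k+1) * (x * q + y * q')) := by
    push_cast; ring
  rw [e, zpow_add ω (x * N + y * M), zpow_add ω ((p:ℤ)^k * _), zpow_red p hpr.pos ω hω, zpow_red p hpr.pos ω hω,
    ← zpow_add, ← zpow_add]
  congr 1; ring

theorem rel (hb : 0 < b) (hab : 2 * b ≤ a) (hco : Nat.Coprime a b) (hp : a + 2 * b < p)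
    (hF : ∀ x y : ZMod p, x ≠ 0 → y ≠ 0 → F (x * y) = F x * F y)
    (hω : ω ^ (p - 1) = 1)
    (hyp : ∀ n : ℕ, (((a * n).choose (b * n) : ℕ) : ZMod p) ≠ 0 →
      F (((a * n).choose (b * n) : ℕ) : ZMod p) = ω ^ n)
    (E : ℤ) (hE1 : 1 ≤ E) (hE2 : E < (a:ℤ) - b)
    (u v : ℕ) (hv : 0 < v) (hvu : v < u) (hu : u < p)
    (huv : (p:ℤ) ∣ a * v - (a - b) * u - E) : F (u : ZMod p) = F (v : ZMod p) := by
  have hpr : p.Prime := Fact.out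
  have hb' : (0:ℤ) < b := by exact_mod_cast hb
  have hab' : 2 * (b:ℤ) ≤ a := by exact_mod_cast hab
  have hp' : (a:ℤ) + 2 * b < p := by exact_mod_cast hp
  have hpp : (0:ℤ) < p := by linarith
  have hpb : IsCoprime (p:ℤ) (b:ℤ) := by
    rw [Nat.isCoprime_iff_coprime]
    exact (Nat.Prime.coprime_iff_not_dvd hpr).2 (fun h => by have := Nat.le_of_dvd hb h; omega)
  obtain ⟨x, y, hxy⟩ : IsCoprime (a:ℤ) (b:ℤ) := by rw [Nat.isCoprime_iff_coprime]; exact hco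
  obtain ⟨k1, N1, M1, hN1, hM1, hr1, hc1⟩ := reach_all p a b hb hab hco hp (E - b)
    (by linarith) (by linarith)
  obtain ⟨k2, N2, M2, hN2, hM2, hr2, hc2⟩ := reach_all p a b hb hab hco hp E
    (by linarith) (by linarith)
  have key : ∀ s t : ℕ, t ≤ s → s + 1 < p → (p:ℤ) ∣ (E - b) - (b * s - a * t) →
      F ((N1.choose M1 : ℕ) : ZMod p) * F ((s.choose t : ℕ) : ZMod p) * ω ^ (x * (N2 + 1) + y * M2)
      = F ((N2.choose M2 : ℕ) : ZMod p) * F (((s+1).choose t : ℕ) : ZMod p)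
        * ω ^ (x * N1 + y * M1) := by
    intro s t hts hs ⟨D', hD'⟩
    have hts' : (t:ℤ) ≤ s := by exact_mod_cast hts
    have hs' : (s:ℤ) + 1 < p := by exact_mod_cast hs
    have ht0 : (0:ℤ) ≤ t := by positivity
    have hs0 : (0:ℤ) ≤ s := by positivity
    have r1 : -(b:ℤ) < D' := by
      by_contra hneg
      have : D' ≤ -b := by omega
      nlinarith
    have r2 : D' < (a:ℤ) - b := by
      by_contra hneg
      have : (a:ℤ) - b ≤ D' := by omega
      nlinarith
    obtain ⟨q, q', hqq, hq, hqD⟩ := tail_exists a b hb (by omega) hco D' r1 r2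
    have w1 := word_eq p a b F ω hb (by omega) hco (by omega) hF hω hyp x y hxy k1 N1 M1 _ D'
      hN1 hM1 hr1 hc1 s t hts (by omega) hD' q q' hqq hq hqD
    have w2 := word_eq p a b F ω hb (by omega) hco (by omega) hF hω hyp x y hxy k2 N2 M2 _ D'
      hN2 hM2 hr2 hc2 (s+1) t (by omega) (by omega) (by push_cast; linarith) q q' hqq hq hqD
    have h3 : F ((q.choose q' : ℕ) : ZMod p) * (F ((N1.choose M1 : ℕ) : ZMod p) *
        F ((s.choose t : ℕ) : ZMod p) * ω ^ (x * (N2 + 1) + y * M2)) =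
        F ((q.choose q' : ℕ) : ZMod p) * (F ((N2.choose M2 : ℕ) : ZMod p) *
          F (((s+1).choose t : ℕ) : ZMod p) * ω ^ (x * N1 + y * M1)) := by
      calc _ = (F ((N1.choose M1 : ℕ) : ZMod p) * F ((s.choose t : ℕ) : ZMod p) *
              F ((q.choose q' : ℕ) : ZMod p)) * ω ^ (x * (N2 + 1) + y * M2) := by
              simp only [mul_comm, mul_left_comm, mul_assoc]
        _ = (F ((N2.choose M2 : ℕ) : ZMod p) * F (((s+1).choose t : ℕ) : ZMod p) *
              F ((q.choose q' : ℕ) : ZMod p)) * ω ^ (x * N1 + y * M1) := by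
              rw [w1, w2, ← zpow_add, ← zpow_add]; congr 1; push_cast; ring
        _ = _ := by simp only [mul_comm, mul_left_comm, mul_assoc]
    exact mul_left_cancel h3
  obtain ⟨s0, hs0, hs0p, hs0d⟩ : ∃ s : ℤ, 0 ≤ s ∧ s < p ∧ (p:ℤ) ∣ (E - b) - b * s := by
    obtain ⟨x, y, hxy⟩ := hpb
    refine ⟨(y * (E - b)) % p, Int.emod_nonneg _ hpp.ne', Int.emod_lt_of_pos _ hpp, ?_⟩
    obtain ⟨w, hw⟩ := Int.dvd_self_sub_emod (x := y * (E - b)) (m := (p:ℤ))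
    refine ⟨x * (E - b) + b * w, ?_⟩
    linear_combination (b:ℤ) * hw - (E - b) * hxy
  have hs0' : s0 + 1 < p := by
    by_contra hneg
    have e : s0 = p - 1 := by omega
    rw [e] at hs0d
    have : (p:ℤ) ∣ E := by
      have e2 : E = ((E - b) - b * (p - 1)) + p * b := by ring
      rw [e2]; exact dvd_add hs0d (dvd_mul_right _ _)
    have := Int.le_of_dvd (by linarith) this
    linarith
  lift s0 to ℕ using hs0
  have k0 := key s0 0 (by omega) (by exact_mod_cast hs0') (by simpa using hs0d)
  have k1 := key (u-1) (u-v) (by omega) (by omega) (by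
    have e1 : ((u - 1 : ℕ) : ℤ) = u - 1 := by omega
    have e2 : ((u - v : ℕ) : ℤ) = u - v := by omega
    rw [e1, e2]
    have : (E - b) - (b * ((u:ℤ) - 1) - a * (u - v)) = -(a * v - (a - b) * u - E) := by ring
    rw [this]; exact (dvd_neg).2 huv)
  rw [Nat.sub_add_cancel (by omega : 1 ≤ u)] at k1
  simp only [Nat.choose_zero_right] at k0
  have hF1 : F 1 = 1 := by
    have := hF 1 1 one_ne_zero one_ne_zero
    rw [mul_one] at this
    exact (left_eq_mul.1 this)
  have hCeq : F (((u-1).choose (u-v) : ℕ) : ZMod p) = F ((u.choose (u-v) : ℕ) : ZMod p) := by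
    rw [Nat.cast_one, hF1, mul_one, mul_one] at k0
    have h4 : F (((u-1).choose (u-v) : ℕ) : ZMod p) * (F ((N1.choose M1 : ℕ) : ZMod p) * ω ^ (x * ((N2:ℤ) + 1) + y * M2))
      = F ((u.choose (u-v) : ℕ) : ZMod p) * (F ((N1.choose M1 : ℕ) : ZMod p) * ω ^ (x * ((N2:ℤ) + 1) + y * M2)) := by
      calc _ = F ((N1.choose M1 : ℕ) : ZMod p) * F (((u-1).choose (u-v) : ℕ) : ZMod p) * ω ^ (x * ((N2:ℤ) + 1) + y * M2) := by
            simp only [mul_comm, mul_left_comm, mul_assoc]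
        _ = F ((u.choose (u-v) : ℕ) : ZMod p) * (F ((N2.choose M2 : ℕ) : ZMod p) * ω ^ (x * (N1:ℤ) + y * M1)) := by
            rw [k1]; simp only [mul_comm, mul_left_comm, mul_assoc]
        _ = _ := by rw [k0]
    exact mul_right_cancel h4
  have hid : (((u - 1).choose (u - v) : ℕ) : ZMod p) * (u : ZMod p)
      = ((u.choose (u-v) : ℕ) : ZMod p) * (v : ZMod p) := by
    have := Nat.choose_mul_succ_eq (u-1) (u-v)
    rw [Nat.sub_add_cancel (by omega : 1 ≤ u), (by omega : u - (u - v) = v)] at this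
    exact_mod_cast congrArg (Nat.cast : ℕ → ZMod p) this
  have nz : ∀ w : ℕ, 0 < w → w < p → (w : ZMod p) ≠ 0 := by
    intro w h1 h2 h3
    rw [ZMod.natCast_eq_zero_iff] at h3
    exact absurd (Nat.le_of_dvd h1 h3) (by omega)
  have h5 := congrArg F hid
  rw [hF _ _ (choose_ne_zero_of_lt p _ _ (by omega) (by omega)) (nz u (by omega) hu),
    hF _ _ (choose_ne_zero_of_lt p _ _ (by omega) (by omega)) (nz v hv (by omega)), hCeq] at h5
  exact mul_left_cancel h5
end rel

theorem count_trivial {Q : Type*} [CommGroup Q] (p : ℕ) [Fact p.Prime] (F : ZMod p → Q)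
    (hF : ∀ x y : ZMod p, x ≠ 0 → y ≠ 0 → F (x * y) = F x * F y)
    (a b c E E' : ZMod p) (hc : c ≠ 0) (hb : b ≠ 0) (ha : a ≠ 0) (hE : E ≠ 0) (hE' : E' ≠ 0)
    (hcab : c + b = a)
    (hFa : F a = 1) (hFc : F c = 1)
    (h : ∀ v : ZMod p, v ≠ 0 → b * v ≠ E → b * v ≠ -E' →
      ((a - E / v) / c ≠ 0 ∧ F ((a - E / v) / c) = 1) ∨
      ((a + E' / v) / c ≠ 0 ∧ F ((a + E' / v) / c) = 1)) :
    ∀ x : ZMod p, x ≠ 0 → F x = 1 := by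
  classical
  have hpr : p.Prime := Fact.out
  have hF1 : F 1 = 1 := by
    have := hF 1 1 one_ne_zero one_ne_zero
    rw [mul_one] at this
    exact (left_eq_mul.1 this)
  set S : Finset (ZMod p) := Finset.univ.filter (fun x => x ≠ 0 ∧ F x = 1) with hS
  have hl : F (a / c) = 1 := by
    have := hF (a / c) c (div_ne_zero ha hc) hc
    rw [div_mul_cancel₀ _ hc, hFa, hFc, mul_one] at this
    exact this.symm
  have hlne : a / c ≠ 1 := by
    intro h0
    rw [div_eq_one_iff_eq hc] at h0
    apply hb
    linear_combination hcab + h0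
  have h1S : (1 : ZMod p) ∈ S := by simp [hS, hF1]
  have hlS : a / c ∈ S := by simp [hS, hl, ha, hc]
  set T := (S.erase (a / c)).erase 1 with hT
  have hTcard : T.card + 2 = S.card := by
    have e1 := Finset.card_erase_add_one hlS
    have e2 : (1 : ZMod p) ∈ S.erase (a / c) := Finset.mem_erase.2 ⟨hlne.symm, h1S⟩
    have e3 := Finset.card_erase_add_one e2
    rw [hT]; omega
  set V : Finset (ZMod p) := ((Finset.univ.erase 0).erase (E / b)).erase (-E' / b) with hV
  have hVcard : p ≤ V.card + 3 := by
    have e0 : (Finset.univ : Finset (ZMod p)).card = p := by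
      rw [Finset.card_univ, ZMod.card]
    have e1 := Finset.pred_card_le_card_erase (s := (Finset.univ : Finset (ZMod p))) (a := 0)
    have e2 := Finset.pred_card_le_card_erase (s := (Finset.univ : Finset (ZMod p)).erase 0) (a := E / b)
    have e3 := Finset.pred_card_le_card_erase
      (s := ((Finset.univ : Finset (ZMod p)).erase 0).erase (E / b)) (a := -E' / b)
    rw [hV]; omega
  have hmem : ∀ v ∈ V, v ≠ 0 ∧ b * v ≠ E ∧ b * v ≠ -E' := by
    intro v hv
    simp only [hV, Finset.mem_erase, Finset.mem_univ, and_true] at hv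
    refine ⟨hv.2.2, fun h0 => hv.2.1 ?_, fun h0 => hv.1 ?_⟩
    · rw [eq_div_iff hb, mul_comm]; exact h0
    · rw [eq_div_iff hb, mul_comm]; exact h0
  have hcnt : ∀ e : ZMod p, e ≠ 0 →
      (V.filter (fun v => (b * v ≠ e) ∧ ((a - e / v) / c ≠ 0 ∧ F ((a - e / v) / c) = 1))).card ≤ T.card := by
    intro e he
    apply Finset.card_le_card_of_injOn (fun v => (a - e / v) / c)
    · intro v hv
      simp only [Finset.coe_filter, Set.mem_setOf_eq] at hv
      obtain ⟨hvV, hbe, h1, h2⟩ := hv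
      have hv0 := (hmem v hvV).1
      simp only [hT, hS, Finset.coe_erase, Finset.coe_filter, Set.mem_diff, Set.mem_setOf_eq,
        Finset.mem_univ, true_and, Set.mem_singleton_iff]
      refine ⟨⟨⟨h1, h2⟩, ?_⟩, ?_⟩
      · intro h0
        rw [div_left_inj' hc] at h0
        have : e / v = 0 := by linear_combination -h0
        exact (div_ne_zero he hv0) this
      · intro h0
        rw [div_eq_one_iff_eq hc] at h0
        have h3 : e / v = b := by linear_combination -hcab - h0
        rw [div_eq_iff hv0] at h3
        exact hbe h3.symm
    · intro v hv w hw hvw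
      simp only [Finset.coe_filter, Set.mem_setOf_eq] at hv hw
      have hv0 := (hmem v hv.1).1
      have hw0 := (hmem w hw.1).1
      simp only at hvw
      rw [div_left_inj' hc] at hvw
      have h3 : e / v = e / w := by linear_combination -hvw
      rw [div_eq_div_iff hv0 hw0] at h3
      exact (mul_left_cancel₀ he h3).symm
  have hcov : V.card ≤ T.card + T.card := by
    have hsub : V ⊆ (V.filter (fun v => (b * v ≠ E) ∧ ((a - E / v) / c ≠ 0 ∧ F ((a - E / v) / c) = 1))) ∪
      (V.filter (fun v => (b * v ≠ -E') ∧ ((a - (-E') / v) / c ≠ 0 ∧ F ((a - (-E') / v) / c) = 1))) := by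
      intro v hv
      obtain ⟨h0, h1, h2⟩ := hmem v hv
      rw [Finset.mem_union, Finset.mem_filter, Finset.mem_filter]
      rcases h v h0 h1 h2 with h3 | h3
      · left; exact ⟨hv, h1, h3⟩
      · right
        have e : a - (-E') / v = a + E' / v := by ring
        rw [e]; exact ⟨hv, h2, h3⟩
    calc V.card ≤ _ := Finset.card_le_card hsub
      _ ≤ _ := Finset.card_union_le _ _
      _ ≤ _ := Nat.add_le_add (hcnt E hE) (hcnt (-E') (neg_ne_zero.2 hE'))
  intro z hz
  by_contra hFz
  have hdis : Disjoint S (S.image (fun x => z * x)) := by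
    rw [Finset.disjoint_left]
    intro x hx hx'
    rw [Finset.mem_image] at hx'
    obtain ⟨y, hy, rfl⟩ := hx'
    simp only [hS, Finset.mem_filter, Finset.mem_univ, true_and] at hx hy
    rw [hF z y hz hy.1, hy.2, mul_one] at hx
    exact hFz hx.2
  have hsub : S ∪ S.image (fun x => z * x) ⊆ Finset.univ.erase 0 := by
    intro x hx
    rw [Finset.mem_union, Finset.mem_image] at hx
    simp only [Finset.mem_erase, Finset.mem_univ, and_true]
    rcases hx with hx | ⟨y, hy, rfl⟩
    · simp only [hS, Finset.mem_filter] at hx; exact hx.2.1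
    · simp only [hS, Finset.mem_filter] at hy; exact mul_ne_zero hz hy.2.1
  have h5 := Finset.card_le_card hsub
  rw [Finset.card_union_of_disjoint hdis, Finset.card_image_of_injective _ (mul_right_injective₀ hz),
    Finset.card_erase_of_mem (Finset.mem_univ _), Finset.card_univ, ZMod.card] at h5
  have := hpr.two_le
  omega

theorem natCast_ne_zero_of_lt (p : ℕ) (w : ℕ) (h1 : 0 < w) (h2 : w < p) : (w : ZMod p) ≠ 0 := by
  intro h3
  rw [ZMod.natCast_eq_zero_iff] at h3
  exact absurd (Nat.le_of_dvd h1 h3) (by omega)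

theorem natCast_ne_of_lt (p : ℕ) (w w' : ℕ) (h1 : w < w') (h2 : w' < p) :
    (w : ZMod p) ≠ (w' : ZMod p) := by
  intro h3
  rw [ZMod.natCast_eq_natCast_iff] at h3
  have := Nat.ModEq.eq_of_lt_of_lt h3 (by omega) h2
  omega

theorem main_two {Q : Type*} [CommGroup Q] (p : ℕ) [Fact p.Prime] (F : ZMod p → Q) (ω : Q)
    (hp : 4 < p)
    (hF : ∀ x y : ZMod p, x ≠ 0 → y ≠ 0 → F (x * y) = F x * F y)
    (hyp : ∀ n : ℕ, (((2 * n).choose (1 * n) : ℕ) : ZMod p) ≠ 0 →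
      F (((2 * n).choose (1 * n) : ℕ) : ZMod p) = ω ^ n)
    (hsm : ω = 1 ∨ 11 ≤ p) : ∀ x : ZMod p, x ≠ 0 → F x = 1 := by
  have hpr : p.Prime := Fact.out
  have nz := natCast_ne_zero_of_lt p
  have h2 : F ((2:ℕ) : ZMod p) = ω := by
    have := hyp 1 (by simpa using nz 2 (by omega) (by omega))
    simpa using this
  have hrel : ∀ m : ℕ, 2 * m + 2 < p →
      F ((2 * m + 1 : ℕ) : ZMod p) = F ((m + 1 : ℕ) : ZMod p) := by
    intro m hm
    have c1 := choose_ne_zero_of_lt p (2 * m) (1 * m) (by omega) (by omega)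
    have c2 := choose_ne_zero_of_lt p (2 * (m+1)) (1 * (m+1)) (by omega) (by omega)
    have e := Nat.succ_mul_centralBinom_succ m
    rw [Nat.centralBinom, Nat.centralBinom] at e
    have e' : ((m + 1 : ℕ) : ZMod p) * (((2 * (m+1)).choose (1 * (m+1)) : ℕ) : ZMod p)
        = (((2 : ℕ) : ZMod p) * ((2 * m + 1 : ℕ) : ZMod p)) * (((2 * m).choose (1 * m) : ℕ) : ZMod p) := by
      rw [one_mul, one_mul]
      exact_mod_cast congrArg (Nat.cast : ℕ → ZMod p) e
    have n2 := nz 2 (by omega) (by omega)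
    have n3 := nz (2 * m + 1) (by omega) (by omega)
    have n4 := nz (m + 1) (by omega) (by omega)
    have e3 := congrArg F e'
    rw [hF _ _ n4 c2, hF _ _ (mul_ne_zero n2 n3) c1, hF _ _ n2 n3, hyp m c1, hyp (m+1) c2, h2,
      pow_succ] at e3
    have e4 : F ((m + 1 : ℕ) : ZMod p) * (ω ^ m * ω) = F ((2 * m + 1 : ℕ) : ZMod p) * (ω ^ m * ω) := by
      rw [e3]; simp only [mul_comm, mul_left_comm, mul_assoc]
    exact (mul_right_cancel e4).symm
  have hF1 : F 1 = 1 := by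
    have := hF 1 1 one_ne_zero one_ne_zero
    rw [mul_one] at this
    exact (left_eq_mul.1 this)
  have hω : ω = 1 := by
    rcases hsm with h | h
    · exact h
    have r1 := hrel 1 (by omega)
    have r2 := hrel 2 (by omega)
    have r4 := hrel 4 (by omega)
    norm_num at r1 r2 r4 h2
    have n3 := nz 3 (by omega) (by omega)
    norm_num at n3
    have e : F 9 = F 3 * F 3 := by rw [← hF 3 3 n3 n3]; norm_num
    rw [r4, r2, r1, h2] at e
    exact (left_eq_mul.1 e)
  rw [hω] at h2
  have hall : ∀ n : ℕ, 0 < n → n < p → F (n : ZMod p) = 1 := by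
    intro n
    induction n using Nat.strong_induction_on with
    | _ n ih =>
      intro h0 hn
      rcases Nat.even_or_odd' n with ⟨m, hm | hm⟩
      · have := hF ((2:ℕ) : ZMod p) (m : ZMod p) (nz 2 (by omega) (by omega)) (nz m (by omega) (by omega))
        rw [h2, ih m (by omega) (by omega) (by omega), one_mul] at this
        rw [hm]; push_cast at this ⊢; exact this
      · by_cases hm0 : m = 0
        · subst hm0; rw [hm]; simpa using hF1
        have hodd : 2 * m + 2 < p := by
          rcases hpr.eq_two_or_odd with h | h <;> omega
        rw [hm, hrel m hodd, ih (m+1) (by omega) (by omega) (by omega)]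
  intro x hx
  have := hall x.val (Nat.pos_of_ne_zero (by rwa [Ne, ZMod.val_eq_zero])) (ZMod.val_lt x)
  rwa [ZMod.natCast_zmod_val] at this

theorem relZ {Q : Type*} [CommGroup Q] (p a b c : ℕ) [Fact p.Prime] (F : ZMod p → Q) (ω : Q)
    (hb : 0 < b) (hab : 2 * b ≤ a) (hco : Nat.Coprime a b) (hp : a + 2 * b < p)
    (hF : ∀ x y : ZMod p, x ≠ 0 → y ≠ 0 → F (x * y) = F x * F y) (hω : ω ^ (p - 1) = 1)
    (hyp : ∀ n : ℕ, (((a * n).choose (b * n) : ℕ) : ZMod p) ≠ 0 →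
      F (((a * n).choose (b * n) : ℕ) : ZMod p) = ω ^ n)
    (hcab : c + b = a) (E : ℕ) (hE1 : 1 ≤ E) (hE2 : E < c) (u v : ZMod p) (hv : v ≠ 0)
    (hlt : v.val < u.val) (huv : (a : ZMod p) * v = c * u + E) : F u = F v := by
  have h0 : 0 < v.val := Nat.pos_of_ne_zero (by rwa [Ne, ZMod.val_eq_zero])
  have := rel p a b F ω hb hab hco hp hF hω hyp E (by omega) (by omega) u.val v.val h0 hlt
    (ZMod.val_lt u) (by
      rw [← ZMod.intCast_zmod_eq_zero_iff_dvd]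
      subst hcab
      push_cast
      rw [ZMod.natCast_zmod_val, ZMod.natCast_zmod_val]
      push_cast at huv
      linear_combination huv)
  rwa [ZMod.natCast_zmod_val, ZMod.natCast_zmod_val] at this

theorem main_triv {Q : Type*} [CommGroup Q] (p a b : ℕ) [Fact p.Prime] (F : ZMod p → Q) (ω : Q)
    (hb : 0 < b) (hab : 2 * b ≤ a) (hco : Nat.Coprime a b) (hp : a + 2 * b < p)
    (hF : ∀ x y : ZMod p, x ≠ 0 → y ≠ 0 → F (x * y) = F x * F y)
    (hyp : ∀ n : ℕ, (((a * n).choose (b * n) : ℕ) : ZMod p) ≠ 0 →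
      F (((a * n).choose (b * n) : ℕ) : ZMod p) = ω ^ n)
    (hsm : a = 2 → ω = 1 ∨ 11 ≤ p) : ∀ x : ZMod p, x ≠ 0 → F x = 1 := by
  have hpr : p.Prime := Fact.out
  have nz := natCast_ne_zero_of_lt p
  have hF1 : F 1 = 1 := by
    have := hF 1 1 one_ne_zero one_ne_zero
    rw [mul_one] at this
    exact (left_eq_mul.1 this)
  have hFpow : ∀ x : ZMod p, x ≠ 0 → ∀ n : ℕ, F (x ^ n) = F x ^ n := by
    intro x hx n
    induction n with
    | zero => simpa using hF1
    | succ n ih => rw [pow_succ, hF _ _ (pow_ne_zero _ hx) hx, ih, pow_succ]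
  have hω : ω ^ (p - 1) = 1 := by
    have c1 := choose_ne_zero_of_lt p (a * 1) (b * 1) (by omega) (by omega)
    have := hyp 1 c1
    rw [pow_one] at this
    rw [← this, ← hFpow _ c1, ZMod.pow_card_sub_one_eq_one c1, hF1]
  by_cases ha2 : a = 2
  · have hb1 : b = 1 := by omega
    subst ha2 hb1
    exact main_two p F ω (by omega) hF hyp (hsm rfl)
  have hab' : 2 * b + 1 ≤ a := by
    by_contra hcon
    have : a = 2 * b := by omega
    rw [this] at hco
    have h1 : b ∣ 1 := by
      rw [← hco]; exact Nat.dvd_gcd (Dvd.intro_left 2 rfl) dvd_rfl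
    have := Nat.dvd_one.1 h1
    omega
  obtain ⟨c, hc⟩ : ∃ c, c + b = a := ⟨a - b, by omega⟩
  have hc2 : 2 ≤ c := by omega
  have na : (a : ZMod p) ≠ 0 := nz a (by omega) (by omega)
  have nc : (c : ZMod p) ≠ 0 := nz c (by omega) (by omega)
  have nb : (b : ZMod p) ≠ 0 := nz b (by omega) (by omega)
  have hcz : (c : ZMod p) + b = a := by exact_mod_cast congrArg (Nat.cast : ℕ → ZMod p) hc
  have R := relZ p a b c F ω hb hab hco hp hF hω hyp hc
  have hm1 : F (-1) * F (-1) = 1 := by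
    rw [← hF _ _ (by simp) (by simp)]; simpa using hF1
  have fact1 : ∀ j : ℕ, 1 ≤ j → j < c → F (j : ZMod p) = F (a : ZMod p) := by
    intro j h1 h2
    have nj := nz j (by omega) (by omega)
    have nv : -(j : ZMod p) / a ≠ 0 := div_ne_zero (neg_ne_zero.2 nj) na
    have hval : (-1 : ZMod p).val = p - 1 := by
      obtain ⟨q, rfl⟩ : ∃ q, p = q + 1 := ⟨p - 1, by omega⟩
      simpa using ZMod.val_neg_one q
    have hne : -(j : ZMod p) / a ≠ -1 := by
      rw [Ne, div_eq_iff na]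
      intro h3
      exact natCast_ne_of_lt p j a (by omega) (by omega) (by linear_combination -h3)
    have hlt : (-(j : ZMod p) / a).val < (-1 : ZMod p).val := by
      have l1 := ZMod.val_lt (-(j : ZMod p) / (a : ZMod p))
      have l2 : (-(j : ZMod p) / a).val ≠ (-1 : ZMod p).val :=
        fun h => hne (ZMod.val_injective p h)
      omega
    have := R (c - j) (by omega) (by omega) (-1) (-(j : ZMod p) / a) nv hlt (by
      rw [Nat.cast_sub h2.le, mul_div_cancel₀ _ na]; ring)
    have e : (j : ZMod p) = (a : ZMod p) * ((-(j : ZMod p) / (a : ZMod p)) * (-1)) := by field_simp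
    rw [e, hF _ _ na (mul_ne_zero nv (by simp)), hF _ _ nv (by simp), ← this, hm1, mul_one]
  have hFa : F (a : ZMod p) = 1 := by
    rw [← fact1 1 le_rfl (by omega)]; simpa using hF1
  have fact1' : ∀ j : ℕ, 1 ≤ j → j < c → F (j : ZMod p) = 1 := fun j h1 h2 => by
    rw [fact1 j h1 h2, hFa]
  have fact2 : ∀ j : ℕ, b < j → j < a → F (j : ZMod p) = F (c : ZMod p) := by
    intro j h1 h2
    by_cases hjc : j = c
    · rw [hjc]
    have nj := nz j (by omega) (by omega)
    have nu : (j : ZMod p) / c ≠ 0 := div_ne_zero nj nc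
    have hne : (j : ZMod p) / c ≠ 1 := by
      rw [Ne, div_eq_one_iff_eq nc]
      rcases Nat.lt_or_gt_of_ne hjc with h | h
      · exact natCast_ne_of_lt p j c h (by omega)
      · exact (natCast_ne_of_lt p c j h (by omega)).symm
    have : Fact (1 < p) := ⟨hpr.one_lt⟩
    have hlt : (1 : ZMod p).val < ((j : ZMod p) / c).val := by
      have l0 : ((j : ZMod p) / c).val ≠ 0 := by rwa [Ne, ZMod.val_eq_zero]
      have l2 : ((j : ZMod p) / c).val ≠ (1 : ZMod p).val :=
        fun h => hne (ZMod.val_injective p h)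
      rw [ZMod.val_one] at l2 ⊢
      omega
    have := R (a - j) (by omega) (by omega) ((j : ZMod p) / c) 1 one_ne_zero hlt (by
      rw [Nat.cast_sub h2.le, mul_div_cancel₀ _ nc]; ring)
    rw [hF1] at this
    have e : (j : ZMod p) = c * ((j : ZMod p) / c) := by field_simp
    rw [e, hF _ _ nc nu, this, mul_one]
  have hFc : F (c : ZMod p) = 1 := by
    by_cases h2 : 2 * b + 2 ≤ a
    · rw [← fact2 (c - 1) (by omega) (by omega)]
      exact fact1' (c - 1) (by omega) (by omega)
    by_cases hb2 : 2 ≤ b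
    · rw [← fact2 (2 * b) (by omega) (by omega)]
      have n2 := nz 2 (by omega) (by omega)
      have := hF ((2 : ℕ) : ZMod p) (b : ZMod p) n2 nb
      rw [fact1' 2 (by omega) (by omega), fact1' b (by omega) (by omega), mul_one] at this
      rw [← this]; push_cast; rfl
    have hb1 : b = 1 := by omega
    have ha3 : a = 3 := by omega
    have hc3 : c = 2 := by omega
    subst hb1 ha3 hc3
    have n2 := nz 2 (by omega) (by omega)
    by_cases hp11 : 11 ≤ p
    · have r1 := R 1 le_rfl (by omega) ((7 : ℕ) : ZMod p) ((5 : ℕ) : ZMod p)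
        (nz 5 (by omega) (by omega))
        (by rw [ZMod.val_natCast_of_lt (by omega), ZMod.val_natCast_of_lt (by omega)]; omega)
        (by push_cast; norm_num)
      have r2 := R 1 le_rfl (by omega) ((10 : ℕ) : ZMod p) ((7 : ℕ) : ZMod p)
        (nz 7 (by omega) (by omega))
        (by rw [ZMod.val_natCast_of_lt (by omega), ZMod.val_natCast_of_lt (by omega)]; omega)
        (by push_cast; norm_num)
      have r3 := hF ((2 : ℕ) : ZMod p) ((5 : ℕ) : ZMod p) n2 (nz 5 (by omega) (by omega))
      have e : ((2 : ℕ) : ZMod p) * ((5 : ℕ) : ZMod p) = ((10 : ℕ) : ZMod p) := by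
        push_cast; norm_num
      rw [e, r2, r1] at r3
      exact right_eq_mul.1 r3
    · have hp7 : p = 7 := by
        have h6 : p ≠ 6 := by rintro rfl; revert hpr; norm_num
        have h8 : p ≠ 8 := by rintro rfl; revert hpr; norm_num
        have h9 : p ≠ 9 := by rintro rfl; revert hpr; norm_num
        have h10 : p ≠ 10 := by rintro rfl; revert hpr; norm_num
        omega
      subst hp7
      have r1 := R 1 le_rfl (by omega) ((4 : ℕ) : ZMod 7) ((3 : ℕ) : ZMod 7)
        (nz 3 (by omega) (by omega))
        (by rw [ZMod.val_natCast_of_lt (by omega), ZMod.val_natCast_of_lt (by omega)]; omega)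
        (by push_cast; norm_num)
      have n4 := nz 4 (by omega) (by omega)
      have r3 := hF ((4 : ℕ) : ZMod 7) ((4 : ℕ) : ZMod 7) n4 n4
      rw [r1, hFa, mul_one] at r3
      have e : ((4 : ℕ) : ZMod 7) * ((4 : ℕ) : ZMod 7) = ((2 : ℕ) : ZMod 7) := by
        rw [← Nat.cast_mul, ZMod.natCast_eq_natCast_iff]; decide
      rwa [e] at r3
  have nE' := nz (c - 1) (by omega) (by omega)
  have hE' : ((c - 1 : ℕ) : ZMod p) = c - 1 := by rw [Nat.cast_sub (by omega), Nat.cast_one]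
  refine count_trivial p F hF (a : ZMod p) b c 1 ((c - 1 : ℕ) : ZMod p) nc nb na one_ne_zero nE'
    hcz hFa hFc ?_
  intro v hv h1 h2
  obtain ⟨u, hu⟩ : ∃ u : ZMod p, u = (a * v - 1) / c := ⟨_, rfl⟩
  have hcu : (c : ZMod p) * u = a * v - 1 := by rw [hu, mul_div_cancel₀ _ nc]
  have huv : u ≠ v := by
    intro h; apply h1; rw [h] at hcu; linear_combination -hcu + v * hcz
  have huv1 : u + 1 ≠ v := by
    intro h; apply h2; rw [hE', ← h]
    rw [← h] at hcu; linear_combination -hcu + (u + 1) * hcz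
  rcases lt_or_ge v.val u.val with hlt | hge
  · left
    have nu : u ≠ 0 := by
      intro h; rw [h, ZMod.val_zero] at hlt; omega
    have e : (a - 1 / v) / c = u / v := by
      rw [hu]; field_simp
    have hFu := R 1 le_rfl (by omega) u v hv hlt (by rw [hcu]; push_cast; ring)
    rw [e]
    refine ⟨div_ne_zero nu hv, ?_⟩
    have := hF (u / v) v (div_ne_zero nu hv) hv
    rw [div_mul_cancel₀ _ hv, hFu] at this
    exact right_eq_mul.1 this
  · right
    have hne : u.val ≠ v.val := fun h => huv (ZMod.val_injective p h)
    have hne1 : u.val + 1 ≠ v.val := by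
      intro h
      apply huv1
      have := congrArg (Nat.cast : ℕ → ZMod p) h
      push_cast at this
      rwa [ZMod.natCast_zmod_val, ZMod.natCast_zmod_val] at this
    have lv := ZMod.val_lt v
    have c1 : ((p - 1 - u.val : ℕ) : ZMod p) = -1 - u := by
      rw [Nat.sub_sub, Nat.cast_sub (by omega)]
      push_cast
      rw [CharP.cast_eq_zero, ZMod.natCast_zmod_val]; ring
    have c2 : ((p - v.val : ℕ) : ZMod p) = -v := by
      rw [Nat.cast_sub (by omega), CharP.cast_eq_zero, ZMod.natCast_zmod_val]; ring
    have nu : -1 - u ≠ 0 := by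
      rw [← c1]; exact nz _ (by omega) (by omega)
    have hlt : (-v).val < (-1 - u).val := by
      rw [← c1, ← c2, ZMod.val_natCast_of_lt (by omega), ZMod.val_natCast_of_lt (by omega)]
      omega
    have hv' : -v ≠ 0 := neg_ne_zero.2 hv
    have hFu := R (c - 1) (by omega) (by omega) (-1 - u) (-v) hv' hlt (by
      rw [hE']; linear_combination hcu)
    have e : (a + ((c - 1 : ℕ) : ZMod p) / v) / c = (-1 - u) / (-v) := by
      rw [hE']
      field_simp
      linear_combination -hcu
    rw [e]
    refine ⟨div_ne_zero nu hv', ?_⟩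
    have := hF ((-1 - u) / (-v)) (-v) (div_ne_zero nu hv') hv'
    rw [div_mul_cancel₀ _ hv', hFu] at this
    exact right_eq_mul.1 this

theorem combine (p A B d : ℕ) [Fact p.Prime] (hBA : B ≤ A) (hd : 0 < d) (hdp : d < p)
    (n₁ n₂ : ℕ) : ∃ n : ℕ, (((A * n).choose (B * n) : ℕ) : ZMod p)
      = (((A * n₁).choose (B * n₁) : ℕ) : ZMod p) * (((A * n₂).choose (B * n₂) : ℕ) : ZMod p)
      ∧ (n : ZMod d) = n₁ + n₂ := by
  have hpr : p.Prime := Fact.out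
  have hco : Nat.Coprime p d := (Nat.Prime.coprime_iff_not_dvd hpr).2
    (fun h => absurd (Nat.le_of_dvd hd h) (by omega))
  obtain ⟨K, hK⟩ : ∃ K, K = d.totient * (A * n₁ + 1) := ⟨_, rfl⟩
  have hKlt : A * n₁ < p ^ K := by
    have h1 : K < p ^ K := Nat.lt_pow_self hpr.one_lt
    have h2 : 1 * (A * n₁ + 1) ≤ K := by
      rw [hK]; exact Nat.mul_le_mul_right _ (Nat.totient_pos.2 hd)
    omega
  have h1 : ((p ^ K : ℕ) : ZMod d) = 1 := by
    have h2 : ((p ^ d.totient : ℕ) : ZMod d) = ((1 : ℕ) : ZMod d) :=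
      (ZMod.natCast_eq_natCast_iff _ _ _).2 (Nat.ModEq.pow_totient hco)
    rw [hK, pow_mul]
    push_cast at h2 ⊢
    rw [h2, one_pow]
  refine ⟨n₁ + p ^ K * n₂, ?_, ?_⟩
  · have e1 : A * (n₁ + p ^ K * n₂) = A * n₁ + p ^ K * (A * n₂) := by ring
    have e2 : B * (n₁ + p ^ K * n₂) = B * n₁ + p ^ K * (B * n₂) := by ring
    rw [e1, e2]
    exact lucas_block p K _ _ _ _ hKlt (lt_of_le_of_lt (Nat.mul_le_mul_right _ hBA) hKlt)
  · rw [Nat.cast_add, Nat.cast_mul, h1, one_mul]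

theorem group_step (p A B d : ℕ) [Fact p.Prime] (hB : 0 < B) (hAB : 2 * B ≤ A)
    (hco : Nat.Coprime A B) (hd : 0 < d) (hp : d * (A + 2 * B) < p) (v : ZMod p) (hv : v ≠ 0) :
    ∃ n : ℕ, d ∣ n ∧ (((A * n).choose (B * n) : ℕ) : ZMod p) = v := by
  classical
  have hpr : p.Prime := Fact.out
  have hd1 : 1 * (A + 2 * B) ≤ d * (A + 2 * B) := Nat.mul_le_mul_right _ hd
  have hd2 : d * 4 ≤ d * (A + 2 * B) := Nat.mul_le_mul_left _ (by omega)
  have : NeZero d := ⟨hd.ne'⟩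
  let S : Submonoid ((ZMod p)ˣ × Multiplicative (ZMod d)) :=
    { carrier := {g | ∃ n : ℕ, (((A * n).choose (B * n) : ℕ) : ZMod p) = (g.1 : ZMod p) ∧
        (n : ZMod d) = Multiplicative.toAdd g.2}
      one_mem' := ⟨0, by simp, by simp⟩
      mul_mem' := by
        rintro g h ⟨n₁, h1, h2⟩ ⟨n₂, h3, h4⟩
        obtain ⟨n, h5, h6⟩ := combine p A B d (by omega) hd (by omega) n₁ n₂
        refine ⟨n, ?_, ?_⟩
        · rw [h5, h1, h3]; simp
        · rw [h6, h2, h4]; simp }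
  let Γ : Subgroup ((ZMod p)ˣ × Multiplicative (ZMod d)) :=
    { S with
      inv_mem' := by
        intro x hx
        have hx' : x ∈ S := hx
        have h1 : x⁻¹ = x ^ (orderOf x - 1) := by
          apply inv_eq_of_mul_eq_one_right
          rw [← pow_succ', Nat.sub_add_cancel (orderOf_pos x), pow_orderOf_eq_one]
        have h2 : x⁻¹ ∈ S := by rw [h1]; exact S.pow_mem hx' _
        exact h2 }
  have hmem : ∀ g, g ∈ Γ ↔ ∃ n : ℕ, (((A * n).choose (B * n) : ℕ) : ZMod p) = (g.1 : ZMod p) ∧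
        (n : ZMod d) = Multiplicative.toAdd g.2 := fun g => Iff.rfl
  let π := QuotientGroup.mk' Γ
  let F : ZMod p → ((ZMod p)ˣ × Multiplicative (ZMod d)) ⧸ Γ := fun x =>
    if hx : x = 0 then 1 else π (Units.mk0 x hx, 1)
  have hFx : ∀ x (hx : x ≠ 0), F x = π (Units.mk0 x hx, 1) := fun x hx => dif_neg hx
  let ω : ((ZMod p)ˣ × Multiplicative (ZMod d)) ⧸ Γ := π (1, Multiplicative.ofAdd (-1))
  have key := main_triv p A B F ω hB hAB hco (by omega) (by
      intro x y hx hy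
      rw [hFx x hx, hFx y hy, hFx (x * y) (mul_ne_zero hx hy), ← map_mul]
      congr 1
      ext <;> simp) (by
      intro n hn
      rw [hFx _ hn, ← map_pow]
      apply (QuotientGroup.mk'_eq_mk' Γ).2
      refine ⟨(Units.mk0 _ hn, Multiplicative.ofAdd (n : ZMod d))⁻¹, ?_, ?_⟩
      · exact Γ.inv_mem ((hmem _).2 ⟨n, by simp, by simp⟩)
      · ext
        · simp
        · simp [← ofAdd_neg, ← ofAdd_nsmul]) (by
      intro hA
      by_cases h11 : 11 ≤ p
      · exact Or.inr h11
      left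
      have hB1 : B = 1 := by omega
      subst hA hB1
      have hd1 : d = 1 := by
        by_contra hne
        have h9 : p ≠ 9 := by rintro rfl; revert hpr; norm_num
        have h10 : p ≠ 10 := by rintro rfl; revert hpr; norm_num
        omega
      subst hd1
      have : (Multiplicative.ofAdd (-1 : ZMod 1)) = 1 := Subsingleton.elim _ _
      change π (1, Multiplicative.ofAdd (-1 : ZMod 1)) = 1
      rw [this]; exact map_one π)
  have h1 := key v hv
  rw [hFx v hv] at h1
  have h2 : (Units.mk0 v hv, (1 : Multiplicative (ZMod d))) ∈ Γ := (QuotientGroup.eq_one_iff _).1 h1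
  obtain ⟨n, h3, h4⟩ := (hmem _).1 h2
  refine ⟨n, ?_, by simpa using h3⟩
  rw [← ZMod.natCast_eq_zero_iff]; simpa using h4

theorem value_step (p a b : ℕ) [Fact p.Prime] (hb : 0 < b) (hab : 2 * b ≤ a)
    (hp : a + 2 * b < p) (v : ZMod p) : ∃ m : ℕ, (((a * m).choose (b * m) : ℕ) : ZMod p) = v := by
  by_cases hv : v = 0
  · refine ⟨p - 1, ?_⟩
    have e : ∀ w : ℕ, 0 < w → w < p → w * (p - 1) = (p - w) + p ^ 1 * (w - 1) := by
      intro w h1 h2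
      obtain ⟨x, rfl⟩ : ∃ x, w = x + 1 := ⟨w - 1, by omega⟩
      obtain ⟨y, rfl⟩ : ∃ y, p = y + x + 2 := ⟨p - x - 2, by omega⟩
      have e1 : y + x + 2 - 1 = y + x + 1 := by omega
      have e2 : y + x + 2 - (x + 1) = y + 1 := by omega
      rw [e1, e2, Nat.add_sub_cancel]; ring
    rw [e a (by omega) (by omega), e b hb (by omega),
      lucas_block p 1 _ _ _ _ (by rw [pow_one]; omega) (by rw [pow_one]; omega),
      Nat.choose_eq_zero_of_lt (by omega), hv]
    simp
  · obtain ⟨d, A, B, hd, hco, hA, hB⟩ : ∃ d A B : ℕ, 0 < d ∧ Nat.Coprime A B ∧ a = A * d ∧ b = B * d := by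
      obtain ⟨g, A, B, h1, h2, h3, h4⟩ := Nat.exists_coprime' (m := a) (n := b) (Nat.gcd_pos_of_pos_right _ hb)
      exact ⟨g, A, B, h1, h2, h3, h4⟩
    subst hA hB
    have hB0 : 0 < B := Nat.pos_of_mul_pos_right hb
    have hAB : 2 * B ≤ A := by
      apply Nat.le_of_mul_le_mul_right _ hd
      linarith
    obtain ⟨n, ⟨m, rfl⟩, h⟩ := group_step p A B d hB0 hAB hco hd (by linarith) v hv
    refine ⟨m, ?_⟩
    rw [mul_assoc, mul_assoc]; exact h

theorem start_step (p a b : ℕ) [Fact p.Prime] (hb : 0 < b) (hab : 2 * b ≤ a)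
    (hp : a + 2 * b < p) (α β : ℤ) (N : ℕ) : ∃ n : ℕ, N ≤ n ∧ 0 < n ∧
      0 ≤ (a : ℤ) * n + α ∧ 0 ≤ (b : ℤ) * n + β ∧
      ((Nat.choose ((a : ℤ) * n + α).toNat ((b : ℤ) * n + β).toNat : ℕ) : ZMod p) ≠ 0 := by
  have hpr : p.Prime := Fact.out
  have hco : Nat.Coprime p b := (Nat.Prime.coprime_iff_not_dvd hpr).2
    (fun h => absurd (Nat.le_of_dvd hb h) (by omega))
  obtain ⟨W, hW⟩ : ∃ W : ℕ, W = b * (N + 1) + β.natAbs + ((b : ℤ) * α - a * β).natAbs := ⟨_, rfl⟩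
  obtain ⟨k, hk⟩ : ∃ k, k = b.totient * W := ⟨_, rfl⟩
  have hWk : W < p ^ k := by
    have h1 : k < p ^ k := Nat.lt_pow_self hpr.one_lt
    have h2 : 1 * W ≤ k := by
      rw [hk]; exact Nat.mul_le_mul_right _ (Nat.totient_pos.2 hb)
    omega
  have hdvd : (b : ℤ) ∣ (p ^ k : ℕ) - 1 := by
    have h2 : p ^ k ≡ 1 [MOD b] := by
      have := (Nat.ModEq.pow_totient hco).pow W
      rwa [← pow_mul, ← hk, one_pow] at this
    have := (Nat.modEq_iff_dvd.1 h2.symm)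
    simpa using this
  obtain ⟨P, hP⟩ : ∃ P : ℕ, P = p ^ k := ⟨_, rfl⟩
  have hWP : (W : ℤ) < P := by rw [hP]; exact_mod_cast hWk
  rw [← hP] at hdvd
  have hbz : (0 : ℤ) < b := by exact_mod_cast hb
  obtain ⟨v, hv1, hvb, hvd⟩ : ∃ v : ℕ, 1 ≤ v ∧ v ≤ b ∧ (b : ℤ) ∣ v - β := by
    have h1 := Int.emod_nonneg (β - 1) hbz.ne'
    have h2 := Int.emod_lt_of_pos (β - 1) hbz
    have h3 := Int.mul_ediv_add_emod (β - 1) b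
    refine ⟨((β - 1) % b).toNat + 1, by omega, by omega, ?_⟩
    push_cast
    rw [Int.toNat_of_nonneg h1]
    refine ⟨-((β - 1) / b), ?_⟩
    linarith
  obtain ⟨n, hn⟩ : (b : ℤ) ∣ P * v - β := by
    have : (P : ℤ) * v - β = (P - 1) * v + (v - β) := by ring
    rw [this]
    exact dvd_add (Dvd.dvd.mul_right hdvd _) hvd
  have hβ : |β| = β.natAbs := Int.abs_eq_natAbs β
  have hD : |(b : ℤ) * α - a * β| = ((b : ℤ) * α - a * β).natAbs := Int.abs_eq_natAbs _
  obtain ⟨D, hDdef⟩ : ∃ D : ℤ, D = (b : ℤ) * α - a * β := ⟨_, rfl⟩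
  rw [← hDdef] at hD hW
  have hWz : (W : ℤ) = b * (N + 1) + |β| + |D| := by
    rw [hβ, hD, hW]; push_cast; ring
  have hv1z : (1 : ℤ) ≤ v := by exact_mod_cast hv1
  have hvbz : (v : ℤ) ≤ b := by exact_mod_cast hvb
  have habz : 2 * (b : ℤ) ≤ a := by exact_mod_cast hab
  have hpz : (a : ℤ) + 2 * b < p := by exact_mod_cast hp
  have hD1 := neg_abs_le D
  have hD2 := le_abs_self D
  have hβ2 := le_abs_self β
  have hβ0 := abs_nonneg β
  have hD0 := abs_nonneg D
  have hbN : 0 ≤ (b : ℤ) * (N + 1) := by positivity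
  have hPY : (P : ℤ) ≤ P * v := by nlinarith
  have hYP : (P : ℤ) * v ≤ b * P := by nlinarith
  obtain ⟨Y, hY⟩ : ∃ Y : ℤ, Y = (P : ℤ) * v := ⟨_, rfl⟩
  rw [← hY] at hn hPY hYP
  have hnN : (N : ℤ) + 1 ≤ n := by
    have : (b : ℤ) * (N + 1) ≤ b * n := by linarith
    exact le_of_mul_le_mul_left this hbz
  obtain ⟨n0, rfl⟩ : ∃ n0 : ℕ, n = n0 := ⟨n.toNat, by omega⟩
  obtain ⟨X, hX⟩ : ∃ X : ℤ, X = (a : ℤ) * n0 + α := ⟨_, rfl⟩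
  have hbX : (b : ℤ) * X = a * Y + D := by
    rw [hX, hDdef]; linear_combination (-(a : ℤ)) * hn
  have hXY : Y ≤ X := by
    have : (b : ℤ) * Y ≤ b * X := by nlinarith
    exact le_of_mul_le_mul_left this hbz
  have hXp : X < p * P := by
    have : (b : ℤ) * X < b * (p * P) := by
      have h1 : (a : ℤ) * Y ≤ a * (b * P) := by
        apply mul_le_mul_of_nonneg_left hYP; omega
      have h2 : D < P := by linarith
      have h3 : (P : ℤ) ≤ b * P := by linarith
      have h4 : (b : ℤ) * P * (a + 1) ≤ b * P * p := by
        apply mul_le_mul_of_nonneg_left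
        · omega
        · linarith
      linarith
    exact lt_of_mul_lt_mul_left this hbz.le
  have hbn : (b : ℤ) * n0 + β = Y := by linarith
  refine ⟨n0, by omega, by omega, by omega, by omega, ?_⟩
  rw [hbn, ← hX]
  have hPpos : 0 < P := by omega
  obtain ⟨x, hx⟩ : ∃ x : ℕ, X = x := ⟨X.toNat, by omega⟩
  rw [hx] at hXY hXp ⊢
  have hYn : Y.toNat = 0 + p ^ k * v := by
    rw [hY, ← hP, zero_add]; exact_mod_cast Int.toNat_natCast (P * v)
  have hxv : P * v ≤ x := by rw [hY] at hXY; exact_mod_cast hXY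
  have hxp : x < p * P := by exact_mod_cast hXp
  rw [hYn, Int.toNat_natCast]
  have hxe : x = x % P + p ^ k * (x / P) := by rw [← hP, Nat.mod_add_div]
  rw [hxe, lucas_block p k _ _ _ _ (by rw [← hP]; exact Nat.mod_lt _ hPpos)
    (by rw [← hP]; exact hPpos), Nat.choose_zero_right, Nat.cast_one, one_mul]
  apply choose_ne_zero_of_lt
  · rw [Nat.le_div_iff_mul_le hPpos, mul_comm]; exact hxv
  · rw [Nat.div_lt_iff_lt_mul hPpos]; exact hxp

theorem core (p a b : ℕ) [Fact p.Prime] (hb : 0 < b) (hab : 2 * b ≤ a)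
    (hp : a + 2 * b < p) (α β : ℤ) (r N : ℕ) : ∃ n : ℕ, N ≤ n ∧ 0 < n ∧
      0 ≤ (a : ℤ) * n + α ∧ 0 ≤ (b : ℤ) * n + β ∧
      Nat.choose ((a : ℤ) * n + α).toNat ((b : ℤ) * n + β).toNat ≡ r [MOD p] := by
  have hpr : p.Prime := Fact.out
  obtain ⟨n, h1, h2, h3, h4, h5⟩ := start_step p a b hb hab hp α β N
  obtain ⟨x, hx⟩ : ∃ x : ℕ, (a : ℤ) * n + α = x := ⟨_, (Int.toNat_of_nonneg h3).symm⟩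
  obtain ⟨y, hy⟩ : ∃ y : ℕ, (b : ℤ) * n + β = y := ⟨_, (Int.toNat_of_nonneg h4).symm⟩
  rw [hx, hy, Int.toNat_natCast, Int.toNat_natCast] at h5
  obtain ⟨m, hm⟩ := value_step p a b hb hab hp ((r : ZMod p) / ((x.choose y : ℕ) : ZMod p))
  have hK : x + y < p ^ (x + y) := Nat.lt_pow_self hpr.one_lt
  have e1 : (a : ℤ) * ((n + p ^ (x + y) * m : ℕ) : ℤ) + α = ((x + p ^ (x + y) * (a * m) : ℕ) : ℤ) := by
    push_cast; linear_combination hx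
  have e2 : (b : ℤ) * ((n + p ^ (x + y) * m : ℕ) : ℤ) + β = ((y + p ^ (x + y) * (b * m) : ℕ) : ℤ) := by
    push_cast; linear_combination hy
  refine ⟨n + p ^ (x + y) * m, by omega, by omega, ?_, ?_, ?_⟩
  · rw [e1]; exact Int.natCast_nonneg _
  · rw [e2]; exact Int.natCast_nonneg _
  · rw [e1, e2, Int.toNat_natCast, Int.toNat_natCast, ← ZMod.natCast_eq_natCast_iff,
      lucas_block p _ _ _ _ _ (by omega) (by omega), hm, mul_div_cancel₀ _ h5]

/-- Theorem 4.2(i): let `a > b` be positive integers, `α, β` integers,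
`d = gcd(a,b)`, `c = a/d`, `p` a prime with `p > a + 2b`, and `e = gcd(p-1, a)`.
If `e < c` or `ν₂(a) ≤ ν₂(p-1)`, then for every `r` with `0 ≤ r ≤ p-1` there are
infinitely many positive integers `n` (with `a*n+α ≥ 0` and `b*n+β ≥ 0`) such that
`C(a*n+α, b*n+β) ≡ r (mod p)`. -/
theorem stmt_13 (a b : ℕ) (hb : 0 < b) (hab : b < a) (α β : ℤ)
    (d c : ℕ) (hd : d = Nat.gcd a b) (hc : c = a / d)
    (p : ℕ) (hp : p.Prime) (hpab : a + 2 * b < p)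
    (e : ℕ) (he : e = Nat.gcd (p - 1) a)
    (h : e < c ∨ padicValNat 2 a ≤ padicValNat 2 (p - 1)) :
    ∀ r : ℕ, r ≤ p - 1 → ∀ N : ℕ, ∃ n : ℕ, N ≤ n ∧ 0 < n ∧
      0 ≤ (a : ℤ) * n + α ∧ 0 ≤ (b : ℤ) * n + β ∧
      Nat.choose ((a : ℤ) * n + α).toNat ((b : ℤ) * n + β).toNat ≡ r [MOD p] := by
  intro r _ N
  have : Fact p.Prime := ⟨hp⟩
  by_cases h2 : 2 * b ≤ a
  · exact core p a b hb h2 hpab α β r N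
  · obtain ⟨b₁, hb₁⟩ : ∃ b₁, a = b + b₁ := ⟨a - b, by omega⟩
    obtain ⟨n, h3, h4, h5, h6, h7⟩ := core p a b₁ (by omega) (by omega) (by omega) α (α - β) r
      (N + β.natAbs)
    have hβ : 0 ≤ (b : ℤ) * n + β := by
      have e1 : (1 : ℤ) * n ≤ b * n := by
        apply mul_le_mul_of_nonneg_right <;> omega
      omega
    refine ⟨n, by omega, h4, h5, hβ, ?_⟩
    have e : (a : ℤ) * n + α = (b * n + β) + (b₁ * n + (α - β)) := by
      rw [hb₁]; push_cast; ring
    have e2 : ((a : ℤ) * n + α).toNat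
        = ((b : ℤ) * n + β).toNat + ((b₁ : ℤ) * n + (α - β)).toNat := by
      rw [e, Int.toNat_add hβ h6]
    rw [Nat.choose_symm_of_eq_add e2]
    exact h7
end

section
/- Let a > b be positive integers, let α and β be integers, let d = gcd(a,b), c = a/d, and let p be a prime with p > a + 2b, and set e = gcd(p−1, a). Suppose e ≥ c and ν₂(a) > ν₂(p−1). Then for every integer r with 0 ≤ r ≤ p−1 such that r is not congruent modulo p to any number of the form (2μ−1)e + p + α − 2 + r′ with integers r′, μ satisfying 0 ≤ r′ ≤ e−c and ⌈(e+2−p−α)/(2e)⌉ ≤ μ ≤ ⌈(c+1−α)/(2e)⌉, there exist infinitely many positive integers n (with an+α ≥ 0 and bn+β ≥ 0) such that C(an+α, bn+β) ≡ r (mod p). -/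
lemma lucas_pow {p : ℕ} (hp : p.Prime) : ∀ (k x s x' s' : ℕ), x < p ^ k → s < p ^ k →
    (((x + p ^ k * x').choose (s + p ^ k * s') : ℕ) : ZMod p)
      = ((x.choose s : ℕ) : ZMod p) * ((x'.choose s' : ℕ) : ZMod p) := by
  have := Fact.mk hp
  have key : ∀ n m : ℕ, ((n.choose m : ℕ) : ZMod p)
      = (((n % p).choose (m % p) : ℕ) : ZMod p) * (((n / p).choose (m / p) : ℕ) : ZMod p) := by
    intro n m
    have := (ZMod.natCast_eq_natCast_iff _ _ _).2
      (Choose.choose_modEq_choose_mod_mul_choose_div_nat (n := n) (k := m) (p := p))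
    rw [this]; push_cast; rfl
  intro k
  induction k with
  | zero => intro x s x' s' hx hs; simp at hx hs; subst hx hs; simp
  | succ k ih =>
    intro x s x' s' hx hs
    have hp0 := hp.pos
    have e1 : ∀ y y' : ℕ, (y + p ^ (k + 1) * y') % p = y % p := by
      intro y y'
      rw [pow_succ', mul_assoc, Nat.add_mul_mod_self_left]
    have e2 : ∀ y y' : ℕ, (y + p ^ (k + 1) * y') / p = y / p + p ^ k * y' := by
      intro y y'
      rw [pow_succ', mul_assoc, Nat.add_mul_div_left _ _ hp0]
    rw [key, e1, e1, e2, e2, ih, ← mul_assoc, ← key]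
    · rw [Nat.div_lt_iff_lt_mul hp0, ← pow_succ]; exact hx
    · rw [Nat.div_lt_iff_lt_mul hp0, ← pow_succ]; exact hs

lemma choose_pow_sub_one {p : ℕ} (hp : p.Prime) (k : ℕ) (s : ℕ) (hs : s < p ^ k) :
    (((p ^ k - 1).choose s : ℕ) : ZMod p) ≠ 0 := by
  have := Fact.mk hp
  have : (((p ^ k - 1).choose s : ℕ) : ZMod p) = (-1) ^ s := by
    induction s with
    | zero => simp
    | succ s ih =>
      have h1 : ((p ^ k).choose (s + 1) : ℕ) = (p ^ k - 1).choose s + (p ^ k - 1).choose (s + 1) := by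
        have : p ^ k = (p ^ k - 1) + 1 := by omega
        conv_lhs => rw [this]
        rw [Nat.choose_succ_succ]
      have h2 : (((p ^ k).choose (s + 1) : ℕ) : ZMod p) = 0 := by
        rw [ZMod.natCast_eq_zero_iff]
        exact hp.dvd_choose_pow (by omega) (by omega)
      rw [h1] at h2
      push_cast at h2
      rw [ih (by omega)] at h2
      rw [pow_succ]
      linear_combination h2
  rw [this]
  exact pow_ne_zero _ (by simp)

lemma choose_ne_zero_small {p : ℕ} (hp : p.Prime) (x s : ℕ) (hx : x < p) (hs : s ≤ x) :
    ((x.choose s : ℕ) : ZMod p) ≠ 0 := by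
  rw [Ne, ZMod.natCast_eq_zero_iff]
  intro h
  have h1 : p ∣ x.factorial := by
    rw [← Nat.choose_mul_factorial_mul_factorial hs]
    exact Dvd.dvd.mul_right (Dvd.dvd.mul_right h _) _
  rw [hp.dvd_factorial] at h1
  omega

/-- Paths in the automaton reading base `p` digits of `n`. -/
def EE (p a b : ℕ) (N : ℕ) (α β α' β' : ℤ) (v : ZMod p) : Prop :=
  ∃ k J x s : ℕ, N ≤ J ∧ x < p ^ k ∧ s < p ^ k ∧ (a : ℤ) * J + α = (p : ℤ) ^ k * α' + x ∧
    (b : ℤ) * J + β = (p : ℤ) ^ k * β' + s ∧ ((x.choose s : ℕ) : ZMod p) = v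

lemma EE.comp {p a b N N' : ℕ} (hp : p.Prime) {α β α' β' α'' β'' : ℤ} {v v' : ZMod p}
    (h : EE p a b N α β α' β' v) (h' : EE p a b N' α' β' α'' β'' v') :
    EE p a b (N + N') α β α'' β'' (v * v') := by
  obtain ⟨k, J, x, s, hN, hx, hs, hA, hB, hv⟩ := h
  obtain ⟨k', J', x', s', hN', hx', hs', hA', hB', hv'⟩ := h'
  have hpk : 0 < p ^ k := pow_pos hp.pos _
  refine ⟨k + k', J + p ^ k * J', x + p ^ k * x', s + p ^ k * s', ?_, ?_, ?_, ?_, ?_, ?_⟩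
  · nlinarith
  · rw [pow_add]; nlinarith
  · rw [pow_add]; nlinarith
  · push_cast; rw [pow_add]; linear_combination hA + (p : ℤ) ^ k * hA'
  · push_cast; rw [pow_add]; linear_combination hB + (p : ℤ) ^ k * hB'
  · rw [lucas_pow hp _ _ _ _ _ hx hs, hv, hv']

lemma EE.mono {p a b N N' : ℕ} {α β α' β' : ℤ} {v : ZMod p}
    (h : EE p a b N α β α' β' v) (hN : N' ≤ N) : EE p a b N' α β α' β' v := by
  obtain ⟨k, J, x, s, h1, h2⟩ := h
  exact ⟨k, J, x, s, hN.trans h1, h2⟩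

lemma EE.one (p a b : ℕ) : EE p a b 0 0 0 0 0 1 :=
  ⟨0, 0, 0, 0, by simp⟩

lemma EE.pow {p a b N : ℕ} (hp : p.Prime) {v : ZMod p}
    (h : EE p a b N 0 0 0 0 v) (m : ℕ) : EE p a b (m * N) 0 0 0 0 (v ^ m) := by
  induction m with
  | zero => simpa using EE.one p a b
  | succ m ih => rw [pow_succ, add_mul, one_mul]; exact ih.comp hp h

/-- terminal step -/
lemma EE.term {p a b : ℕ} (α β : ℕ) (hα : α < p) (hβ : β ≤ α) :
    EE p a b 0 α β 0 0 ((α.choose β : ℕ) : ZMod p) :=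
  ⟨1, 0, α, β, le_rfl, by simpa using hα, by simpa using hβ.trans_lt hα, by simp, by simp, rfl⟩

/-- the group of loop values -/
def HH (p a b : ℕ) [Fact p.Prime] : Subgroup (ZMod p)ˣ where
  carrier := {v | EE p a b 0 0 0 0 0 (v : ZMod p)}
  mul_mem' := by
    intro x y hx hy
    simpa using EE.comp (Fact.out : p.Prime) hx hy
  one_mem' := by simpa using EE.one p a b
  inv_mem' := by
    intro x hx
    have h := EE.pow (Fact.out : p.Prime) hx (p - 2)
    have : ((x⁻¹ : (ZMod p)ˣ) : ZMod p) = (x : ZMod p) ^ (p - 2) := by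
      have h2 := (Fact.out : p.Prime).two_le
      rw [← Units.val_pow_eq_pow_val]
      congr 1
      rw [inv_eq_iff_mul_eq_one, ← pow_succ']
      rw [show p - 2 + 1 = p - 1 by omega]
      exact ZMod.units_pow_card_sub_one_eq_one p x
    simp only [Set.mem_ofPred_eq]
    rw [this]
    exact h.mono (by omega)

lemma mem_HH {p a b : ℕ} [Fact p.Prime] (v : (ZMod p)ˣ) :
    v ∈ HH p a b ↔ EE p a b 0 0 0 0 0 (v : ZMod p) := Iff.rfl

lemma sum_val {p : ℕ} [Fact p.Prime] : 2 * ∑ x : ZMod p, x.val = p * (p - 1) := by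
  obtain ⟨m, rfl⟩ : ∃ m, p = m + 1 := ⟨p - 1, by have := (Fact.out : p.Prime).pos; omega⟩
  have : ∑ x : ZMod (m + 1), x.val = ∑ i ∈ Finset.range (m + 1), i := by
    rw [Finset.sum_range]
    rfl
  rw [this, mul_comm, Finset.sum_range_id_mul_two]

lemma sum_val_affine {p : ℕ} [Fact p.Prime] (u w : ZMod p) (hu : u ≠ 0) :
    ∑ x : ZMod p, (u * x + w).val = ∑ x : ZMod p, x.val := by
  have hb : Function.Bijective (fun x : ZMod p => u * x + w) := by
    rw [← Finite.injective_iff_bijective]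
    intro x y h
    simpa [hu] using h
  exact Function.Bijective.sum_comp hb (fun x : ZMod p => x.val)

lemma count_lt {p : ℕ} [Fact p.Prime] (u w : ZMod p) (hu : u ≠ 0) (hu1 : u ≠ 1) :
    2 * (Finset.univ.filter (fun X : ZMod p => X.val < (u * X + w).val)).card = p - 1 := by
  have hpos := (Fact.out : p.Prime).pos
  have h1 : ∀ X : ZMod p, ((1 - u) * X + (-w)).val + (u * X + w).val
      = X.val + if X.val < (u * X + w).val then p else 0 := by
    intro X
    have e : (1 - u) * X + (-w) = X - (u * X + w) := by ring
    rw [e]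
    generalize u * X + w = T
    have hX := X.val_lt
    have hT := T.val_lt
    split_ifs with h
    · have : X - T = ((X.val + p - T.val : ℕ) : ZMod p) := by
        rw [Nat.cast_sub (by omega)]; simp
      rw [this, ZMod.val_natCast, Nat.mod_eq_of_lt (by omega)]; omega
    · rw [ZMod.val_sub (by omega)]; omega
  have h2 := Finset.sum_congr (rfl : (Finset.univ : Finset (ZMod p)) = Finset.univ) (fun X _ => h1 X)
  rw [Finset.sum_add_distrib, Finset.sum_add_distrib, sum_val_affine _ _ hu,
    sum_val_affine _ _ (sub_ne_zero.2 hu1.symm), ← Finset.sum_filter, Finset.sum_const, smul_eq_mul] at h2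
  have h3 := sum_val (p := p)
  have : p * (2 * (Finset.univ.filter (fun X : ZMod p => X.val < (u * X + w).val)).card) = p * (p - 1) := by
    rw [← h3]; linarith
  exact Nat.eq_of_mul_eq_mul_left hpos this

/-- membership of an element of the field in a subgroup of the units -/
def MM {p : ℕ} [Fact p.Prime] (H : Subgroup (ZMod p)ˣ) (v : ZMod p) : Prop :=
  ∃ u ∈ H, (u : ZMod p) = v

lemma MM_one {p : ℕ} [Fact p.Prime] (H : Subgroup (ZMod p)ˣ) : MM H 1 := ⟨1, H.one_mem, by simp⟩

lemma MM_mul {p : ℕ} [Fact p.Prime] {H : Subgroup (ZMod p)ˣ} {v w : ZMod p}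
    (hv : MM H v) (hw : MM H w) : MM H (v * w) := by
  obtain ⟨x, hx, rfl⟩ := hv
  obtain ⟨y, hy, rfl⟩ := hw
  exact ⟨x * y, H.mul_mem hx hy, by simp⟩

lemma MM_inv {p : ℕ} [Fact p.Prime] {H : Subgroup (ZMod p)ˣ} {v : ZMod p}
    (hv : MM H v) : MM H v⁻¹ := by
  obtain ⟨x, hx, rfl⟩ := hv
  exact ⟨x⁻¹, H.inv_mem hx, Units.val_inv_eq_inv_val x⟩

lemma MM_ne {p : ℕ} [Fact p.Prime] {H : Subgroup (ZMod p)ˣ} {v : ZMod p}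
    (hv : MM H v) : v ≠ 0 := by
  obtain ⟨x, hx, rfl⟩ := hv
  exact x.ne_zero

lemma MM_unit {p : ℕ} [Fact p.Prime] {H : Subgroup (ZMod p)ˣ} (x : (ZMod p)ˣ) :
    MM H (x : ZMod p) ↔ x ∈ H := by
  constructor
  · rintro ⟨y, hy, h⟩
    rwa [← Units.ext h]
  · intro h; exact ⟨x, h, rfl⟩

lemma index_step {p : ℕ} [Fact p.Prime] (hp2 : 2 < p) (H : Subgroup (ZMod p)ˣ) (hH : H ≠ ⊤)
    (u w : ZMod p) (hu : u ≠ 0) (hu1 : u ≠ 1) (hw : w ≠ 0)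
    (h : ∀ X : ZMod p, X ≠ 0 → u * X + w ≠ 0 → (u * X + w).val ≤ X.val → MM H (X / (u * X + w))) :
    H.index = 2 ∧ ∀ X : ZMod p, X ≠ 0 → u * X + w ≠ 0 → MM H (X / (u * X + w)) →
      (u * X + w).val ≤ X.val := by
  classical
  have hodd := (Fact.out : p.Prime).eq_two_or_odd
  set V := Finset.univ.filter (fun X : ZMod p => X ≠ 0 ∧ u * X + w ≠ 0 ∧ (u * X + w).val ≤ X.val) with hV
  set L := Finset.univ.filter (fun X : ZMod p => X.val < (u * X + w).val) with hL
  have hcL : 2 * L.card = p - 1 := count_lt u w hu hu1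
  have hroot : ∃ X0 : ZMod p, ∀ X, u * X + w = 0 ↔ X = X0 := by
    refine ⟨-w / u, fun X => ?_⟩
    rw [eq_div_iff hu, ← sub_eq_zero (a := X * u)]
    constructor <;> intro h <;> linear_combination h
  obtain ⟨X0, hX0⟩ := hroot
  have hunion : (Finset.univ : Finset (ZMod p)) ⊆ insert X0 (L ∪ V) := by
    intro X _
    simp only [Finset.mem_insert, Finset.mem_union, hL, hV, Finset.mem_filter, Finset.mem_univ, true_and]
    by_cases h0 : u * X + w = 0
    · left; exact (hX0 X).1 h0
    · right
      by_cases h1 : X.val < (u * X + w).val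
      · left; exact h1
      · right
        refine ⟨?_, h0, not_lt.1 h1⟩
        rintro rfl
        apply h1
        simp only [ZMod.val_zero]
        exact Nat.pos_of_ne_zero (by rwa [Ne, ZMod.val_eq_zero])
  have hcV : p - 1 ≤ 2 * V.card := by
    have h1 := Finset.card_le_card hunion
    have h2 := Finset.card_insert_le X0 (L ∪ V)
    have h3 := Finset.card_union_le L V
    rw [Finset.card_univ, ZMod.card] at h1
    omega
  set HF : Finset (ZMod p) := Finset.univ.filter (fun v => MM H v) with hHF
  have hcHF : HF.card = Nat.card H := by
    rw [Nat.card_eq_fintype_card, ← Fintype.card_subtype]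
    apply Fintype.card_congr
    symm
    refine Equiv.ofBijective (fun x : H => ⟨((x : (ZMod p)ˣ) : ZMod p), ⟨x, x.2, rfl⟩⟩) ⟨?_, ?_⟩
    · intro x y hxy
      exact Subtype.ext (Units.ext (congrArg Subtype.val hxy))
    · rintro ⟨v, y, hy, rfl⟩
      exact ⟨⟨y, hy⟩, rfl⟩
  have hmulidx := H.card_mul_index
  rw [Nat.card_eq_fintype_card (α := (ZMod p)ˣ), ZMod.card_units] at hmulidx
  have hidx : 2 ≤ H.index := by
    have h0 : H.index ≠ 0 := by
      intro h0; rw [h0] at hmulidx; omega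
    have h1 : H.index ≠ 1 := by rwa [Ne, Subgroup.index_eq_one]
    omega
  have hinj : ∀ X Y : ZMod p, u * X + w ≠ 0 → u * Y + w ≠ 0 →
      X / (u * X + w) = Y / (u * Y + w) → X = Y := by
    intro X Y hX hY hXY
    rw [div_eq_div_iff hX hY] at hXY
    apply mul_left_cancel₀ hw
    linear_combination hXY
  have himg : (V.image (fun X => X / (u * X + w))) ⊆ HF := by
    intro v hv
    rw [Finset.mem_image] at hv
    obtain ⟨X, hX, rfl⟩ := hv
    simp only [hV, Finset.mem_filter, Finset.mem_univ, true_and] at hX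
    simp only [hHF, Finset.mem_filter, Finset.mem_univ, true_and]
    exact h X hX.1 hX.2.1 hX.2.2
  have hcimg : (V.image (fun X => X / (u * X + w))).card = V.card := by
    apply Finset.card_image_of_injOn
    intro X hX Y hY
    simp only [hV, Finset.coe_filter, Finset.mem_univ, true_and, Set.mem_ofPred_eq] at hX hY
    exact hinj X Y hX.2.1 hY.2.1
  have hle : V.card ≤ HF.card := hcimg ▸ Finset.card_le_card himg
  have hle2 : 2 * HF.card ≤ p - 1 := by
    rw [hcHF, ← hmulidx]; nlinarith
  have hVHF : HF.card ≤ V.card := by omega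
  constructor
  · have : Nat.card H * H.index = Nat.card H * 2 := by omega
    exact Nat.eq_of_mul_eq_mul_left (by omega) this
  · intro X hX hT hm
    have heq : V.image (fun X => X / (u * X + w)) = HF :=
      Finset.eq_of_subset_of_card_le himg (by omega)
    have : X / (u * X + w) ∈ HF := by simp [hHF, hm]
    rw [← heq, Finset.mem_image] at this
    obtain ⟨Y, hY, hYX⟩ := this
    simp only [hV, Finset.mem_filter, Finset.mem_univ, true_and] at hY
    have := hinj Y X hY.2.1 hT hYX
    subst this
    exact hY.2.2

lemma natCast_ne {p n : ℕ} (h1 : 0 < n) (h2 : n < p) : (n : ZMod p) ≠ 0 := by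
  rw [Ne, ZMod.natCast_eq_zero_iff]
  intro h
  have := Nat.le_of_dvd h1 h
  omega

lemma prop_i {X G C O : Prop} (h3 : X ↔ O) (hO : O) (h2 : C ↔ (X ↔ G)) : C ↔ G := by tauto
lemma prop_ii {N T C V W : Prop} (h3 : N ↔ T) (h2 : W ↔ (T ↔ C)) (h4 : W ↔ (N ↔ V)) : V ↔ C := by
  by_cases N <;> by_cases V <;> simp_all
lemma prop_iv {N X G V W : Prop} (h3 : ¬ (X ↔ N)) (h2 : W ↔ (X ↔ G)) (h4 : W ↔ (N ↔ V)) : ¬ (V ↔ G) := by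
  by_cases N <;> by_cases V <;> simp_all
lemma prop_rel {A X T : Prop} (h : X ↔ (A ↔ T)) : (X ↔ T) ↔ A := by
  by_cases X <;> by_cases T <;> simp_all

lemma core_s14 {p : ℕ} [Fact p.Prime] (hp11 : 11 ≤ p) (H : Subgroup (ZMod p)ˣ) (c g : ℕ)
    (hgc : g < c) (hcg : c < 2 * g) (hg2 : 2 ≤ g) (hcp : 2 * c < p)
    (h : ∀ w : ℕ, 1 ≤ w → w < g → ∀ X T : ZMod p, X ≠ 0 → T ≠ 0 →
      (c : ZMod p) * T = g * X + w → T.val ≤ X.val → MM H (X / T)) : H = ⊤ := by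
  by_contra hH
  have hcn : (c : ZMod p) ≠ 0 := natCast_ne (by omega) (by omega)
  have hgn : (g : ZMod p) ≠ 0 := natCast_ne (by omega) (by omega)
  have main : ∀ w : ℕ, 1 ≤ w → w < g → H.index = 2 ∧ ∀ X T : ZMod p, X ≠ 0 → T ≠ 0 →
      (c : ZMod p) * T = g * X + w → (MM H (X / T) ↔ T.val ≤ X.val) := by
    intro w hw1 hwg
    have hwn : (w : ZMod p) ≠ 0 := natCast_ne (by omega) (by omega)
    have hT : ∀ X : ZMod p, (c : ZMod p) * ((g / c : ZMod p) * X + w / c) = g * X + w := by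
      intro X; field_simp
    obtain ⟨h1, h2⟩ := index_step (by omega) H hH ((g : ZMod p) / c) ((w : ZMod p) / c)
      (div_ne_zero hgn hcn) (by
        rw [Ne, div_eq_one_iff_eq hcn]
        intro hh
        have := (ZMod.natCast_eq_natCast_iff' _ _ _).1 hh
        rw [Nat.mod_eq_of_lt (by omega), Nat.mod_eq_of_lt (by omega)] at this
        omega) (div_ne_zero hwn hcn)
      (fun X hX hTX hle => h w hw1 hwg X _ hX hTX (hT X) hle)
    refine ⟨h1, fun X T hX hT0 hrel => ⟨fun hm => ?_, fun hle => h w hw1 hwg X T hX hT0 hrel hle⟩⟩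
    have : T = (g / c : ZMod p) * X + w / c := by
      apply mul_left_cancel₀ hcn
      rw [hT, hrel]
    rw [this] at hm hT0 ⊢
    exact h2 X hX hT0 hm
  have hidx := (main 1 le_rfl (by omega)).1
  have hmul : ∀ x y : ZMod p, x ≠ 0 → y ≠ 0 → (MM H (x * y) ↔ (MM H x ↔ MM H y)) := by
    intro x y hx hy
    have := Subgroup.mul_mem_iff_of_index_two hidx (a := Units.mk0 x hx) (b := Units.mk0 y hy)
    rw [← MM_unit, ← MM_unit, ← MM_unit] at this
    simpa using this
  have hone := MM_one H
  have hrel : ∀ w : ℕ, 1 ≤ w → w < g → ∀ X T : ZMod p, X ≠ 0 → T ≠ 0 →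
      (c : ZMod p) * T = g * X + w → ((MM H X ↔ MM H T) ↔ T.val ≤ X.val) := by
    intro w hw1 hwg X T hX hT hr
    rw [← (main w hw1 hwg).2 X T hX hT hr]
    have := hmul (X / T) T (div_ne_zero hX hT) hT
    rw [div_mul_cancel₀ _ hT] at this
    exact prop_rel this
  have hv1 : (1 : ZMod p).val = 1 := ZMod.val_one p
  have hm1 : (-1 : ZMod p) ≠ 0 := by simp
  have hvm1 : (-1 : ZMod p).val = p - 1 := by
    obtain ⟨m, rfl⟩ : ∃ m, p = m + 1 := ⟨p - 1, by omega⟩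
    rw [ZMod.val_neg_one]; omega
  have hpos : ∀ T : ZMod p, T ≠ 0 → 1 ≤ T.val := fun T hT => by
    rw [Nat.one_le_iff_ne_zero, Ne, ZMod.val_eq_zero]; exact hT
  -- (i)
  have i1 : ∀ w : ℕ, 1 ≤ w → w < g → (MM H ((c - w : ℕ) : ZMod p) ↔ MM H (g : ZMod p)) := by
    intro w hw1 hwg
    have hn : ((c - w : ℕ) : ZMod p) ≠ 0 := natCast_ne (by omega) (by omega)
    have hX : (((c - w : ℕ) : ZMod p) / g) ≠ 0 := div_ne_zero hn hgn
    have h1 := hrel w hw1 hwg (((c - w : ℕ) : ZMod p) / g) 1 hX one_ne_zero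
      (by rw [mul_div_cancel₀ _ hgn, Nat.cast_sub (by omega)]; ring)
    have h2 := hmul (((c - w : ℕ) : ZMod p) / g) g hX hgn
    rw [div_mul_cancel₀ _ hgn] at h2
    rw [hv1] at h1
    have h3 := h1.2 (hpos _ hX)
    exact prop_i h3 hone h2
  -- (ii)
  have i2 : ∀ w : ℕ, 1 ≤ w → w < g → (MM H ((g - w : ℕ) : ZMod p) ↔ MM H (c : ZMod p)) := by
    intro w hw1 hwg
    have hn : ((g - w : ℕ) : ZMod p) ≠ 0 := natCast_ne (by omega) (by omega)
    have hT : (-((g - w : ℕ) : ZMod p) / c) ≠ 0 := div_ne_zero (neg_ne_zero.2 hn) hcn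
    have h1 := hrel w hw1 hwg (-1) (-((g - w : ℕ) : ZMod p) / c) hm1 hT
      (by rw [mul_div_cancel₀ _ hcn, Nat.cast_sub (by omega)]; ring)
    have h2 := hmul (-((g - w : ℕ) : ZMod p) / c) c hT hcn
    rw [div_mul_cancel₀ _ hcn] at h2
    have h4 := hmul (-1) ((g - w : ℕ) : ZMod p) hm1 hn
    rw [neg_one_mul] at h4
    have h3 := h1.2 (by rw [hvm1]; have := (-((g - w : ℕ) : ZMod p) / c).val_lt; omega)
    exact prop_ii h3 h2 h4
  -- (iv)
  have i4 : ∀ w : ℕ, 1 ≤ w → w < g → ¬ (MM H ((c + w : ℕ) : ZMod p) ↔ MM H (g : ZMod p)) := by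
    intro w hw1 hwg
    have hn : ((c + w : ℕ) : ZMod p) ≠ 0 := natCast_ne (by omega) (by omega)
    have hX : (-((c + w : ℕ) : ZMod p) / g) ≠ 0 := div_ne_zero (neg_ne_zero.2 hn) hgn
    have h1 := hrel w hw1 hwg (-((c + w : ℕ) : ZMod p) / g) (-1) hX hm1
      (by rw [mul_div_cancel₀ _ hgn]; push_cast; ring)
    have h2 := hmul (-((c + w : ℕ) : ZMod p) / g) g hX hgn
    rw [div_mul_cancel₀ _ hgn] at h2
    have h4 := hmul (-1) ((c + w : ℕ) : ZMod p) hm1 hn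
    rw [neg_one_mul] at h4
    have h3 : ¬ (-1 : ZMod p).val ≤ (-((c + w : ℕ) : ZMod p) / g).val := by
      intro hle
      rw [hvm1] at hle
      have hlt := (-((c + w : ℕ) : ZMod p) / g).val_lt
      have : (-((c + w : ℕ) : ZMod p) / g) = -1 := by
        apply ZMod.val_injective p
        rw [hvm1]; omega
      rw [div_eq_iff hgn] at this
      have h5 : ((c + w : ℕ) : ZMod p) = (g : ℕ) := by linear_combination -this
      have := (ZMod.natCast_eq_natCast_iff' _ _ _).1 h5
      rw [Nat.mod_eq_of_lt (by omega), Nat.mod_eq_of_lt (by omega)] at this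
      omega
    exact prop_iv (fun hh => h3 (h1.1 hh)) h2 h4
  have hMc : MM H (c : ZMod p) := by
    have := i2 (g - 1) (by omega) (by omega)
    rw [show g - (g - 1) = 1 by omega] at this
    rw [← this]; simpa using hone
  have i2' : ∀ v : ℕ, 1 ≤ v → v < g → MM H (v : ZMod p) := by
    intro v h1 h2
    have := i2 (g - v) (by omega) (by omega)
    rw [show g - (g - v) = v by omega] at this
    exact this.2 hMc
  have i1' : ∀ v : ℕ, c - g < v → v < c → (MM H (v : ZMod p) ↔ MM H (g : ZMod p)) := by
    intro v h1 h2
    have := i1 (c - v) (by omega) (by omega)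
    rwa [show c - (c - v) = v by omega] at this
  have i4' : ∀ v : ℕ, c < v → v < c + g → ¬ (MM H (v : ZMod p) ↔ MM H (g : ZMod p)) := by
    intro v h1 h2
    have := i4 (v - c) (by omega) (by omega)
    rwa [show c + (v - c) = v by omega] at this
  have hdouble : ∀ v : ℕ, 1 ≤ v → v < p → (MM H ((2 * v : ℕ) : ZMod p) ↔ (MM H ((2 : ℕ) : ZMod p) ↔ MM H (v : ZMod p))) := by
    intro v h1 h2
    rw [Nat.cast_mul]
    exact hmul _ _ (natCast_ne (by omega) (by omega)) (natCast_ne (by omega) (by omega))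
  by_cases hg3 : 3 ≤ g
  · have h2 : MM H ((2 : ℕ) : ZMod p) := i2' 2 (by omega) (by omega)
    have hMg : MM H (g : ZMod p) := by
      by_cases hcase : c = 2 * g - 1
      · have := i1' (2 * (g - 1)) (by omega) (by omega)
        have h3 := hdouble (g - 1) (by omega) (by omega)
        have h4 := i2' (g - 1) (by omega) (by omega)
        exact this.1 (h3.2 ⟨fun _ => h4, fun _ => h2⟩)
      · have := i1' (g - 1) (by omega) (by omega)
        have h4 := i2' (g - 1) (by omega) (by omega)
        exact this.1 h4
    have hall : ∀ v : ℕ, 1 ≤ v → v ≤ c → MM H (v : ZMod p) := by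
      intro v h1 h2
      rcases Nat.lt_or_ge v g with h3 | h3
      · exact i2' v h1 h3
      · rcases Nat.lt_or_ge v c with h4 | h4
        · exact (i1' v (by omega) h4).2 hMg
        · rw [show v = c by omega]; exact hMc
    have h5 := i4' (2 * ((c + 2) / 2)) (by omega) (by omega)
    have h6 := hdouble ((c + 2) / 2) (by omega) (by omega)
    have h7 := hall ((c + 2) / 2) (by omega) (by omega)
    exact h5 ⟨fun _ => hMg, fun _ => h6.2 ⟨fun _ => h7, fun _ => h2⟩⟩
  · have hg : g = 2 := by omega
    have hc : c = 3 := by omega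
    subst hg hc
    have hval : ∀ n : ℕ, n < p → ((n : ZMod p)).val = n := fun n hn => by
      rw [ZMod.val_natCast, Nat.mod_eq_of_lt hn]
    have a1 := hrel 1 le_rfl (by omega) ((7 : ℕ) : ZMod p) ((5 : ℕ) : ZMod p)
      (natCast_ne (by omega) (by omega)) (natCast_ne (by omega) (by omega)) (by norm_cast)
    have a2 := hrel 1 le_rfl (by omega) ((10 : ℕ) : ZMod p) ((7 : ℕ) : ZMod p)
      (natCast_ne (by omega) (by omega)) (natCast_ne (by omega) (by omega)) (by norm_cast)
    rw [hval _ (by omega), hval _ (by omega)] at a1 a2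
    have b1 := a1.2 (by norm_num)
    have b2 := a2.2 (by norm_num)
    have b3 := hdouble 5 (by omega) (by omega)
    have b4 := hdouble 2 (by omega) (by omega)
    have b5 := i4' 4 (by omega) (by omega)
    clear * - b1 b2 b3 b4 b5
    norm_num at b3 b4 b5 b1 b2
    grind

lemma MM_HH {p a b : ℕ} [Fact p.Prime] {v : ZMod p} (h : EE p a b 0 0 0 0 0 v) (hv : v ≠ 0) :
    MM (HH p a b) v := ⟨Units.mk0 v hv, h, rfl⟩

lemma edge_out {p a b : ℕ} (hp : p.Prime) (hba : b ≤ a) (hap : a < p) (α β j : ℕ) (hβ : β ≤ α)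
    (hα : α < p) (hj : j < p) :
    EE p a b 0 α β 0 0 ((((a * j + α) % p).choose ((b * j + β) % p) : ℕ) *
      ((((a * j + α) / p).choose ((b * j + β) / p) : ℕ) : ZMod p)) ∧
    ((((a * j + α) / p).choose ((b * j + β) / p) : ℕ) : ZMod p) ≠ 0 := by
  have hp0 := hp.pos
  have h1 : (a * j + α) / p < p := by
    rw [Nat.div_lt_iff_lt_mul hp0]
    obtain ⟨q, rfl⟩ : ∃ q, p = q + 1 := ⟨p - 1, by omega⟩
    have : a * j ≤ q * q := Nat.mul_le_mul (by omega) (by omega)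
    nlinarith
  have h2 : (b * j + β) / p ≤ (a * j + α) / p := by
    apply Nat.div_le_div_right
    have := Nat.mul_le_mul_right j hba
    omega
  refine ⟨?_, choose_ne_zero_small hp _ _ h1 h2⟩
  have e1 : EE p a b 0 α β ((a * j + α) / p : ℕ) ((b * j + β) / p : ℕ)
      ((((a * j + α) % p).choose ((b * j + β) % p) : ℕ) : ZMod p) := by
    refine ⟨1, j, _, _, Nat.zero_le _, ?_, ?_, ?_, ?_, rfl⟩
    · simpa using Nat.mod_lt _ hp0
    · simpa using Nat.mod_lt _ hp0
    · have := Nat.div_add_mod (a * j + α) p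
      rw [pow_one]; exact_mod_cast this.symm
    · have := Nat.div_add_mod (b * j + β) p
      rw [pow_one]; exact_mod_cast this.symm
  have := e1.comp hp (EE.term (a := a) (b := b) _ _ h1 h2)
  simpa using this

lemma ratio {p a b : ℕ} [Fact p.Prime] (hba : b ≤ a) (hap : a < p) (α β i k j x s : ℕ)
    (hβ : β ≤ α) (hβ' : β + k ≤ α + i) (hα : α + i < p) (hj : j < p) (v1 v2 : ZMod p)
    (h1 : EE p a b 0 0 0 α β v1) (h2 : EE p a b 0 0 0 (α + i : ℕ) (β + k : ℕ) v2)
    (hv1 : v1 ≠ 0) (hv2 : v2 ≠ 0)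
    (hx : (a * j + α) % p = x) (hs : (b * j + β) % p = s) (hsx : s ≤ x) (hxi : x + i < p)
    (hski : s + k ≤ x + i) :
    MM (HH p a b) ((v2 / v1) * (((x + i).choose (s + k) : ℕ) / ((x.choose s : ℕ) : ZMod p))) := by
  have hp : p.Prime := Fact.out
  have hp0 := hp.pos
  have dA := Nat.div_add_mod (a * j + α) p
  have dB := Nat.div_add_mod (b * j + β) p
  rw [hx] at dA
  rw [hs] at dB
  have eA : a * j + (α + i) = (x + i) + p * ((a * j + α) / p) := by omega
  have eB : b * j + (β + k) = (s + k) + p * ((b * j + β) / p) := by omega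
  have x1 : (a * j + (α + i)) % p = x + i := by
    rw [eA, Nat.add_mul_mod_self_left, Nat.mod_eq_of_lt hxi]
  have x2 : (a * j + (α + i)) / p = (a * j + α) / p := by
    rw [eA, Nat.add_mul_div_left _ _ hp0, Nat.div_eq_of_lt hxi, Nat.zero_add]
  have s1 : (b * j + (β + k)) % p = s + k := by
    rw [eB, Nat.add_mul_mod_self_left, Nat.mod_eq_of_lt (by omega)]
  have s2 : (b * j + (β + k)) / p = (b * j + β) / p := by
    rw [eB, Nat.add_mul_div_left _ _ hp0, Nat.div_eq_of_lt (by omega : s + k < p), Nat.zero_add]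
  obtain ⟨f1, ht⟩ := edge_out hp hba hap α β j hβ (by omega) hj
  obtain ⟨f2, -⟩ := edge_out hp hba hap (α + i) (β + k) j hβ' hα hj
  rw [x1, x2, s1, s2] at f2
  rw [hx, hs] at f1
  have c1 := choose_ne_zero_small hp x s (by omega) hsx
  have c2 := choose_ne_zero_small hp (x + i) (s + k) hxi hski
  have m1 := MM_HH (h1.comp hp f1) (mul_ne_zero hv1 (mul_ne_zero c1 ht))
  have m2 := MM_HH (h2.comp hp f2) (mul_ne_zero hv2 (mul_ne_zero c2 ht))
  have := MM_mul m2 (MM_inv m1)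
  convert this using 1
  field_simp

lemma exists_P {p a : ℕ} (hp : p.Prime) (ha : 0 < a) (hap : a < p) :
    ∃ i q : ℕ, 0 < i ∧ p ^ i = a * q + 1 := by
  have hcop : Nat.Coprime p a := by
    rw [hp.coprime_iff_not_dvd]
    intro h
    have := Nat.le_of_dvd ha h
    omega
  have h := Nat.ModEq.pow_totient hcop
  have h1 : 1 ≤ p ^ Nat.totient a := Nat.one_le_pow _ _ hp.pos
  have h2 := (Nat.modEq_iff_dvd' h1).1 h.symm
  obtain ⟨q, hq⟩ := h2
  exact ⟨Nat.totient a, q, Nat.totient_pos.2 ha, by omega⟩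

lemma reach {p d c b' : ℕ} [Fact p.Prime] (hd : 0 < d) (hb : 0 < b') (hbc : b' < c)
    (hcop : Nat.Coprime b' c) (hap : d * c < p) :
    ∀ u : ℕ, u + 1 < c → ∃ v : ZMod p, v ≠ 0 ∧
      EE p (d * c) (d * b') 0 0 0 u (b' * (u + 1) / c : ℕ) v := by
  have hp : p.Prime := Fact.out
  have hcp : c < p := lt_of_le_of_lt (Nat.le_mul_of_pos_left c hd) hap
  obtain ⟨i, q, hi, hP⟩ := exists_P hp (Nat.mul_pos hd (by omega : 0 < c)) hap
  have hPp : p ∣ p ^ i := dvd_pow_self _ (by omega)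
  have hP0 : ((p ^ i : ℕ) : ZMod p) = 0 := (ZMod.natCast_eq_zero_iff _ _).2 hPp
  have hPge : p ≤ p ^ i := Nat.le_of_dvd (pow_pos hp.pos _) hPp
  intro u
  induction u with
  | zero =>
    intro _
    refine ⟨1, one_ne_zero, ?_⟩
    have : b' * (0 + 1) / c = 0 := by rw [Nat.div_eq_of_lt]; omega
    rw [this]
    exact EE.one _ _ _
  | succ u ih =>
    intro hu
    obtain ⟨v, hv, hE⟩ := ih (by omega)
    set t := b' * (u + 1) / c with ht
    set t' := b' * (u + 1 + 1) / c with ht'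
    set w' := b' * (u + 1 + 1) % c with hw'
    have e1 : c * t' + w' = b' * (u + 1 + 1) := Nat.div_add_mod _ _
    have e0 : c * t + b' * (u + 1) % c = b' * (u + 1) := Nat.div_add_mod _ _
    have hw'c : w' < c := Nat.mod_lt _ (by omega)
    have hwc : b' * (u + 1) % c < c := Nat.mod_lt _ (by omega)
    have hw'0 : 0 < w' := by
      apply Nat.pos_of_ne_zero
      intro h0
      have h1 : c ∣ b' * (u + 1 + 1) := Nat.dvd_of_mod_eq_zero h0
      have h2 := hcop.symm.dvd_of_dvd_mul_left h1
      have := Nat.le_of_dvd (by omega) h2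
      omega
    have htt : t ≤ t' := by
      apply Nat.div_le_div_right
      nlinarith
    have htt' : t' ≤ t + 1 := by
      by_contra hcon
      have : c * (t + 2) ≤ c * t' := Nat.mul_le_mul_left _ (by omega)
      nlinarith
    obtain ⟨ε, hε⟩ : ∃ ε, t' = t + ε := ⟨t' - t, by omega⟩
    have hε1 : ε ≤ 1 := by omega
    have hq0 : 0 < q := by
      apply Nat.pos_of_ne_zero
      rintro rfl
      have := hp.two_le
      omega
    have hdq : 0 < d * q := Nat.mul_pos hd hq0
    have hdqw : 1 ≤ d * q * w' := Nat.mul_pos hdq hw'0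
    have hPdq : p ^ i = d * q * c + 1 := by rw [hP]; ring
    have hdqw2 : d * q * w' + d * q ≤ d * q * c := by
      have := Nat.mul_le_mul_left (d * q) (show w' + 1 ≤ c by omega)
      rw [mul_add] at this
      omega
    obtain ⟨s, hs⟩ : ∃ s, d * q * w' = s + ε := ⟨d * q * w' - ε, by omega⟩
    obtain ⟨x, hx⟩ : ∃ x, p ^ i = x + 2 := ⟨p ^ i - 2, by have := hp.two_le; omega⟩
    have hPz : (p : ℤ) ^ i = d * q * c + 1 := by exact_mod_cast hPdq
    have hxz : (p : ℤ) ^ i = x + 2 := by exact_mod_cast hx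
    have hsz : (d : ℤ) * q * w' = s + ε := by exact_mod_cast hs
    have e1z : (c : ℤ) * t' + w' = b' * (u + 1 + 1) := by exact_mod_cast e1
    have hεz : (t' : ℤ) = t + ε := by exact_mod_cast hε
    have hstep : EE p (d * c) (d * b') 0 u t (u + 1 : ℕ) t' ((x.choose s : ℕ) : ZMod p) := by
      refine ⟨i, (u + 2) * q, x, s, Nat.zero_le _, by omega, by omega, ?_, ?_, rfl⟩
      · push_cast
        linear_combination (-(u + 2) : ℤ) * hPz + hxz
      · push_cast
        linear_combination (-(t' : ℤ)) * hPz + hsz - (d * q : ℤ) * e1z - hεz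
    refine ⟨v * ((x.choose s : ℕ) : ZMod p), mul_ne_zero hv ?_, ?_⟩
    · intro h0
      have h1 := Nat.choose_mul_succ_eq x s
      have h2 : ((x.choose s * (x + 1) : ℕ) : ZMod p) = ((x + 1).choose s * (x + 1 - s) : ℕ) := by
        rw [h1]
      rw [Nat.cast_mul, h0, zero_mul, Nat.cast_mul] at h2
      have h3 := choose_pow_sub_one hp i s (by omega)
      rw [show p ^ i - 1 = x + 1 by omega] at h3
      have h4 : ((x + 1 - s : ℕ) : ZMod p) = 0 := by
        rcases mul_eq_zero.1 h2.symm with h | h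
        · exact absurd h h3
        · exact h
      rw [Nat.cast_sub (by omega)] at h4
      have hPm : (d : ZMod p) * q * c + 1 = 0 := by
        rw [hPdq] at hP0; exact_mod_cast hP0
      have hxm : (x : ZMod p) + 2 = 0 := by rw [hx] at hP0; exact_mod_cast hP0
      have hsm : (d : ZMod p) * q * w' = s + ε := by exact_mod_cast congrArg (Nat.cast (R := ZMod p)) hs
      push_cast at h4
      have hfin : (w' : ZMod p) + c * ε = c := by
        linear_combination (c : ZMod p) * h4 - (c : ZMod p) * hxm - (c : ZMod p) * hsm + (w' : ZMod p) * hPm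
      have hfin' : ((w' + c * ε : ℕ) : ZMod p) = (c : ℕ) := by exact_mod_cast hfin
      rcases Nat.le_one_iff_eq_zero_or_eq_one.1 hε1 with h | h
      · subst h
        have := (ZMod.natCast_eq_natCast_iff' _ _ _).1 hfin'
        rw [Nat.mod_eq_of_lt (by omega), Nat.mod_eq_of_lt (by omega)] at this
        omega
      · subst h
        apply natCast_ne (p := p) hw'0 (by omega)
        push_cast at hfin
        linear_combination hfin
    · have := hE.comp hp hstep
      simpa using this

lemma full_ge3 {p d c b' : ℕ} [Fact p.Prime] (hp11 : 11 ≤ p) (hd : 2 ≤ d) (hb : 0 < b')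
    (hbc : 2 * b' < c) (hcop : Nat.Coprime b' c) (hap : d * c < p) :
    HH p (d * c) (d * b') = ⊤ := by
  have hp : p.Prime := Fact.out
  have h2c : 2 * c ≤ d * c := Nat.mul_le_mul_right c hd
  apply core_s14 hp11 _ c (c - b') (by omega) (by omega) (by omega) (by omega)
  intro w hw1 hwg
  -- choose u
  obtain ⟨u, hu1, hu⟩ : ∃ u, u < c ∧ b' * u % c = w := by
    obtain ⟨m, hm⟩ := Nat.exists_mul_mod_eq_of_coprime w hcop (by omega)
    exact ⟨m, hm.1, by rw [hm.2, Nat.mod_eq_of_lt (by omega)]⟩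
  have hu0 : 0 < u := by
    apply Nat.pos_of_ne_zero; rintro rfl; simp at hu; omega
  obtain ⟨u, rfl⟩ : ∃ m, u = m + 1 := ⟨u - 1, by omega⟩
  set t := b' * (u + 1) / c with ht
  have e0 : c * t + w = b' * (u + 1) := by rw [← hu]; exact Nat.div_add_mod _ _
  have ht1 : b' * (u + 1 + 1) / c = t := by
    rw [mul_add, mul_one, ← e0, add_assoc, Nat.mul_add_div (by omega),
      Nat.div_eq_of_lt (show w + b' < c by omega), add_zero]
  have hu2 : u + 1 + 1 < c := by
    by_contra hcon
    have h3 : u + 1 + 1 = c := by omega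
    rw [h3, Nat.mul_div_cancel _ (by omega : 0 < c)] at ht1
    rw [← ht1] at e0
    have : b' * c = b' * (u + 1) + b' := by rw [← h3]; ring
    have := Nat.mul_comm c b'
    omega
  obtain ⟨v1, hv1, hE1⟩ := reach (by omega : 0 < d) hb (by omega) hcop hap u (by omega)
  obtain ⟨v2, hv2, hE2⟩ := reach (by omega : 0 < d) hb (by omega) hcop hap (u + 1) (by omega)
  rw [ht1] at hE2
  have htu : t ≤ u := by
    have : t < u + 1 := by
      rw [ht, Nat.div_lt_iff_lt_mul (by omega)]
      nlinarith
    omega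
  have hcn : (c : ZMod p) ≠ 0 := natCast_ne (by omega) (by omega)
  have hdc : ((d * c : ℕ) : ZMod p) ≠ 0 := natCast_ne (by omega) (by omega)
  have hdn : (d : ZMod p) ≠ 0 := by
    intro h; apply hdc; rw [Nat.cast_mul, h, zero_mul]
  have hbn : (b' : ZMod p) ≠ 0 := natCast_ne (by omega) (by omega)
  have hwn : (w : ZMod p) ≠ 0 := natCast_ne (by omega) (by omega)
  have key : ∀ X T : ZMod p, X ≠ 0 → T ≠ 0 →
      (c : ZMod p) * T = (c - b' : ℕ) * X + w → T.val ≤ X.val →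
      MM (HH p (d * c) (d * b')) (v2 / v1 * (X / T)) := by
    intro X T hX hT hrel hle
    have hX1 : 1 ≤ X.val := by rw [Nat.one_le_iff_ne_zero, Ne, ZMod.val_eq_zero]; exact hX
    have hT1 : 1 ≤ T.val := by rw [Nat.one_le_iff_ne_zero, Ne, ZMod.val_eq_zero]; exact hT
    have hXlt := X.val_lt
    set J : ZMod p := (X - (u + 1)) / ((d * c : ℕ) : ZMod p) with hJ
    have hJ' : ((d * c : ℕ) : ZMod p) * J = X - (u + 1) := mul_div_cancel₀ _ hdc
    have hJv : ((J.val : ℕ) : ZMod p) = J := ZMod.natCast_zmod_val J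
    have hXv : ((X.val : ℕ) : ZMod p) = X := ZMod.natCast_zmod_val X
    have hTv : ((T.val : ℕ) : ZMod p) = T := ZMod.natCast_zmod_val T
    have hx : (d * c * J.val + u) % p = X.val - 1 := by
      have : ((d * c * J.val + u : ℕ) : ZMod p) = ((X.val - 1 : ℕ) : ZMod p) := by
        rw [Nat.cast_sub hX1, Nat.cast_add, Nat.cast_mul, hJv, hJ', hXv]
        push_cast; ring
      rw [ZMod.natCast_eq_natCast_iff'] at this
      rw [this, Nat.mod_eq_of_lt (by omega)]
    have hs : (d * b' * J.val + t) % p = X.val - T.val := by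
      have : ((d * b' * J.val + t : ℕ) : ZMod p) = ((X.val - T.val : ℕ) : ZMod p) := by
        apply mul_left_cancel₀ hcn
        rw [Nat.cast_sub hle, Nat.cast_add, Nat.cast_mul, hJv, hXv, hTv]
        have e0' : (c : ZMod p) * t + w = b' * (u + 1) := by exact_mod_cast congrArg (Nat.cast (R := ZMod p)) e0
        rw [Nat.cast_sub (by omega)] at hrel
        push_cast at hJ' ⊢
        linear_combination (b' : ZMod p) * hJ' + e0' + hrel
      rw [ZMod.natCast_eq_natCast_iff'] at this
      rw [this, Nat.mod_eq_of_lt (by omega)]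
    have := ratio (p := p) (a := d * c) (b := d * b') (Nat.mul_le_mul_left d (by omega)) hap u t 1 0 J.val
      (X.val - 1) (X.val - T.val) htu (by omega) (by omega) J.val_lt v1 v2 hE1 hE2 hv1 hv2 hx hs
      (by omega) (by omega) (by omega)
    rw [add_zero, Nat.sub_add_cancel hX1] at this
    convert this using 2
    have h1 := Nat.choose_mul_succ_eq (X.val - 1) (X.val - T.val)
    rw [Nat.sub_add_cancel hX1, show X.val - (X.val - T.val) = T.val by omega] at h1
    have h2 := congrArg (Nat.cast (R := ZMod p)) h1
    rw [Nat.cast_mul, Nat.cast_mul, hXv, hTv] at h2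
    have c1 := choose_ne_zero_small hp (X.val - 1) (X.val - T.val) (by omega) (by omega)
    rw [div_eq_div_iff hT c1]
    linear_combination h2
  have hε := key (w / b') (w / b') (div_ne_zero hwn hbn) (div_ne_zero hwn hbn)
    (by rw [Nat.cast_sub (by omega)]; field_simp; ring) le_rfl
  rw [div_self (div_ne_zero hwn hbn), mul_one] at hε
  intro X T hX hT hrel hle
  have h1 := MM_mul (MM_inv hε) (key X T hX hT hrel hle)
  rwa [← mul_assoc, inv_mul_cancel₀ (MM_ne hε), one_mul] at h1

lemma full_two {p d : ℕ} [Fact p.Prime] (hp11 : 11 ≤ p) (hd : 2 ≤ d) (hap : d * 2 < p) :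
    HH p (d * 2) d = ⊤ := by
  have hp : p.Prime := Fact.out
  have hodd : p % 2 = 1 := by rcases hp.eq_two_or_odd with h | h <;> omega
  obtain ⟨i, q, hi, hP⟩ := exists_P hp (by omega : 0 < d * 2) hap
  have hPp : p ∣ p ^ i := dvd_pow_self _ (by omega)
  have hPge : p ≤ p ^ i := Nat.le_of_dvd (pow_pos hp.pos _) hPp
  have hdqP : p ^ i = 2 * (d * q) + 1 := by rw [hP]; ring
  obtain ⟨s0, hs0⟩ : ∃ s, d * q = s + 1 := ⟨d * q - 1, by omega⟩
  have hPz : (p : ℤ) ^ i = 2 * (d * q) + 1 := by exact_mod_cast hdqP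
  have hs0z : (d : ℤ) * q = s0 + 1 := by exact_mod_cast hs0
  have hE2 : EE p (d * 2) d 0 0 0 (0 + 2 : ℕ) (0 + 1 : ℕ) (((2 * s0).choose s0 : ℕ) : ZMod p) := by
    refine ⟨i, 3 * q, 2 * s0, s0, Nat.zero_le _, by omega, by omega, ?_, ?_, rfl⟩
    · push_cast
      linear_combination (-2 : ℤ) * hPz + 2 * hs0z
    · push_cast
      linear_combination (-1 : ℤ) * hPz + hs0z
  have hv2 : (((2 * s0).choose s0 : ℕ) : ZMod p) ≠ 0 := by
    intro h0
    have h1 := Nat.succ_mul_centralBinom_succ s0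
    rw [Nat.centralBinom_eq_two_mul_choose, Nat.centralBinom_eq_two_mul_choose] at h1
    have h2 := congrArg (Nat.cast (R := ZMod p)) h1
    rw [Nat.cast_mul, Nat.cast_mul _ ((2 * s0).choose s0), h0, mul_zero] at h2
    have h3 := choose_pow_sub_one hp i (s0 + 1) (by omega)
    rw [show p ^ i - 1 = 2 * (s0 + 1) by omega] at h3
    rcases mul_eq_zero.1 h2 with h | h
    · rw [ZMod.natCast_eq_zero_iff] at h
      have h4 : p ∣ 2 * (d * q) := by rw [hs0]; exact Dvd.dvd.mul_left h 2
      have h5 : p ∣ 1 := by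
        rw [← Nat.dvd_add_right h4, ← hdqP]; exact hPp
      have := Nat.le_of_dvd one_pos h5
      omega
    · exact h3 h
  generalize (((2 * s0).choose s0 : ℕ) : ZMod p) = v2 at hE2 hv2
  set H := HH p (d * 2) d with hH
  have hdn : (d : ZMod p) ≠ 0 := natCast_ne (by omega) (by omega)
  have h2n : (2 : ZMod p) ≠ 0 := by exact_mod_cast natCast_ne (p := p) (n := 2) (by omega) (by omega)
  have key : ∀ s : ℕ, 2 * s + 2 < p →
      MM H (v2 * 2 * (((2 * s + 1 : ℕ) : ZMod p) / ((s + 1 : ℕ) : ZMod p))) := by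
    intro s hs
    set J : ZMod p := (s : ZMod p) / d with hJ
    have hJ' : (d : ZMod p) * J = s := mul_div_cancel₀ _ hdn
    have hJv : ((J.val : ℕ) : ZMod p) = J := ZMod.natCast_zmod_val J
    have hx : (d * 2 * J.val + 0) % p = 2 * s := by
      have : ((d * 2 * J.val + 0 : ℕ) : ZMod p) = ((2 * s : ℕ) : ZMod p) := by
        push_cast; rw [hJv]; linear_combination 2 * hJ'
      rw [ZMod.natCast_eq_natCast_iff'] at this
      rw [this, Nat.mod_eq_of_lt (by omega)]
    have hs' : (d * J.val + 0) % p = s := by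
      have : ((d * J.val + 0 : ℕ) : ZMod p) = ((s : ℕ) : ZMod p) := by
        push_cast; rw [hJv]; linear_combination hJ'
      rw [ZMod.natCast_eq_natCast_iff'] at this
      rw [this, Nat.mod_eq_of_lt (by omega)]
    have := ratio (p := p) (a := d * 2) (b := d) (by omega) hap 0 0 2 1 J.val
      (2 * s) s le_rfl (by omega) (by omega) J.val_lt 1 v2 (EE.one _ _ _) hE2 one_ne_zero hv2 hx hs'
      (by omega) (by omega) (by omega)
    convert this using 1
    have h1 := Nat.succ_mul_centralBinom_succ s
    rw [Nat.centralBinom_eq_two_mul_choose, Nat.centralBinom_eq_two_mul_choose,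
      show 2 * (s + 1) = 2 * s + 2 by ring] at h1
    have h2 := congrArg (Nat.cast (R := ZMod p)) h1
    have c1 := choose_ne_zero_small hp (2 * s) s (by omega) (by omega)
    have c2 : ((s + 1 : ℕ) : ZMod p) ≠ 0 := natCast_ne (by omega) (by omega)
    rw [div_one, mul_assoc]
    congr 1
    rw [← mul_div_assoc, div_eq_div_iff c2 c1]
    rw [Nat.cast_mul, Nat.cast_mul, Nat.cast_mul] at h2
    push_cast at h2 ⊢
    linear_combination -h2
  have h0 := key 0 (by omega)
  have h0' : MM H (v2 * 2) := by simpa using h0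
  have key2 : ∀ s : ℕ, 2 * s + 2 < p → (MM H ((2 * s + 1 : ℕ) : ZMod p) ↔ MM H ((s + 1 : ℕ) : ZMod p)) := by
    intro s hs
    have c2 : ((s + 1 : ℕ) : ZMod p) ≠ 0 := natCast_ne (by omega) (by omega)
    have c3 : ((2 * s + 1 : ℕ) : ZMod p) ≠ 0 := natCast_ne (by omega) (by omega)
    have h1 := MM_mul (MM_inv h0') (key s hs)
    rw [← mul_assoc, inv_mul_cancel₀ (MM_ne h0'), one_mul] at h1
    constructor
    · intro h
      have := MM_mul (MM_inv h1) h
      rwa [inv_div, div_mul_cancel₀ _ c3] at this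
    · intro h
      have := MM_mul h1 h
      rwa [div_mul_cancel₀ _ c2] at this
  have key3 : ∀ s : ℕ, 2 * s + 2 < p → MM H (((2 * s + 1 : ℕ) : ZMod p) / ((s + 1 : ℕ) : ZMod p)) := by
    intro s hs
    have h1 := MM_mul (MM_inv h0') (key s hs)
    rwa [← mul_assoc, inv_mul_cancel₀ (MM_ne h0'), one_mul] at h1
  have nn : ∀ n : ℕ, 0 < n → n < p → (n : ZMod p) ≠ 0 := fun n h1 h2 => natCast_ne h1 h2
  -- 3/2, 5/3, 9/5 lie in H, hence 3 and 2
  have a1 := key3 1 (by omega)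
  have a2 := key3 2 (by omega)
  have a4 := key3 4 (by omega)
  have n3 := nn 3 (by omega) (by omega)
  have n5 := nn 5 (by omega) (by omega)
  have h3 : MM H ((3 : ℕ) : ZMod p) := by
    have := MM_mul a2 a4
    convert this using 1
    push_cast at *
    field_simp
    norm_num
  have h2 : MM H ((2 : ℕ) : ZMod p) := (key2 1 (by omega)).1 h3
  have hall : ∀ n : ℕ, 0 < n → n < p → MM H (n : ZMod p) := by
    intro n
    induction n using Nat.strong_induction_on with
    | _ n ih =>
      intro hn hnp
      rcases Nat.even_or_odd' n with ⟨m, rfl | rfl⟩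
      · rw [Nat.cast_mul]; exact MM_mul h2 (ih m (by omega) (by omega) (by omega))
      · rcases Nat.eq_zero_or_pos m with rfl | hm
        · simpa using MM_one H
        · exact (key2 m (by omega)).2 (ih (m + 1) (by omega) (by omega) (by omega))
  rw [eq_top_iff]
  intro x _
  rw [← MM_unit]
  have := hall (x : ZMod p).val (Nat.pos_of_ne_zero (by rw [Ne, ZMod.val_eq_zero]; exact x.ne_zero))
    (ZMod.val_lt _)
  rwa [ZMod.natCast_zmod_val] at this

lemma full_all {p d c b' : ℕ} [Fact p.Prime] (hp11 : 11 ≤ p) (hd : 2 ≤ d) (hb : 0 < b')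
    (hbc : b' < c) (hcop : Nat.Coprime b' c) (hap : d * c < p) :
    ∀ v : ZMod p, v ≠ 0 → EE p (d * c) (d * b') 0 0 0 0 0 v := by
  intro v hv
  have mem_of_top : ∀ a b : ℕ, HH p a b = ⊤ → EE p a b 0 0 0 0 0 v := by
    intro a b h
    have : Units.mk0 v hv ∈ HH p a b := by rw [h]; trivial
    exact this
  rcases Nat.lt_trichotomy (2 * b') c with h | h | h
  · exact mem_of_top _ _ (full_ge3 hp11 hd hb h hcop hap)
  · have hb1 : b' = 1 := by
      rw [← h] at hcop
      exact Nat.Coprime.eq_one_of_dvd hcop (Dvd.intro_left 2 rfl)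
    subst hb1
    subst h
    rw [mul_one, mul_one]
    exact mem_of_top _ _ (full_two hp11 hd hap)
  · have hcop' : Nat.Coprime (c - b') c := by
      obtain ⟨m, hm⟩ : ∃ m, c = b' + m := ⟨c - b', by omega⟩
      have h1 : Nat.Coprime b' m := by
        rw [hm] at hcop; simpa [Nat.coprime_comm] using hcop
      have h2 : c - b' = m := by omega
      rw [h2, hm]
      simpa [Nat.coprime_comm] using h1
    obtain ⟨k, J, x, s, h1, h2, h3, h4, h5, h6⟩ :=
      mem_of_top _ _ (full_ge3 hp11 hd (by omega : 0 < c - b') (by omega) hcop' hap)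
    have h4' : d * c * J = x := by
      simp only [mul_zero, add_zero, zero_add] at h4
      exact_mod_cast h4
    have h5' : d * (c - b') * J = s := by
      simp only [mul_zero, add_zero, zero_add] at h5
      exact_mod_cast h5
    have hsum : d * b' * J + s = x := by
      rw [← h4', ← h5']
      obtain ⟨m, rfl⟩ : ∃ m, c = b' + m := ⟨c - b', by omega⟩
      rw [Nat.add_sub_cancel_left]; ring
    refine ⟨k, J, x, x - s, h1, h2, by omega, h4, ?_, ?_⟩
    · simp only [mul_zero, add_zero, zero_add]
      have : d * b' * J = x - s := by omega
      exact_mod_cast this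
    · rw [Nat.choose_symm (by omega)]; exact h6

lemma start_any {p a b : ℕ} (hp : p.Prime) (hb : 0 < b) (hba : b < a) (hap : a < p) (α β : ℤ) :
    ∃ v : ZMod p, v ≠ 0 ∧ EE p a b 0 α β 0 0 v := by
  have : Fact p.Prime := ⟨hp⟩
  obtain ⟨i, q, hi, hP⟩ := exists_P hp (by omega : 0 < a) hap
  -- a large power
  obtain ⟨M, hM⟩ : ∃ M : ℕ, |α| + 1 + (a : ℤ) * |β| + b * (1 + |α|) < (M : ℤ) :=
    ⟨(|α| + 1 + (a : ℤ) * |β| + b * (1 + |α|)).toNat + 1, by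
      push_cast; have := Int.self_le_toNat (|α| + 1 + (a : ℤ) * |β| + b * (1 + |α|)); omega⟩
  set k := i * M with hk
  have hlarge : (M : ℤ) < (p : ℤ) ^ k := by
    have h1 : M < p ^ M := Nat.lt_pow_self hp.one_lt
    have h2 : p ^ M ≤ p ^ k := Nat.pow_le_pow_right hp.pos (Nat.le_mul_of_pos_left M hi)
    exact_mod_cast lt_of_lt_of_le h1 h2
  have hmod : (a : ℤ) ∣ (p : ℤ) ^ k - 1 := by
    have h1 : (a : ℤ) ∣ (p : ℤ) ^ i - 1 := ⟨q, by
      have : (p : ℤ) ^ i = a * q + 1 := by exact_mod_cast hP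
      rw [this]; ring⟩
    rw [hk, pow_mul]
    exact h1.trans (by simpa using sub_dvd_pow_sub_pow ((p : ℤ) ^ i) 1 M)
  set P : ℤ := (p : ℤ) ^ k with hPdef
  have ha0 : (0 : ℤ) < a := by exact_mod_cast (by omega : 0 < a)
  -- u - 1 = α mod a
  set u1 : ℤ := α % a with hu1
  have hu0 : 0 ≤ u1 := Int.emod_nonneg _ (by omega)
  have hua : u1 < a := Int.emod_lt_of_pos _ ha0
  have hdiv : (a : ℤ) ∣ (u1 + 1) * P - 1 - α := by
    have h1 : (a : ℤ) ∣ (u1 + 1) * (P - 1) := Dvd.dvd.mul_left hmod _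
    have h2 : (a : ℤ) ∣ α - u1 := Int.dvd_self_sub_emod
    have : (u1 + 1) * P - 1 - α = (u1 + 1) * (P - 1) - (α - u1) := by ring
    rw [this]; exact dvd_sub h1 h2
  obtain ⟨j, hj⟩ := hdiv
  have hP0 : 0 < P := pow_pos (by exact_mod_cast hp.pos) _
  have hα1 := le_abs_self α
  have hα2 := neg_abs_le α
  have hβ1 := le_abs_self β
  have hβ2 := neg_abs_le β
  have hα0 := abs_nonneg α
  have hβ0 := abs_nonneg β
  have hbz : (1 : ℤ) ≤ b := by exact_mod_cast hb
  have hbaz : (b : ℤ) + 1 ≤ a := by exact_mod_cast hba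
  have hPu : P ≤ (u1 + 1) * P := by nlinarith
  have haβ : 0 ≤ (a : ℤ) * |β| := by positivity
  have hbα : 0 ≤ (b : ℤ) * (1 + |α|) := by positivity
  have hj0 : 0 ≤ j := by
    have : 0 ≤ (a : ℤ) * j := by rw [← hj]; linarith
    exact nonneg_of_mul_nonneg_right this ha0
  have hBa : (a : ℤ) * (b * j + β) = b * ((u1 + 1) * P) - b * (1 + α) + a * β := by
    linear_combination (-(b : ℤ)) * hj
  have hb1 : (b : ℤ) * (1 + α) ≤ b * (1 + |α|) := by gcongr
  have hb2 : -((b : ℤ) * (1 + |α|)) ≤ b * (1 + α) := by nlinarith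
  have ha1 : (a : ℤ) * β ≤ a * |β| := by gcongr
  have ha2 : -((a : ℤ) * |β|) ≤ a * β := by nlinarith
  have hB0 : 0 ≤ (b : ℤ) * j + β := by
    have : 0 ≤ (a : ℤ) * (b * j + β) := by
      rw [hBa]; nlinarith
    exact nonneg_of_mul_nonneg_right this ha0
  have hBlt : (b : ℤ) * j + β < (u1 + 1) * P := by
    have : (a : ℤ) * (b * j + β) < a * ((u1 + 1) * P) := by
      rw [hBa]; nlinarith
    exact lt_of_mul_lt_mul_left this ha0.le
  set t : ℤ := ((b : ℤ) * j + β) / P with ht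
  set s : ℤ := ((b : ℤ) * j + β) % P with hs
  have ht0 : 0 ≤ t := Int.ediv_nonneg hB0 hP0.le
  have htu : t ≤ u1 := by
    have : t < u1 + 1 := Int.ediv_lt_of_lt_mul hP0 hBlt
    omega
  have hs0 : 0 ≤ s := Int.emod_nonneg _ hP0.ne'
  have hsP : s < P := Int.emod_lt_of_pos _ hP0
  have hdm : P * t + s = b * j + β := Int.mul_ediv_add_emod _ _
  lift j to ℕ using hj0
  clear_value u1 t s
  lift u1 to ℕ using hu0
  lift t to ℕ using ht0
  lift s to ℕ using hs0
  have hPn : P = ((p ^ k : ℕ) : ℤ) := by rw [hPdef]; push_cast; rfl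
  have hsn : s < p ^ k := by rw [hPn] at hsP; exact_mod_cast hsP
  have hpk : 1 ≤ p ^ k := Nat.one_le_pow _ _ hp.pos
  have hstep : EE p a b 0 α β u1 t (((p ^ k - 1).choose s : ℕ) : ZMod p) := by
    refine ⟨k, j, p ^ k - 1, s, Nat.zero_le _, by omega, hsn, ?_, ?_, rfl⟩
    · rw [Nat.cast_sub hpk, ← hPn]
      push_cast
      linear_combination -hj
    · linear_combination -hdm
  have hu1p : u1 < p := by omega
  have htu' : t ≤ u1 := by exact_mod_cast htu
  refine ⟨_, mul_ne_zero (choose_pow_sub_one hp k s hsn) (choose_ne_zero_small hp u1 t hu1p htu'),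
    hstep.comp hp (EE.term u1 t hu1p htu')⟩

lemma zero_case {p a b : ℕ} (hp : p.Prime) (hb : 0 < b) (hba : b < a) (α β : ℤ) (N : ℕ) :
    ∃ n : ℕ, N ≤ n ∧ 0 < n ∧ 0 ≤ (a : ℤ) * n + α ∧ 0 ≤ (b : ℤ) * n + β ∧
      p ∣ Nat.choose ((a : ℤ) * n + α).toNat ((b : ℤ) * n + β).toNat := by
  obtain ⟨M, hM⟩ : ∃ M : ℕ, (a : ℤ) * (N + 1) + a * a + |α| + (a : ℤ) * |β| + b * (a + |α|) < (M : ℤ) :=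
    ⟨((a : ℤ) * (N + 1) + a * a + |α| + (a : ℤ) * |β| + b * (a + |α|)).toNat + 1, by
      push_cast
      have := Int.self_le_toNat ((a : ℤ) * (N + 1) + a * a + |α| + (a : ℤ) * |β| + b * (a + |α|)); omega⟩
  have hlarge : (M : ℤ) < (p : ℤ) ^ M := by
    have h1 : M < p ^ M := Nat.lt_pow_self hp.one_lt
    exact_mod_cast h1
  set P : ℤ := (p : ℤ) ^ M with hPdef
  have ha0 : (0 : ℤ) < a := by exact_mod_cast (by omega : 0 < a)
  have hα1 := le_abs_self α
  have hα2 := neg_abs_le α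
  have hβ1 := le_abs_self β
  have hβ2 := neg_abs_le β
  have hα0 := abs_nonneg α
  have hβ0 := abs_nonneg β
  have hbz : (1 : ℤ) ≤ b := by exact_mod_cast hb
  have hbaz : (b : ℤ) + 1 ≤ a := by exact_mod_cast hba
  have haβ : 0 ≤ (a : ℤ) * |β| := by positivity
  have hbα : 0 ≤ (b : ℤ) * (a + |α|) := by positivity
  have haN : 0 ≤ (a : ℤ) * (N + 1) := by positivity
  have haa : 0 ≤ (a : ℤ) * a := by positivity
  -- A = P + x with 0 ≤ x < a
  set x : ℤ := (α - P) % a with hx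
  set j : ℤ := -((α - P) / a) with hj
  have hx0 : 0 ≤ x := Int.emod_nonneg _ ha0.ne'
  have hxa : x < a := Int.emod_lt_of_pos _ ha0
  have hdm : (a : ℤ) * ((α - P) / a) + x = α - P := Int.mul_ediv_add_emod _ _
  have hA : (a : ℤ) * j + α = P + x := by rw [hj]; linear_combination -hdm
  clear_value x j
  have hjN : (N : ℤ) + 1 ≤ j := by
    have : (a : ℤ) * (N + 1) ≤ a * j := by linarith
    exact le_of_mul_le_mul_left this ha0
  have hBa : (a : ℤ) * (b * j + β) = b * P + b * (x - α) + a * β := by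
    linear_combination (b : ℤ) * hA
  have hb1 : (b : ℤ) * (x - α) ≤ b * (a + |α|) := by
    apply mul_le_mul_of_nonneg_left _ (by omega); linarith
  have hb2 : -((b : ℤ) * (a + |α|)) ≤ b * (x - α) := by
    rw [← mul_neg]
    apply mul_le_mul_of_nonneg_left _ (by omega); linarith
  have ha1 : (a : ℤ) * β ≤ a * |β| := by gcongr
  have ha2 : -((a : ℤ) * |β|) ≤ a * β := by
    rw [← mul_neg]
    apply mul_le_mul_of_nonneg_left _ (by omega); linarith
  have hP0 : 0 < P := by linarith
  have hB1 : (a : ℤ) ≤ b * j + β := by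
    have : (a : ℤ) * a ≤ a * (b * j + β) := by
      rw [hBa]; nlinarith
    exact le_of_mul_le_mul_left this ha0
  have hB2 : (b : ℤ) * j + β < P := by
    have : (a : ℤ) * (b * j + β) < a * P := by
      rw [hBa]; nlinarith
    exact lt_of_mul_lt_mul_left this ha0.le
  lift j to ℕ using (by omega)
  lift x to ℕ using hx0
  refine ⟨j, by omega, by omega, by omega, by omega, ?_⟩
  obtain ⟨s, hs⟩ : ∃ s : ℕ, (b : ℤ) * j + β = s := ⟨((b : ℤ) * j + β).toNat, by omega⟩
  have hPn : P = ((p ^ M : ℕ) : ℤ) := by rw [hPdef]; push_cast; rfl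
  rw [hs] at hB1 hB2 ⊢
  rw [hA, hPn, ← Nat.cast_add, Int.toNat_natCast, Int.toNat_natCast]
  rw [hPn] at hB2 hlarge
  have := lucas_pow hp M x s 1 0 (by
    have : (a : ℤ) < ((p ^ M : ℕ) : ℤ) := by omega
    omega) (by exact_mod_cast hB2)
  rw [Nat.choose_eq_zero_of_lt (show x < s by omega)] at this
  rw [← ZMod.natCast_eq_zero_iff]
  simpa [add_comm] using this

/-- Theorem 4.2(ii): let `a > b` be positive integers, `α, β` integers,
`d = gcd(a,b)`, `c = a/d`, `p` a prime with `p > a + 2b`, and `e = gcd(p-1, a)`.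
Suppose `e ≥ c` and `ν₂(a) > ν₂(p-1)`.  Then for every `r` with `0 ≤ r ≤ p-1` that
is not congruent modulo `p` to any number `(2μ-1)e + p + α - 2 + r'` with integers
`0 ≤ r' ≤ e - c` and `⌈(e+2-p-α)/(2e)⌉ ≤ μ ≤ ⌈(c+1-α)/(2e)⌉`, there are infinitely
many positive integers `n` (with `a*n+α ≥ 0` and `b*n+β ≥ 0`) such that
`C(a*n+α, b*n+β) ≡ r (mod p)`. -/
theorem stmt_14 (a b : ℕ) (hb : 0 < b) (hab : b < a) (α β : ℤ)
    (d c : ℕ) (hd : d = Nat.gcd a b) (hc : c = a / d)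
    (p : ℕ) (hp : p.Prime) (hpab : a + 2 * b < p)
    (e : ℕ) (he : e = Nat.gcd (p - 1) a)
    (hec : c ≤ e) (hval : padicValNat 2 (p - 1) < padicValNat 2 a) :
    ∀ r : ℕ, r ≤ p - 1 →
      (∀ r' μ : ℤ, 0 ≤ r' → r' ≤ (e : ℤ) - (c : ℤ) →
        ⌈((e : ℚ) + 2 - (p : ℚ) - (α : ℚ)) / (2 * (e : ℚ))⌉ ≤ μ →
        μ ≤ ⌈((c : ℚ) + 1 - (α : ℚ)) / (2 * (e : ℚ))⌉ →
        ¬ ((r : ℤ) ≡ (2 * μ - 1) * (e : ℤ) + (p : ℤ) + α - 2 + r' [ZMOD (p : ℤ)])) →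
      ∀ N : ℕ, ∃ n : ℕ, N ≤ n ∧ 0 < n ∧
        0 ≤ (a : ℤ) * n + α ∧ 0 ≤ (b : ℤ) * n + β ∧
        Nat.choose ((a : ℤ) * n + α).toNat ((b : ℤ) * n + β).toNat ≡ r [MOD p] := by
  intro r hr _ N
  have : Fact p.Prime := ⟨hp⟩
  rcases Nat.eq_zero_or_pos r with rfl | hr0
  · obtain ⟨n, h1, h2, h3, h4, h5⟩ := zero_case hp hb hab α β N
    exact ⟨n, h1, h2, h3, h4, (Nat.modEq_zero_iff_dvd).2 h5⟩
  have hp1 := hp.one_lt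
  have hd0 : 0 < d := by rw [hd]; exact Nat.gcd_pos_of_pos_right _ hb
  have hda : d ∣ a := hd ▸ Nat.gcd_dvd_left a b
  have hdb : d ∣ b := hd ▸ Nat.gcd_dvd_right a b
  have hac : a = d * c := by rw [hc, Nat.mul_div_cancel' hda]
  have hbb : b = d * (b / d) := by rw [Nat.mul_div_cancel' hdb]
  have hcop : Nat.Coprime (b / d) c := by
    rw [hc, hd]; exact (Nat.coprime_div_gcd_div_gcd (hd ▸ hd0)).symm
  have hd2 : 2 ≤ d := by
    by_contra hcon
    have hd1 : d = 1 := by omega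
    rw [hd1, one_mul] at hac
    have h1 : e ∣ a := he ▸ Nat.gcd_dvd_right _ _
    have h2 : e ∣ p - 1 := he ▸ Nat.gcd_dvd_left _ _
    have h3 : e ≤ a := Nat.le_of_dvd (by omega) h1
    have h4 : e = a := by omega
    rw [h4] at h2
    have h5 : padicValNat 2 a ≤ padicValNat 2 (p - 1) := by
      have : (2 : ℕ) ^ padicValNat 2 a ∣ p - 1 := pow_padicValNat_dvd.trans h2
      exact (padicValNat_dvd_iff_le (by omega)).1 this
    omega
  have hb2 : 2 ≤ b := hd2.trans (Nat.le_of_dvd hb hdb)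
  have hb'0 : 0 < b / d := Nat.div_pos (Nat.le_of_dvd hb hdb) hd0
  have hb'c : b / d < c := by
    by_contra hcon
    have := Nat.mul_le_mul_left d (not_lt.1 hcon)
    omega
  have hc2 : 2 ≤ c := by omega
  have ha4 : 4 ≤ a := by rw [hac]; exact Nat.mul_le_mul hd2 hc2
  have hp11 : 11 ≤ p := by
    by_contra hcon
    have : p = 9 ∨ p = 10 := by omega
    rcases this with rfl | rfl <;> revert hp <;> norm_num
  have hfull := full_all (p := p) hp11 hd2 hb'0 hb'c hcop (by omega)
  rw [← hac, ← hbb] at hfull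
  obtain ⟨v, hv, hE⟩ := start_any hp hb hab (by omega : a < p) α β
  have hrn : (r : ZMod p) ≠ 0 := natCast_ne hr0 (by omega)
  have hE2 := hE.comp hp (hfull (v⁻¹ * r) (mul_ne_zero (inv_ne_zero hv) hrn))
  rw [← mul_assoc, mul_inv_cancel₀ hv, one_mul] at hE2
  have hloop : EE p a b 1 0 0 0 0 ((a.choose b : ℕ) : ZMod p) :=
    ⟨1, 1, a, b, le_rfl, by rw [pow_one]; omega, by rw [pow_one]; omega, by simp, by simp, rfl⟩
  have hne := choose_ne_zero_small hp a b (by omega) hab.le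
  have hloop2 := hloop.pow hp ((p - 1) * (N + 1))
  rw [pow_mul, ZMod.pow_card_sub_one_eq_one hne, one_pow] at hloop2
  have hE3 := hE2.comp hp hloop2
  rw [mul_one] at hE3
  obtain ⟨k, J, x, s, h1, h2, h3, h4, h5, h6⟩ := hE3
  have hJ : N + 1 ≤ J := by
    have : 1 * (N + 1) ≤ (p - 1) * (N + 1) := Nat.mul_le_mul_right _ (by omega)
    omega
  simp only [mul_zero, zero_add] at h4 h5
  refine ⟨J, by omega, by omega, by omega, by omega, ?_⟩
  rw [h4, h5, Int.toNat_natCast, Int.toNat_natCast]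
  exact (ZMod.natCast_eq_natCast_iff _ _ _).1 (by rw [h6, mul_one])
end

section
/- Let p be an odd prime and let a > b be positive integers with p ∤ a and p ∤ b. Let s be the integer with 1 ≤ s ≤ p−1 and sb ≡ 1 (mod p); write sa = pQ + r with 1 ≤ r ≤ p−1 and sb = pQ′ + 1. Let t be an integer with st ≡ −1 (mod p) and write st = kp − 1. Let n be a positive integer such that pn + t is prime, and such that 0 ≤ rn + ak − Qt < pn + t and 0 ≤ n + bk − Q′t < pn + t. Set K = pn + ns + t + k. Then C(aK, bK) ≡ C(a+Q, b+Q′) · C(rn + ak − Qt, n + bk − Q′t) (mod pn + t). -/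
/-- The key congruence in Case I of the proof of Theorem 2.1: let `p` be an odd
prime, `a > b > 0` with `p ∤ a`, `p ∤ b`; let `1 ≤ s ≤ p-1` with `s*b ≡ 1 (mod p)`,
write `s*a = p*Q + r` with `1 ≤ r ≤ p-1` and `s*b = p*Q' + 1`; let `t` be an integer
with `s*t ≡ -1 (mod p)`, written as `s*t = k*p - 1`.  If `n` is a positive integer
such that `p*n + t` is prime, `0 ≤ r*n + a*k - Q*t < p*n + t` and
`0 ≤ n + b*k - Q'*t < p*n + t`, then, with `K = p*n + n*s + t + k`,
`C(a*K, b*K) ≡ C(a+Q, b+Q') * C(r*n + a*k - Q*t, n + b*k - Q'*t) (mod p*n + t)`. -/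
theorem stmt_15 (p : ℕ) (hp : p.Prime) (hodd : Odd p)
    (a b : ℕ) (hb : 0 < b) (hab : b < a) (hpa : ¬ p ∣ a) (hpb : ¬ p ∣ b)
    (s : ℕ) (hs1 : 1 ≤ s) (hs2 : s ≤ p - 1) (hsb1 : s * b % p = 1)
    (Q r : ℕ) (hr1 : 1 ≤ r) (hr2 : r ≤ p - 1) (hsa : s * a = p * Q + r)
    (Q' : ℕ) (hsb : s * b = p * Q' + 1)
    (t k : ℤ) (hst : (s : ℤ) * t ≡ -1 [ZMOD (p : ℤ)]) (hstk : (s : ℤ) * t = k * p - 1)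
    (n : ℕ) (hn : 0 < n) (hprime : Prime ((p : ℤ) * n + t))
    (h1 : 0 ≤ (r : ℤ) * n + a * k - Q * t) (h1' : (r : ℤ) * n + a * k - Q * t < (p : ℤ) * n + t)
    (h2 : 0 ≤ (n : ℤ) + b * k - Q' * t) (h2' : (n : ℤ) + b * k - Q' * t < (p : ℤ) * n + t)
    (K : ℤ) (hK : K = (p : ℤ) * n + n * s + t + k) :
    (Nat.choose ((a : ℤ) * K).toNat ((b : ℤ) * K).toNat : ℤ) ≡
      (Nat.choose (a + Q) (b + Q') : ℤ) *
        (Nat.choose ((r : ℤ) * n + a * k - Q * t).toNat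
          ((n : ℤ) + b * k - Q' * t).toNat : ℤ) [ZMOD ((p : ℤ) * n + t)] := by
  have hq0 : 0 < (p : ℤ) * n + t := lt_of_le_of_lt h1 h1'
  have hsaZ : (s : ℤ) * a = p * Q + r := by exact_mod_cast hsa
  have hsbZ : (s : ℤ) * b = p * Q' + 1 := by exact_mod_cast hsb
  have ea : (a : ℤ) * K = ((p : ℤ) * n + t) * ((a + Q : ℕ) : ℤ) + ((r : ℤ) * n + a * k - Q * t) := by
    rw [hK]; push_cast; linear_combination (n : ℤ) * hsaZ
  have eb : (b : ℤ) * K = ((p : ℤ) * n + t) * ((b + Q' : ℕ) : ℤ) + ((n : ℤ) + b * k - Q' * t) := by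
    rw [hK]; push_cast; linear_combination (n : ℤ) * hsbZ
  rw [ea, eb]
  generalize (r : ℤ) * n + a * k - Q * t = x at *
  generalize (n : ℤ) + b * k - Q' * t = y at *
  generalize (p : ℤ) * n + t = q at *
  lift x to ℕ using h1
  lift y to ℕ using h2
  lift q to ℕ using hq0.le
  have hx : x < q := by exact_mod_cast h1'
  have hy : y < q := by exact_mod_cast h2'
  have hq : 0 < q := by exact_mod_cast hq0
  have : Fact q.Prime := ⟨Nat.prime_iff_prime_int.mpr hprime⟩
  have e1 : ((q : ℤ) * ((a + Q : ℕ) : ℤ) + (x : ℤ)).toNat = q * (a + Q) + x := by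
    rw [← Nat.cast_mul, ← Nat.cast_add, Int.toNat_natCast]
  have e2 : ((q : ℤ) * ((b + Q' : ℕ) : ℤ) + (y : ℤ)).toNat = q * (b + Q') + y := by
    rw [← Nat.cast_mul, ← Nat.cast_add, Int.toNat_natCast]
  rw [e1, e2, Int.toNat_natCast, Int.toNat_natCast]
  have h := Choose.choose_modEq_choose_mod_mul_choose_div (p := q)
    (n := q * (a + Q) + x) (k := q * (b + Q') + y)
  rw [Nat.mul_add_mod, Nat.mul_add_mod, Nat.mod_eq_of_lt hx, Nat.mod_eq_of_lt hy,
    Nat.mul_add_div hq, Nat.mul_add_div hq, Nat.div_eq_of_lt hx, Nat.div_eq_of_lt hy,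
    Nat.add_zero, Nat.add_zero, mul_comm (Nat.choose x y : ℤ)] at h
  exact h
end
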